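/- Let a ∈ X, let f, g : 𝔹 → ℂ be holomorphic, F(x) = a + f(x)·x and G(x) = a + g(x)·x for x ∈ 𝔹. Assume F is biholomorphic on 𝔹 and G is subordinate to F. Let m, N ∈ ℕ (m, N ≥ 1), let V : 𝔹 → 𝔹 be a Schwarz mapping such that 0 is a zero of order m of V, and let P_s(x) = (1/s!)·DˢG(0)(x,…,x) for s ≥ 1. If r ∈ (0,1) satisfies 4r^m/(1−r^m)² + 4r^N·(N(1−r)+r)/(1−r)² ≤ 1, then for every x with ‖x‖ = r, ‖G(V(x))‖ + Σ_{s≥N} ‖P_s(x)‖ ≤ ‖F(0)‖ + dist(F(0), ∂F(𝔹)), where dist(F(0), ∂F(𝔹)) is the distance from F(0) to the boundary of the image F(𝔹). -/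

import Mathlib

open Metric Set

noncomputable section

/-- A holomorphic map is biholomorphic on an open set `s` if it is holomorphic and injective
on `s` and admits a holomorphic inverse on the image `f '' s`. -/
def IsBiholoOn {E₁ E₂ : Type*} [NormedAddCommGroup E₁] [NormedSpace ℂ E₁]
    [NormedAddCommGroup E₂] [NormedSpace ℂ E₂] (f : E₁ → E₂) (s : Set E₁) : Prop :=
  DifferentiableOn ℂ f s ∧ Set.InjOn f s ∧
    ∃ g : E₂ → E₁, DifferentiableOn ℂ g (f '' s) ∧ ∀ x ∈ s, g (f x) = x

/-- `G` is subordinate to `F` on the unit ball if `G = F ∘ W` for some Schwarz mapping `W`,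
i.e. a holomorphic self-map of the ball fixing the origin. -/
def Subordinate {X : Type*} [NormedAddCommGroup X] [NormedSpace ℂ X]
    (G F : X → X) : Prop :=
  ∃ W : X → X, DifferentiableOn ℂ W (ball (0 : X) 1) ∧
    Set.MapsTo W (ball (0 : X) 1) (ball (0 : X) 1) ∧ W 0 = 0 ∧
    ∀ x ∈ ball (0 : X) 1, G x = F (W x)


namespace DB

open Polynomial in
/-- trace-type coefficient of the symmetric power -/
def symc {R : Type*} [CommRing R] (a b c d : R) (i j k : ℕ) : R :=
  ((C a * X + C b) ^ i * (C c * X + C d) ^ j).coeff k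

open Polynomial in
lemma symc_rec {R : Type*} [CommRing R] (a b c d : R) (i j : ℕ) :
    symc a b c d (i+1) (j+1) (i+1) = a * symc a b c d i (j+1) i + d * symc a b c d (i+1) j (i+1)
      - (a * d - b * c) * symc a b c d i j i := by
  unfold symc
  set P := (C a * X + C b) ^ i * (C c * X + C d) ^ j with hP
  have h1 : (C a * X + C b) ^ (i+1) * (C c * X + C d) ^ (j+1)
      = C (a*c) * (P * X * X) + C (a*d+b*c) * (P * X) + C (b*d) * P := by
    rw [hP]; simp only [map_mul, map_add]; ring
  have h2 : (C a * X + C b) ^ i * (C c * X + C d) ^ (j+1) = C c * (P * X) + C d * P := by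
    rw [hP]; ring
  have h3 : (C a * X + C b) ^ (i+1) * (C c * X + C d) ^ j = C a * (P * X) + C b * P := by
    rw [hP]; ring
  rw [h1, h2, h3]
  simp only [coeff_add, coeff_C_mul, coeff_mul_X]
  ring

lemma symc_zero_right {R : Type*} [CommRing R] (a b c d : R) (i : ℕ) :
    symc a b c d i 0 i = a ^ i := by
  unfold symc
  open Polynomial in
  have : (C a * X + C b).natDegree ≤ 1 := natDegree_linear_le
  have h := Polynomial.coeff_pow_of_natDegree_le this (m := i)
  simpa using h

lemma symc_zero_left {R : Type*} [CommRing R] (a b c d : R) (j : ℕ) :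
    symc a b c d 0 j 0 = d ^ j := by
  unfold symc
  simp [Polynomial.coeff_zero_eq_eval_zero]

/-- trace of the n-th symmetric power -/
def symtr {R : Type*} [CommRing R] (a b c d : R) (n : ℕ) : R :=
  ∑ i ∈ Finset.range (n+1), symc a b c d i (n - i) i

lemma symtr_rec {R : Type*} [CommRing R] (a b c d : R) (n : ℕ) :
    symtr a b c d (n+2) = (a + d) * symtr a b c d (n+1) - (a*d-b*c) * symtr a b c d n := by
  have e2 : symtr a b c d (n+2) = symc a b c d 0 (n+2) 0 + symc a b c d (n+2) 0 (n+2)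
      + ∑ i ∈ Finset.range (n+1), symc a b c d (i+1) (n - i + 1) (i+1) := by
    unfold symtr
    rw [Finset.sum_range_succ, Finset.sum_range_succ']
    simp only [Nat.sub_self, Nat.sub_zero]
    have : ∀ i ∈ Finset.range (n+1), symc a b c d (i+1) (n + 2 - (i+1)) (i+1)
      = symc a b c d (i+1) (n - i + 1) (i+1) := by
      intro i hi
      rw [Finset.mem_range] at hi
      congr 1; omega
    rw [Finset.sum_congr rfl this]; ring
  have e1 : symtr a b c d (n+1) = symc a b c d (n+1) 0 (n+1)
      + ∑ i ∈ Finset.range (n+1), symc a b c d i (n - i + 1) i := by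
    unfold symtr
    rw [Finset.sum_range_succ]
    simp only [Nat.sub_self]
    have : ∀ i ∈ Finset.range (n+1), symc a b c d i (n + 1 - i) i
      = symc a b c d i (n - i + 1) i := by
      intro i hi
      rw [Finset.mem_range] at hi
      congr 1; omega
    rw [Finset.sum_congr rfl this]; ring
  have e1' : symtr a b c d (n+1) = symc a b c d 0 (n+1) 0
      + ∑ i ∈ Finset.range (n+1), symc a b c d (i+1) (n - i) (i+1) := by
    unfold symtr
    rw [Finset.sum_range_succ']
    simp only [Nat.sub_zero]
    have : ∀ i ∈ Finset.range (n+1), symc a b c d (i+1) (n + 1 - (i+1)) (i+1)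
      = symc a b c d (i+1) (n - i) (i+1) := by
      intro i hi
      rw [Finset.mem_range] at hi
      congr 1; omega
    rw [Finset.sum_congr rfl this]; ring
  have e0 : symtr a b c d n = ∑ i ∈ Finset.range (n+1), symc a b c d i (n-i) i := rfl
  have e3 : ∑ i ∈ Finset.range (n+1), symc a b c d (i+1) (n - i + 1) (i+1)
     = a * (∑ i ∈ Finset.range (n+1), symc a b c d i (n - i + 1) i)
      + d * (∑ i ∈ Finset.range (n+1), symc a b c d (i+1) (n - i) (i+1))
      - (a*d-b*c) * ∑ i ∈ Finset.range (n+1), symc a b c d i (n-i) i := by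
    simp only [symc_rec, Finset.sum_sub_distrib, Finset.sum_add_distrib, Finset.mul_sum]
  rw [e2, e3, ← e0, add_mul]
  nth_rewrite 1 [e1]
  rw [e1']
  simp only [symc_zero_right, symc_zero_left]
  ring

lemma symtr_zero {R : Type*} [CommRing R] (a b c d : R) : symtr a b c d 0 = 1 := by
  simp [symtr, symc]

lemma symtr_one {R : Type*} [CommRing R] (a b c d : R) : symtr a b c d 1 = a + d := by
  simp [symtr, Finset.sum_range_succ, symc_zero_right, symc_zero_left, add_comm]

open Polynomial in
lemma symc_hom (a b c d P Q : ℝ) (hQ : Q ≠ 0) (n i : ℕ) (hi : i ≤ n) :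
    (a * P + b * Q) ^ i * (c * P + d * Q) ^ (n - i)
      = ∑ j ∈ Finset.range (n+1), symc a b c d i (n-i) j * P ^ j * Q ^ (n - j) := by
  set p : ℝ[X] := (C a * X + C b) ^ i * (C c * X + C d) ^ (n-i) with hp
  have hdeg : p.natDegree < n + 1 := by
    have h1 : ((C a * X + C b) ^ i).natDegree ≤ i := by
      simpa using natDegree_pow_le_of_le i (natDegree_linear_le (a := a) (b := b))
    have h2 : ((C c * X + C d) ^ (n-i)).natDegree ≤ (n-i) := by
      simpa using natDegree_pow_le_of_le (n-i) (natDegree_linear_le (a := c) (b := d))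
    have := natDegree_mul_le_of_le h1 h2
    rw [← hp] at this; omega
  have h := eval_eq_sum_range' hdeg (P / Q)
  have e : eval (P/Q) p * Q ^ n = (a * P + b * Q) ^ i * (c * P + d * Q) ^ (n - i) := by
    have hn : Q ^ n = Q ^ i * Q ^ (n - i) := by rw [← pow_add]; congr 1; omega
    rw [hp, hn]
    simp only [eval_mul, eval_pow, eval_add, eval_C, eval_X]
    rw [mul_mul_mul_comm, ← mul_pow, ← mul_pow]
    congr 2 <;> field_simp
  rw [← e, h, Finset.sum_mul]
  refine Finset.sum_congr rfl fun j hj => ?_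
  rw [Finset.mem_range] at hj
  have hn : Q ^ n = Q ^ j * Q ^ (n - j) := by rw [← pow_add]; congr 1; omega
  rw [hn]
  have : symc a b c d i (n-i) j = p.coeff j := rfl
  rw [this, div_pow]
  field_simp

open Polynomial in
lemma symc_mul (a b c d a' b' c' d' : ℝ) (hne : c' ≠ 0 ∨ d' ≠ 0) (n i k : ℕ) (hi : i ≤ n) :
    symc (a*a'+b*c') (a*b'+b*d') (c*a'+d*c') (c*b'+d*d') i (n-i) k
      = ∑ j ∈ Finset.range (n+1), symc a b c d i (n-i) j * symc a' b' c' d' j (n-j) k := by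
  have key : (C (a*a'+b*c') * X + C (a*b'+b*d')) ^ i * (C (c*a'+d*c') * X + C (c*b'+d*d')) ^ (n-i)
      = ∑ j ∈ Finset.range (n+1), C (symc a b c d i (n-i) j) *
        ((C a' * X + C b') ^ j * (C c' * X + C d') ^ (n-j)) := by
    apply Polynomial.eq_of_infinite_eval_eq
    have hfin : {x : ℝ | c' * x + d' = 0}.Finite := by
      by_cases hc : c' = 0
      · have hd : d' ≠ 0 := by tauto
        convert Set.finite_empty using 1
        ext x; simp [hc, hd]
      · apply Set.Finite.subset (Set.finite_singleton (-d'/c'))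
        intro x hx
        simp only [Set.mem_ofPred_eq] at hx
        simp only [Set.mem_singleton_iff]
        field_simp; linarith
    refine hfin.infinite_compl.mono ?_
    intro x hx
    have hQ : c' * x + d' ≠ 0 := hx
    simp only [Set.mem_ofPred_eq, eval_mul, eval_pow, eval_add, eval_C, eval_X, eval_finsetSum]
    have := symc_hom a b c d (a'*x+b') (c'*x+d') hQ n i hi
    rw [show (a * a' + b * c') * x + (a * b' + b * d') = a * (a'*x+b') + b * (c'*x+d') by ring,
      show (c * a' + d * c') * x + (c * b' + d * d') = c * (a'*x+b') + d * (c'*x+d') by ring, this]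
    exact Finset.sum_congr rfl fun j hj => by ring
  have := congrArg (fun p => coeff p k) key
  simpa [symc, finsetSum_coeff, coeff_C_mul] using this

lemma coeff_lin_pow {R : Type*} [CommRing R] (u v : R) (n m : ℕ) :
    ((Polynomial.C u * Polynomial.X + Polynomial.C v)^n).coeff m
      = u ^ m * v ^ (n-m) * (n.choose m) := by
  have h : (Polynomial.C u * Polynomial.X + Polynomial.C v)^n
    = ∑ l ∈ Finset.range (n+1), Polynomial.C (u ^ l * v ^ (n-l) * (n.choose l)) * Polynomial.X ^ l := by
    rw [add_pow]
    refine Finset.sum_congr rfl fun l _ => ?_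
    simp only [map_mul, map_pow, map_natCast, mul_pow]; ring
  rw [h]
  simp only [Polynomial.finsetSum_coeff, Polynomial.coeff_C_mul, Polynomial.coeff_X_pow]
  by_cases hm : m ≤ n
  · rw [Finset.sum_eq_single m]
    · simp
    · intro b _ hb; simp [Ne.symm hb]
    · intro h; simp at h; omega
  · rw [Finset.sum_eq_zero]
    · rw [Nat.choose_eq_zero_of_lt (by omega)]; simp
    · intro l hl; rw [Finset.mem_range] at hl
      rw [if_neg (by omega)]; simp

open Polynomial in
lemma symc_symm (a b c d : ℝ) (n i j : ℕ) (hi : i ≤ n) (hj : j ≤ n) :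
    (n.choose i : ℝ) * symc a b c d i (n-i) j = (n.choose j : ℝ) * symc a c b d j (n-j) i := by
  -- work over ℝ[T]
  have hmap : ∀ i, ((C (C a) * X + C (C b) : ℝ[X][X]) ^ i * (C (C c) * X + C (C d)) ^ (n-i)).coeff j
      = C (symc a b c d i (n-i) j) := by
    intro i
    unfold symc
    have : ((C (C a) * X + C (C b) : ℝ[X][X]) ^ i * (C (C c) * X + C (C d)) ^ (n-i))
      = (((C a * X + C b) ^ i * (C c * X + C d) ^ (n-i)).map (C : ℝ →+* ℝ[X])) := by simp
    rw [this, coeff_map]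
  have e1 : ((C (C a * X + C c) * X + C (C b * X + C d) : ℝ[X][X]) ^ n)
      = ∑ i ∈ Finset.range (n+1), C (X ^ i * (n.choose i : ℝ[X])) *
        ((C (C a) * X + C (C b) : ℝ[X][X]) ^ i * (C (C c) * X + C (C d)) ^ (n-i)) := by
    have : (C (C a * X + C c) * X + C (C b * X + C d) : ℝ[X][X])
      = C X * (C (C a) * X + C (C b)) + (C (C c) * X + C (C d)) := by
      simp only [map_add, map_mul]; ring
    rw [this, add_pow]
    refine Finset.sum_congr rfl fun l _ => ?_
    simp only [map_mul, map_pow, map_natCast, mul_pow]; ring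
  have e2 := congrArg (fun p => (coeff p j).coeff i) e1
  simp only [finsetSum_coeff, coeff_C_mul, hmap, coeff_lin_pow] at e2
  have e3 : ∀ l ∈ Finset.range (n+1), (X ^ l * (n.choose l : ℝ[X]) * C (symc a b c d l (n-l) j)).coeff i
      = if i = l then (n.choose l : ℝ) * symc a b c d l (n-l) j else 0 := by
    intro l _
    have : (X ^ l * (n.choose l : ℝ[X]) * C (symc a b c d l (n-l) j))
      = C ((n.choose l : ℝ) * symc a b c d l (n-l) j) * X ^ l := by
      simp only [map_mul, map_natCast]; ring
    rw [this, coeff_C_mul, coeff_X_pow]; simp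
  rw [Finset.sum_congr rfl e3, Finset.sum_ite_eq, if_pos (by simp; omega)] at e2
  rw [← e2]
  have : ((C a * X + C c) ^ j * (C b * X + C d) ^ (n - j) * (n.choose j : ℝ[X]))
    = C (n.choose j : ℝ) * ((C a * X + C c) ^ j * (C b * X + C d) ^ (n - j)) := by
    simp only [map_natCast]; ring
  rw [this, coeff_C_mul]; rfl

open Polynomial in
lemma symc_scale (a b c d q : ℝ) (hq : q ≠ 0) (i j k : ℕ) :
    symc a (b*q) (c/q) d i j k = q ^ i / q ^ k * symc a b c d i j k := by
  unfold symc
  have : (C a * X + C (b*q)) ^ i * (C (c/q) * X + C d) ^ j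
      = C (q ^ i) * ((C a * X + C b) ^ i * (C c * X + C d) ^ j).comp (C q⁻¹ * X) := by
    have h : (C q * C q⁻¹ : ℝ[X]) = 1 := by rw [← C_mul, mul_inv_cancel₀ hq, C_1]
    simp only [mul_comp, pow_comp, add_comp, C_comp, X_comp, C_mul, C_pow, div_eq_mul_inv]
    rw [← mul_assoc, ← mul_pow]
    congr 2
    · linear_combination (-(C a * X)) * h
    · ring
  rw [this, coeff_C_mul, comp_C_mul_X_coeff]
  rw [inv_pow]; ring

/-- the basic polynomial in a commutative ring -/
def E0 {R : Type*} [CommRing R] (u x : R) (n : ℕ) : R :=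
  ∑ j ∈ Finset.range (n+1), ((n+1+j).choose (2*j+1) : R) * u ^ j * x ^ (n-j)

lemma E0_rec {R : Type*} [CommRing R] (u x : R) (n : ℕ) :
    E0 u x (n+2) = (2*x+u) * E0 u x (n+1) - x^2 * E0 u x n := by
  have h0 : x^2 * E0 u x n = ∑ j ∈ Finset.range (n+2), ((n+1+(j+1)).choose (2*(j+1)+1) : R) * u^(j+1) * x^(n+2-(j+1))
      + ((n+1+0).choose (2*0+1) : R) * u^0 * x^(n+2-0) := by
    rw [← Finset.sum_range_succ' (fun j => ((n+1+j).choose (2*j+1) : R) * u^j * x^(n+2-j))]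
    rw [Finset.sum_range_succ, Finset.sum_range_succ]
    rw [Nat.choose_eq_zero_of_lt (show n+1+(n+1) < 2*(n+1)+1 by omega),
      Nat.choose_eq_zero_of_lt (show n+1+(n+1+1) < 2*(n+1+1)+1 by omega)]
    simp only [Nat.cast_zero, zero_mul, add_zero]
    rw [E0, Finset.mul_sum]
    refine Finset.sum_congr rfl fun j hj => ?_
    rw [Finset.mem_range] at hj
    rw [show n+2-j = (n-j)+2 by omega]; ring
  have h1 : x * E0 u x (n+1) = ∑ j ∈ Finset.range (n+2), ((n+2+(j+1)).choose (2*(j+1)+1) : R) * u^(j+1) * x^(n+2-(j+1))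
      + ((n+2+0).choose (2*0+1) : R) * u^0 * x^(n+2-0) := by
    rw [← Finset.sum_range_succ' (fun j => ((n+2+j).choose (2*j+1) : R) * u^j * x^(n+2-j))]
    rw [Finset.sum_range_succ]
    rw [Nat.choose_eq_zero_of_lt (show n+2+(n+2) < 2*(n+2)+1 by omega)]
    simp only [Nat.cast_zero, zero_mul, add_zero]
    rw [E0, Finset.mul_sum]
    refine Finset.sum_congr rfl fun j hj => ?_
    rw [Finset.mem_range] at hj
    rw [show n+2-j = (n+1-j)+1 by omega]; ring
  have h2 : u * E0 u x (n+1) = ∑ j ∈ Finset.range (n+2), ((n+2+j).choose (2*j+1) : R) * u^(j+1) * x^(n+2-(j+1)) := by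
    rw [E0, Finset.mul_sum]
    refine Finset.sum_congr rfl fun j hj => ?_
    rw [Finset.mem_range] at hj
    rw [show n+2-(j+1) = (n+1-j) by omega]; ring
  have h3 : E0 u x (n+2) = ∑ j ∈ Finset.range (n+2), ((n+3+(j+1)).choose (2*(j+1)+1) : R) * u^(j+1) * x^(n+2-(j+1))
      + ((n+3+0).choose (2*0+1) : R) * u^0 * x^(n+2-0) := by
    rw [E0, Finset.sum_range_succ']
  have h4 : (2*x+u) * E0 u x (n+1) - x^2 * E0 u x n = 2 * (x * E0 u x (n+1)) + u * E0 u x (n+1) - x^2 * E0 u x n := by ring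
  rw [h4, h0, h1, h2, h3]
  have hs : ∀ j, ((n+3+(j+1)).choose (2*(j+1)+1) : R) = 2 * ((n+2+(j+1)).choose (2*(j+1)+1) : R) + ((n+2+j).choose (2*j+1) : R) - ((n+1+(j+1)).choose (2*(j+1)+1) : R) := by
    intro j
    have e1 := Nat.choose_succ_succ (n+2+j+1) (2*j+2)
    have e2 := Nat.choose_succ_succ (n+2+j) (2*j+2)
    have e3 := Nat.choose_succ_succ (n+2+j) (2*j+1)
    have k : (n+3+(j+1)).choose (2*(j+1)+1) + (n+1+(j+1)).choose (2*(j+1)+1) = 2 * ((n+2+(j+1)).choose (2*(j+1)+1)) + ((n+2+j).choose (2*j+1)) := by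
      rw [show n+3+(j+1) = (n+2+j+1).succ by omega, show n+2+(j+1) = (n+2+j).succ by omega, show n+1+(j+1) = n+2+j by omega, show 2*(j+1)+1 = (2*j+2).succ by omega]
      simp only [Nat.succ_eq_add_one, show 2*j+1+1 = 2*j+2 by omega] at *
      omega
    have := congrArg (Nat.cast : ℕ → R) k
    push_cast at this
    linear_combination this
  simp only [hs]
  simp only [sub_mul, add_mul, Finset.sum_add_distrib, Finset.sum_sub_distrib]
  have hz : ((n+3+0).choose (2*0+1) : R) = 2 * ((n+2+0).choose (2*0+1) : R) - ((n+1+0).choose (2*0+1) : R) := by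
    simp; ring
  rw [hz]
  simp only [mul_assoc, ← Finset.mul_sum]
  ring

lemma E0_zero {R : Type*} [CommRing R] (u x : R) : E0 u x 0 = 1 := by simp [E0]
lemma E0_one {R : Type*} [CommRing R] (u x : R) : E0 u x 1 = 2 * x + u := by
  simp [E0, Finset.sum_range_succ]

open Polynomial in
/-- the polynomial whose upper coefficients are the weights -/
def EE (n : ℕ) (y : ℝ) : ℝ[X] := E0 (C y * (X - 1)^2) X n

open Polynomial in
lemma EE_eval_symtr (n : ℕ) (c s q : ℝ) (h : c^2+s^2=1) (hq : q ≠ 0) :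
    eval q (EE n (s^2)) = q ^ n * symtr (c*c+s*(s/q)) (c*(-s*q)+s*c) (-s*c+c*(s/q)) (-s*(-s*q)+c*c) n := by
  have e : ∀ n, eval q (EE n (s^2)) = E0 (s^2*(q-1)^2) q n := by
    intro n; simp [EE, E0, eval_finsetSum]
  rw [e]
  induction n using Nat.twoStepInduction with
  | zero => simp [E0_zero, symtr_zero]
  | one =>
    rw [E0_one, symtr_one]; field_simp
    linear_combination (-2 * q) * h
  | more n ih1 ih2 =>
    rw [E0_rec, symtr_rec, ih1, ih2]
    have hd : (c*c+s*(s/q)) * (-s*(-s*q)+c*c) - (c*(-s*q)+s*c) * (-s*c+c*(s/q)) = 1 := by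
      field_simp
      linear_combination q * (c^2+s^2+1) * h
    have ht : q * ((c*c+s*(s/q)) + (-s*(-s*q)+c*c)) = 2 * q + s^2*(q-1)^2 := by
      field_simp
      linear_combination (2 * q) * h
    rw [hd, ← ht]; ring

open Polynomial in
lemma EE_eq (n : ℕ) (c s : ℝ) (h : c^2+s^2=1) :
    EE n (s^2) = ∑ i ∈ Finset.range (n+1), ∑ j ∈ Finset.range (n+1),
      C ((n.choose i : ℝ) / (n.choose j) * (symc c s (-s) c i (n-i) j)^2) * X ^ (n + j - i) := by
  apply Polynomial.eq_of_infinite_eval_eq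
  refine (Set.Ioi_infinite (0:ℝ)).mono ?_
  intro q hq
  have hq0 : q ≠ 0 := ne_of_gt hq
  simp only [Set.mem_ofPred_eq]
  rw [EE_eval_symtr n c s q h hq0]
  simp only [eval_finsetSum, eval_mul, eval_C, eval_pow, eval_X]
  unfold symtr
  rw [Finset.mul_sum]
  refine Finset.sum_congr rfl fun i hi => ?_
  rw [Finset.mem_range] at hi
  have hne : s / q ≠ 0 ∨ c ≠ 0 := by
    by_contra hcon
    push Not at hcon
    have hs : s = 0 := by
      simpa [hq0] using hcon.1
    rw [hs, hcon.2] at h; norm_num at h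
  rw [symc_mul c s (-s) c c (-s*q) (s/q) c hne n i i (by omega), Finset.mul_sum]
  refine Finset.sum_congr rfl fun j hj => ?_
  rw [Finset.mem_range] at hj
  rw [symc_scale c (-s) s c q hq0]
  have hsy := symc_symm c s (-s) c n i j (by omega) (by omega)
  have hc : (n.choose j : ℝ) ≠ 0 := by
    have := Nat.choose_pos (show j ≤ n by omega)
    positivity
  have h2 : symc c (-s) s c j (n-j) i = (n.choose i : ℝ) / (n.choose j) * symc c s (-s) c i (n-i) j := by
    field_simp; linarith
  rw [h2]
  have h3 : q ^ (n+j-i) * q ^ i = q ^ n * q ^ j := by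
    rw [← pow_add, ← pow_add]; congr 1; omega
  have h4 : q ^ (n+j-i) = q ^ n * q ^ j / q ^ i := by field_simp; linarith
  rw [h4]; ring

lemma EE_coeff_nonneg (n : ℕ) (y : ℝ) (hy : 0 ≤ y) (hy1 : y ≤ 1) (k : ℕ) : 0 ≤ (EE n y).coeff k := by
  have e : y = (√y)^2 := (Real.sq_sqrt hy).symm
  have h : (√(1-y))^2 + (√y)^2 = 1 := by
    rw [Real.sq_sqrt hy, Real.sq_sqrt (by linarith)]; ring
  rw [e, EE_eq n _ _ h]
  simp only [Polynomial.finsetSum_coeff, Polynomial.coeff_C_mul, Polynomial.coeff_X_pow]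
  refine Finset.sum_nonneg fun i _ => Finset.sum_nonneg fun j _ => ?_
  apply mul_nonneg
  · positivity
  · split_ifs <;> simp

open Polynomial in
lemma EE_one (n : ℕ) : EE n 1 = ∑ i ∈ Finset.range (n+1), X ^ (2*i) := by
  unfold EE
  induction n using Nat.twoStepInduction with
  | zero => simp [E0_zero]
  | one => simp [E0_one, Finset.sum_range_succ]; ring
  | more n ih1 ih2 =>
    rw [E0_rec, ih1, ih2]
    rw [Finset.sum_range_succ _ (n+2), Finset.sum_range_succ _ (n+1)]
    simp only [map_one]
    ring

lemma EE_one_coeff (n k : ℕ) (hk : k ≤ n) : (EE n 1).coeff (n+k) + (EE n 1).coeff (n+(k+1)) = if k < n then 1 else 1 := by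
  rw [EE_one]
  have : ∀ m, (∑ i ∈ Finset.range (n+1), (Polynomial.X : Polynomial ℝ) ^ (2*i)).coeff m = if m % 2 = 0 ∧ m ≤ 2*n then 1 else 0 := by
    intro m
    simp only [Polynomial.finsetSum_coeff, Polynomial.coeff_X_pow]
    split_ifs with h
    · rw [Finset.sum_eq_single (m/2)]
      · rw [if_pos (by omega)]
      · intro b _ hb; rw [if_neg (by omega)]
      · intro hh; simp at hh; omega
    · refine Finset.sum_eq_zero fun i hi => ?_
      rw [Finset.mem_range] at hi
      rw [if_neg (by omega)]
  rw [this, this]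
  by_cases hp : (n+k) % 2 = 0
  · rw [if_pos (by omega), if_neg (by omega)]; simp
  · rw [if_neg (by omega), if_pos (by omega)]; simp

/-- central binomial type coefficient -/
def ee (j k : ℕ) : ℝ := (-1)^(j+k) * ((2*j).choose (j+k))

lemma ee_rel (j k : ℕ) : (j:ℝ) * (ee j k + ee j (k+1)) = k * ee j k - (k+1) * ee j (k+1) := by
  by_cases h : k ≤ j
  · have := Nat.choose_succ_right_eq (2*j) (j+k)
    have h2 := congrArg (Nat.cast : ℕ → ℝ) this
    rw [show 2*j-(j+k) = j - k by omega] at h2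
    push_cast [h] at h2
    unfold ee
    rw [show j + (k+1) = (j+k)+1 by omega, pow_succ]
    linear_combination ((-1:ℝ)^(j+k)) * (-h2)
  · unfold ee
    rw [Nat.choose_eq_zero_of_lt (by omega), Nat.choose_eq_zero_of_lt (by omega)]
    simp

/-- the weights -/
def lam (n k : ℕ) (y : ℝ) : ℝ := ∑ j ∈ Finset.range (n+1), ((n+1+j).choose (2*j+1) : ℝ) * ee j k * y ^ j

def tau (n k : ℕ) (y : ℝ) : ℝ := ∑ j ∈ Finset.range (n+1), ((n+1+j).choose (2*j+1) : ℝ) * (k / j * ee j k) * y ^ j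

open Polynomial in
lemma lam_eq_coeff (n k : ℕ) (y : ℝ) : lam n k y = (EE n y).coeff (n+k) := by
  unfold lam EE E0
  rw [finsetSum_coeff]
  refine Finset.sum_congr rfl fun j hj => ?_
  rw [Finset.mem_range] at hj
  have : ((n+1+j).choose (2*j+1) : ℝ[X]) * (C y * (X-1)^2)^j * X^(n-j)
    = C ((n+1+j).choose (2*j+1) * y^j : ℝ) * ((C 1 * X + C (-1)) ^ (2*j) * X^(n-j)) := by
    simp only [map_mul, map_natCast, map_pow, mul_pow, ← pow_mul, map_neg, map_one, one_mul]
    ring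
  rw [this, coeff_C_mul, show n + k = (j + k) + (n-j) by omega, coeff_mul_X_pow, coeff_lin_pow]
  unfold ee
  by_cases h : k ≤ j
  · have : (-1:ℝ)^(j+k) = (-1)^(2*j-(j+k)) := by
      rw [show j + k = (2*j-(j+k)) + 2 * k by omega, pow_add, pow_mul]
      rw [show 2*j - (2 * j - (j + k) + 2 * k) = 2*j-(j+k) by omega]; simp
    rw [this]; ring
  · rw [Nat.choose_eq_zero_of_lt (by omega : 2*j < j + k)]; simp

lemma lam_nonneg (n k : ℕ) {y : ℝ} (hy : 0 ≤ y) (hy1 : y ≤ 1) : 0 ≤ lam n k y := by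
  rw [lam_eq_coeff]; exact EE_coeff_nonneg n y hy hy1 _

lemma ee_zero {j k : ℕ} (h : j < k) : ee j k = 0 := by
  unfold ee; rw [Nat.choose_eq_zero_of_lt (by omega)]; simp

lemma lam_zero {n k : ℕ} (h : n < k) (y : ℝ) : lam n k y = 0 := by
  refine Finset.sum_eq_zero fun j hj => ?_
  rw [Finset.mem_range] at hj
  rw [ee_zero (by omega)]; simp

lemma tau_zero {n k : ℕ} (h : n < k) (y : ℝ) : tau n k y = 0 := by
  refine Finset.sum_eq_zero fun j hj => ?_
  rw [Finset.mem_range] at hj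
  rw [ee_zero (by omega)]; simp

lemma tau_sub (n k : ℕ) (hk : 1 ≤ k) (y : ℝ) : tau n k y - tau n (k+1) y = lam n k y + lam n (k+1) y := by
  unfold tau lam
  rw [← Finset.sum_sub_distrib, ← Finset.sum_add_distrib]
  refine Finset.sum_congr rfl fun j _ => ?_
  by_cases hj : j = 0
  · subst hj
    rw [ee_zero (by omega), ee_zero (by omega)]; simp
  · have h := ee_rel j k
    have hj' : (j:ℝ) ≠ 0 := by exact_mod_cast hj
    have : (k:ℝ) / j * ee j k - ((k+1:ℕ):ℝ)/j * ee j (k+1) = ee j k + ee j (k+1) := by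
      push_cast; field_simp; linarith
    linear_combination (((n+1+j).choose (2*j+1) : ℝ) * y^j) * this

lemma tau_one (n k : ℕ) (hk : 1 ≤ k) (hkn : k ≤ n) : tau n k 1 = n + 1 - k := by
  obtain ⟨d, rfl⟩ := Nat.exists_eq_add_of_le hkn
  induction d generalizing k with
  | zero =>
    have := tau_sub (k+0) k hk 1
    rw [lam_eq_coeff, lam_eq_coeff, EE_one_coeff _ _ (by omega), tau_zero (show k + 0 < k + 1 by omega)] at this
    simp at this ⊢; linarith
  | succ d ih =>
    have := tau_sub (k+(d+1)) k hk 1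
    rw [lam_eq_coeff, lam_eq_coeff, EE_one_coeff _ _ (by omega)] at this
    have h2 := ih (k+1) (by omega) (by omega)
    rw [show k+1+d = k+(d+1) by omega] at h2
    rw [h2] at this
    simp at this ⊢; linarith

lemma tau_nonneg (n k : ℕ) (hk : 1 ≤ k) {y : ℝ} (hy : 0 ≤ y) (hy1 : y ≤ 1) : 0 ≤ tau n k y := by
  by_cases hkn : n < k
  · rw [tau_zero hkn]
  obtain ⟨d, rfl⟩ := Nat.exists_eq_add_of_le (not_lt.1 hkn)
  clear hkn
  generalize hn : k + d = n
  induction d generalizing k with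
  | zero =>
    have := tau_sub n k hk y
    rw [tau_zero (show n < k+1 by omega)] at this
    linarith [lam_nonneg n k hy hy1, lam_nonneg n (k+1) hy hy1]
  | succ d ih =>
    have := tau_sub n k hk y
    linarith [lam_nonneg n k hy hy1, lam_nonneg n (k+1) hy hy1, ih (k+1) (by omega) (by omega)]

/-- common bound -/
lemma weight_bound (n : ℕ) : ∃ K : ℝ, 0 ≤ K ∧ (∀ k, k ≤ n → ∀ y, 0 ≤ y → y ≤ 1 → |tau n k y| ≤ K ∧ |lam n k y| ≤ K) ∧
    ∀ k, k ≤ n → ∀ t h : ℝ, 0 ≤ t → 0 ≤ h →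
      |tau n k (Real.exp (-(t+h))) - tau n k (Real.exp (-t)) + h * (k * lam n k (Real.exp (-t)))| ≤ K * h^2 := by
  set A : ℕ → ℕ → ℝ := fun k j => |((n+1+j).choose (2*j+1) : ℝ) * (k / j * ee j k)| with hA
  set B : ℕ → ℕ → ℝ := fun k j => |((n+1+j).choose (2*j+1) : ℝ) * ee j k| with hB
  set K : ℝ := ∑ k ∈ Finset.range (n+1), ∑ j ∈ Finset.range (n+1), (A k j * (1 + (j:ℝ)^2) + B k j) with hK
  have hAn : ∀ k j, 0 ≤ A k j := fun k j => abs_nonneg _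
  have hBn : ∀ k j, 0 ≤ B k j := fun k j => abs_nonneg _
  have hKk : ∀ k ≤ n, ∑ j ∈ Finset.range (n+1), (A k j * (1 + (j:ℝ)^2) + B k j) ≤ K := by
    intro k hk
    apply Finset.single_le_sum (f := fun k => ∑ j ∈ Finset.range (n+1), (A k j * (1 + (j:ℝ)^2) + B k j))
    · intro i _
      refine Finset.sum_nonneg fun j _ => ?_
      have := hAn i j; have := hBn i j; positivity
    · simp; omega
  refine ⟨K, ?_, ?_, ?_⟩
  · refine Finset.sum_nonneg fun i _ => Finset.sum_nonneg fun j _ => ?_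
    have := hAn i j; have := hBn i j; positivity
  · intro k hk y hy hy1
    constructor
    · refine le_trans ?_ (hKk k hk)
      unfold tau
      refine (Finset.abs_sum_le_sum_abs _ _).trans (Finset.sum_le_sum fun j _ => ?_)
      rw [abs_mul, abs_of_nonneg (pow_nonneg hy j)]
      have h1 : y ^ j ≤ 1 := pow_le_one₀ hy hy1
      have := hAn k j; have := hBn k j
      have h2 : A k j * y ^ j ≤ A k j * (1+(j:ℝ)^2) := by
        apply mul_le_mul_of_nonneg_left _ (hAn k j); nlinarith [sq_nonneg (j:ℝ)]
      change A k j * y^j ≤ _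
      linarith
    · refine le_trans ?_ (hKk k hk)
      unfold lam
      refine (Finset.abs_sum_le_sum_abs _ _).trans (Finset.sum_le_sum fun j _ => ?_)
      rw [abs_mul, abs_of_nonneg (pow_nonneg hy j)]
      have h1 : y ^ j ≤ 1 := pow_le_one₀ hy hy1
      have := hAn k j; have := hBn k j
      have h2 : B k j * y ^ j ≤ B k j * 1 := by
        apply mul_le_mul_of_nonneg_left _ (hBn k j); exact h1
      have : 0 ≤ A k j * (1+(j:ℝ)^2) := by positivity
      change B k j * y^j ≤ _
      linarith
  · intro k hk t h ht hh
    have : tau n k (Real.exp (-(t+h))) - tau n k (Real.exp (-t)) + h * (k * lam n k (Real.exp (-t)))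
      = ∑ j ∈ Finset.range (n+1), ((n+1+j).choose (2*j+1) : ℝ) * (k / j * ee j k) * ((Real.exp (-t))^j * (Real.exp (-(j*h)) - 1 + j * h)) := by
      unfold tau lam
      rw [← Finset.sum_sub_distrib, Finset.mul_sum, Finset.mul_sum, ← Finset.sum_add_distrib]
      refine Finset.sum_congr rfl fun j _ => ?_
      have e1 : Real.exp (-(t+h)) ^ j = Real.exp (-t) ^ j * Real.exp (-(j*h)) := by
        rw [← Real.exp_nat_mul, ← Real.exp_nat_mul, ← Real.exp_add]; congr 1; ring
      rw [e1]
      by_cases hj : j = 0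
      · subst hj
        by_cases hk0 : k = 0
        · subst hk0; simp
        · rw [ee_zero (by omega)]; simp
      · have hj' : (j:ℝ) ≠ 0 := by exact_mod_cast hj
        field_simp
    rw [this]
    have h1 : K * h^2 ≥ (∑ j ∈ Finset.range (n+1), (A k j * (1 + (j:ℝ)^2) + B k j)) * h^2 :=
      mul_le_mul_of_nonneg_right (hKk k hk) (sq_nonneg h)
    refine le_trans ?_ h1
    rw [Finset.sum_mul]
    refine (Finset.abs_sum_le_sum_abs _ _).trans (Finset.sum_le_sum fun j _ => ?_)
    rw [abs_mul]
    have hx : 0 ≤ (j:ℝ) * h := by positivity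
    have h2 : |Real.exp (-t) ^ j * (Real.exp (-(j*h)) - 1 + j * h)| ≤ (j*h)^2 := by
      rw [abs_mul]
      have h3 : |Real.exp (-t) ^ j| ≤ 1 := by
        rw [abs_of_nonneg (by positivity)]
        exact pow_le_one₀ (by positivity) (Real.exp_le_one_iff.2 (by linarith))
      have h4 : |Real.exp (-(j*h)) - 1 + j * h| ≤ (j*h)^2 := by
        generalize (j:ℝ) * h = x at hx
        have l1 := Real.add_one_le_exp (-x)
        rw [abs_of_nonneg (by linarith)]
        by_cases hx1 : x ≤ 1
        · have := Real.abs_exp_sub_one_sub_id_le (x := -x) (by rw [abs_neg, abs_of_nonneg hx]; exact hx1)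
          have := (abs_le.1 this).2
          nlinarith
        · have : Real.exp (-x) ≤ 1 := Real.exp_le_one_iff.2 (by linarith)
          nlinarith
      calc _ ≤ 1 * |Real.exp (-(j*h)) - 1 + j * h| := mul_le_mul_of_nonneg_right h3 (abs_nonneg _)
        _ ≤ _ := by linarith
    calc A k j * |Real.exp (-t) ^ j * (Real.exp (-(j*h)) - 1 + j * h)| ≤ A k j * (j*h)^2 :=
          mul_le_mul_of_nonneg_left h2 (hAn k j)
      _ ≤ _ := by
        have := hAn k j; have := hBn k j
        nlinarith [mul_nonneg (hAn k j) (sq_nonneg h), mul_nonneg (hBn k j) (sq_nonneg h)]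

end DB

namespace DB

/-- Taylor coefficient at the origin -/
def cf (k : ℕ) (f : ℂ → ℂ) : ℂ := iteratedDeriv k f 0 / (k.factorial : ℂ)

lemma cf_zero_eq (f : ℂ → ℂ) : cf 0 f = f 0 := by simp [cf]

lemma cf_one_eq (f : ℂ → ℂ) : cf 1 f = deriv f 0 := by simp [cf]

lemma cf_congr {f g : ℂ → ℂ} (h : f =ᶠ[nhds 0] g) (k : ℕ) : cf k f = cf k g := by
  unfold cf; rw [h.iteratedDeriv_eq k]

lemma cf_congr_ball {f g : ℂ → ℂ} {R : ℝ} (hR : 0 < R) (h : ∀ z ∈ ball (0:ℂ) R, f z = g z) (k : ℕ) :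
    cf k f = cf k g :=
  cf_congr (Filter.eventually_of_mem (ball_mem_nhds _ hR) h) k

lemma an_of_ball {f : ℂ → ℂ} {R : ℝ} (hR : 0 < R) (h : DifferentiableOn ℂ f (ball 0 R)) : AnalyticAt ℂ f 0 :=
  h.analyticAt (ball_mem_nhds _ hR)

lemma cf_add {f g : ℂ → ℂ} (hf : AnalyticAt ℂ f 0) (hg : AnalyticAt ℂ g 0) (k : ℕ) :
    cf k (fun z => f z + g z) = cf k f + cf k g := by
  unfold cf
  rw [iteratedDeriv_fun_add hf.contDiffAt hg.contDiffAt, add_div]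

lemma cf_sub {f g : ℂ → ℂ} (hf : AnalyticAt ℂ f 0) (hg : AnalyticAt ℂ g 0) (k : ℕ) :
    cf k (fun z => f z - g z) = cf k f - cf k g := by
  unfold cf
  rw [iteratedDeriv_fun_sub hf.contDiffAt hg.contDiffAt, sub_div]

lemma cf_const_mul (c : ℂ) (f : ℂ → ℂ) (k : ℕ) :
    cf k (fun z => c * f z) = c * cf k f := by
  unfold cf
  rw [iteratedDeriv_const_mul_field, mul_div_assoc]

lemma cf_mul {f g : ℂ → ℂ} (hf : AnalyticAt ℂ f 0) (hg : AnalyticAt ℂ g 0) (k : ℕ) :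
    cf k (fun z => f z * g z) = ∑ i ∈ Finset.range (k+1), cf i f * cf (k-i) g := by
  unfold cf
  rw [iteratedDeriv_fun_mul hf.contDiffAt hg.contDiffAt, Finset.sum_div]
  refine Finset.sum_congr rfl fun i hi => ?_
  rw [Finset.mem_range] at hi
  have h := Nat.choose_mul_factorial_mul_factorial (show i ≤ k by omega)
  have h2 : ((k.choose i : ℕ) : ℂ) * i.factorial * (k-i).factorial = k.factorial := by
    exact_mod_cast h
  have := Nat.factorial_ne_zero i
  have := Nat.factorial_ne_zero (k-i)
  have := Nat.factorial_ne_zero k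
  field_simp
  linear_combination (iteratedDeriv i f 0 * iteratedDeriv (k-i) g 0) * h2

lemma cf_id (k : ℕ) : cf k (fun z => z) = if k = 1 then 1 else 0 := by
  rcases k with _ | k
  · simp [cf]
  · unfold cf
    rw [iteratedDeriv_succ']
    have : deriv (fun z : ℂ => z) = fun _ => 1 := by ext z; simp
    rw [this, iteratedDeriv_const]
    rcases k with _ | k <;> simp

lemma cf_const (c : ℂ) (k : ℕ) : cf k (fun _ => c) = if k = 0 then c else 0 := by
  unfold cf
  rw [iteratedDeriv_const]
  split_ifs with h
  · subst h; simp
  · simp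

lemma cf_succ_id_mul {f : ℂ → ℂ} (hf : AnalyticAt ℂ f 0) (k : ℕ) :
    cf (k+1) (fun z => z * f z) = cf k f := by
  rw [cf_mul (f := fun z => z) analyticAt_id hf, Finset.sum_eq_single 1]
  · rw [cf_id]; simp
  · intro b _ hb
    rw [cf_id]; simp [hb]
  · intro h; simp at h

lemma cf_deriv (f : ℂ → ℂ) (k : ℕ) : cf k (deriv f) = (k+1) * cf (k+1) f := by
  unfold cf
  rw [← iteratedDeriv_succ', Nat.factorial_succ]
  have := Nat.factorial_ne_zero k
  push_cast
  have : ((k:ℂ)+1) ≠ 0 := by exact_mod_cast Nat.succ_ne_zero k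
  field_simp

lemma cf_id_mul_deriv {f : ℂ → ℂ} (hf : AnalyticAt ℂ f 0) (k : ℕ) :
    cf k (fun z => z * deriv f z) = k * cf k f := by
  rcases k with _ | k
  · simp [cf]
  · rw [cf_succ_id_mul hf.deriv, cf_deriv]; push_cast; ring

lemma cf_comp_mul (c : ℂ) (f : ℂ → ℂ) (k : ℕ) :
    cf k (fun z => f (c * z)) = c ^ k * cf k f := by
  have : ∀ (k : ℕ) (f : ℂ → ℂ), iteratedDeriv k (fun z => f (c * z)) 0 = c ^ k * iteratedDeriv k f 0 := by
    intro k
    induction k with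
    | zero => intro f; simp
    | succ k ih =>
      intro f
      rw [iteratedDeriv_succ', iteratedDeriv_succ']
      have : deriv (fun z => f (c * z)) = fun z => c * (deriv f (c * z)) := by
        ext z
        have := deriv_comp_mul_left c f z
        simpa using this
      rw [this, iteratedDeriv_const_mul_field, ih (deriv f)]; ring
  unfold cf
  rw [this, mul_div_assoc]

lemma cf_hasSum {f : ℂ → ℂ} {R : ℝ} (h : DifferentiableOn ℂ f (ball 0 R)) {z : ℂ} (hz : z ∈ ball (0:ℂ) R) :
    HasSum (fun k => cf k f * z ^ k) (f z) := by
  have := Complex.hasSum_taylorSeries_on_ball h hz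
  have e : (fun k => cf k f * z ^ k) = fun n : ℕ => ((n.factorial : ℂ))⁻¹ • (z - 0) ^ n • iteratedDeriv n f 0 := by
    funext k
    simp only [cf, smul_eq_mul, sub_zero]; ring
  rw [e]; exact this

lemma cf_bound {f : ℂ → ℂ} {R M : ℝ} (hR : 0 < R) (h : DiffContOnCl ℂ f (ball 0 R))
    (hM : ∀ z ∈ sphere (0:ℂ) R, ‖f z‖ ≤ M) (k : ℕ) : ‖cf k f‖ ≤ M / R ^ k := by
  have := Complex.norm_iteratedDeriv_le_of_forall_mem_sphere_norm_le k hR h hM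
  unfold cf
  rw [norm_div, Complex.norm_natCast]
  have hk : (0:ℝ) < k.factorial := by exact_mod_cast Nat.factorial_pos k
  rw [div_le_iff₀ hk]
  calc _ ≤ _ := this
    _ = _ := by ring

lemma diffcont {f : ℂ → ℂ} {R r : ℝ} (h : DifferentiableOn ℂ f (ball 0 R)) (hr : r < R) :
    DiffContOnCl ℂ f (ball 0 r) := by
  apply DifferentiableOn.diffContOnCl
  exact h.mono (closure_ball_subset_closedBall.trans (closedBall_subset_ball hr))

/-- Cauchy as circle average -/
lemma cf_circleAverage {f : ℂ → ℂ} {R r : ℝ} (h : DifferentiableOn ℂ f (ball 0 R)) (hr0 : 0 < r) (hr : r < R) (k : ℕ) :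
    Real.circleAverage (fun z => f z * (z⁻¹)^k) 0 r = cf k f := by
  rw [Real.circleAverage_eq_circleIntegral hr0.ne']
  have := (diffcont h hr).circleIntegral_one_div_sub_center_pow_smul hr0 k
  have e : (∮ z in C(0, r), (z - 0)⁻¹ • (f z * (z⁻¹)^k)) = ∮ (z : ℂ) in C(0, r), (1 / (z - 0) ^ (k + 1)) • f z := by
    congr 1; ext z
    simp only [smul_eq_mul, sub_zero, pow_succ, one_div, mul_inv, inv_pow]; ring
  rw [e, this]
  unfold cf
  have hp : (2 * (Real.pi:ℂ) * Complex.I) ≠ 0 := by simp [Real.pi_ne_zero]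
  simp only [smul_eq_mul]
  field_simp

lemma circleAverage_mul_pow {f : ℂ → ℂ} {R r : ℝ} (h : DifferentiableOn ℂ f (ball 0 R)) (hr0 : 0 < r) (hr : r < R) (k : ℕ) :
    Real.circleAverage (fun z => f z * z^(k+1)) 0 r = 0 := by
  have h2 : DifferentiableOn ℂ (fun z => f z * z^(k+1)) (ball 0 R) := by fun_prop
  have := (diffcont h2 hr)
  rw [← abs_of_pos hr0] at this
  rw [this.circleAverage]; simp

/-- Positivity transfer for functions with non-negative real part. -/
lemma trig_pos_r {p : ℂ → ℂ} {T : ℝ} (hp : DifferentiableOn ℂ p (ball 0 1))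
    (hre : ∀ z ∈ ball (0:ℂ) 1, 0 ≤ (p z).re) (h0 : p 0 = T) (n : ℕ) (e0 : ℝ) (w : ℕ → ℂ)
    (hpos : ∀ κ : ℂ, ‖κ‖ = 1 → 0 ≤ e0 + (∑ k ∈ Finset.range n, w k * (2 * κ ^ (k+1))).re)
    {r : ℝ} (hr0 : 0 < r) (hr : r < 1) :
    0 ≤ e0 * T + (∑ k ∈ Finset.range n, w k * (cf (k+1) p * r ^ (k+1))).re := by
  have hsph : ∀ z ∈ sphere (0:ℂ) r, z ∈ ball (0:ℂ) 1 := by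
    intro z hz; simp at hz ⊢; linarith
  have hne : ∀ z ∈ sphere (0:ℂ) r, z ≠ 0 := by
    intro z hz h; simp [h] at hz; linarith
  have hcp : ContinuousOn p (sphere 0 r) := hp.continuousOn.mono hsph
  set G : ℂ → ℂ := fun z => (e0:ℂ) * (p z * (z⁻¹)^0) + ∑ k ∈ Finset.range n,
      (w k * r^(k+1) * (p z * (z⁻¹)^(k+1)) + (starRingEnd ℂ (w k)) * ((r:ℂ)⁻¹)^(k+1) * (p z * z ^(k+1))) with hG
  have hci : ∀ f : ℂ → ℂ, ContinuousOn f (sphere 0 r) → CircleIntegrable f 0 r := fun f hf =>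
    hf.circleIntegrable hr0.le
  have hinv : ContinuousOn (fun z : ℂ => z⁻¹) (sphere 0 r) := continuousOn_inv₀.mono fun z hz => hne z hz
  have c1 : ∀ k, ContinuousOn (fun z => p z * (z⁻¹)^k) (sphere 0 r) := fun k => hcp.mul (hinv.pow k)
  have c2 : ∀ k : ℕ, ContinuousOn (fun z => p z * z^k) (sphere 0 r) := fun k => hcp.mul (by fun_prop)
  have hGc : ContinuousOn G (sphere 0 r) := by
    refine (continuousOn_const.mul (c1 0)).add ?_
    refine continuousOn_finsetSum _ fun k _ => ?_
    exact (continuousOn_const.mul (c1 _)).add (continuousOn_const.mul (c2 _))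
  have hav : Real.circleAverage G 0 r = e0 * T + ∑ k ∈ Finset.range n, w k * (cf (k+1) p * r ^ (k+1)) := by
    rw [hG, Real.circleAverage_fun_add, Real.circleAverage_fun_sum]
    · have hm : ∀ (c : ℂ) (f : ℂ → ℂ), Real.circleAverage (fun z => c * f z) 0 r = c * Real.circleAverage f 0 r := by
        intro c f
        have := Real.circleAverage_fun_smul (a := c) (f := f) (c := 0) (R := r)
        simpa only [smul_eq_mul] using this
      rw [hm, cf_circleAverage hp hr0 hr, cf_zero_eq, h0]
      congr 1
      refine Finset.sum_congr rfl fun k _ => ?_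
      have ca : CircleIntegrable (fun z => w k * r^(k+1) * (p z * (z⁻¹)^(k+1))) 0 r :=
        hci _ (continuousOn_const.mul (c1 _))
      have cb : CircleIntegrable (fun z => (starRingEnd ℂ (w k)) * ((r:ℂ)⁻¹)^(k+1) * (p z * z ^(k+1))) 0 r :=
        hci _ (continuousOn_const.mul (c2 _))
      rw [Real.circleAverage_fun_add ca cb,
        hm, hm, cf_circleAverage hp hr0 hr, circleAverage_mul_pow hp hr0 hr]
      ring
    · intro k _
      exact hci _ ((continuousOn_const.mul (c1 _)).add (continuousOn_const.mul (c2 _)))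
    · exact hci _ (continuousOn_const.mul (c1 0))
    · exact hci _ (continuousOn_finsetSum _ fun k _ => (continuousOn_const.mul (c1 _)).add (continuousOn_const.mul (c2 _)))
  have hre2 : Real.circleAverage (Complex.reCLM ∘ G) 0 r = (Real.circleAverage G 0 r).re :=
    Complex.reCLM.circleAverage_comp_comm (hci _ hGc)
  have hnn : 0 ≤ Real.circleAverage (Complex.reCLM ∘ G) 0 r := by
    apply Real.circleAverage_nonneg_of_nonneg
    intro z hz
    rw [abs_of_pos hr0] at hz
    have hz0 := hne z hz
    have hzn : ‖z‖ = r := by simpa using hz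
    set κ : ℂ := r * z⁻¹ with hκ
    have hκ1 : ‖κ‖ = 1 := by
      rw [hκ, norm_mul, norm_inv, hzn]; simp [abs_of_pos hr0, hr0.ne']
    have hκc : starRingEnd ℂ κ = (r:ℂ)⁻¹ * z := by
      have h1 : κ * starRingEnd ℂ κ = 1 := by
        rw [Complex.mul_conj, Complex.normSq_eq_norm_sq, hκ1]; simp
      have h2 : κ * ((r:ℂ)⁻¹ * z) = 1 := by
        have : (r:ℂ) ≠ 0 := by exact_mod_cast hr0.ne'
        rw [hκ]; field_simp
      have h3 : κ ≠ 0 := by intro h; simp [h] at hκ1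
      exact mul_left_cancel₀ h3 (h1.trans h2.symm)
    have hS : G z = p z * ((e0 + (∑ k ∈ Finset.range n, w k * (2 * κ ^ (k+1))).re : ℝ) : ℂ) := by
      have hsum : (((∑ k ∈ Finset.range n, w k * (2 * κ ^ (k+1))).re : ℝ) : ℂ)
        = ∑ k ∈ Finset.range n, (w k * κ^(k+1) + starRingEnd ℂ (w k) * (starRingEnd ℂ κ)^(k+1)) := by
        rw [Complex.re_sum]; push_cast
        refine Finset.sum_congr rfl fun k _ => ?_
        have := Complex.add_conj (w k * κ^(k+1))
        rw [map_mul, map_pow] at this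
        rw [this, show w k * (2 * κ ^(k+1)) = 2 * (w k * κ^(k+1)) by ring]
        simp
      push_cast
      rw [hsum, hG, hκc, mul_add, Finset.mul_sum]
      simp only [pow_zero, mul_one]
      congr 1
      · ring
      · refine Finset.sum_congr rfl fun k _ => ?_
        rw [hκ, mul_pow, mul_pow]; ring
    simp only [Function.comp, Complex.reCLM_apply, hS, Complex.re_mul_ofReal]
    exact mul_nonneg (hre z (hsph z hz)) (hpos κ hκ1)
  rw [hre2, hav] at hnn
  simpa using hnn

lemma trig_pos {p : ℂ → ℂ} {T : ℝ} (hp : DifferentiableOn ℂ p (ball 0 1))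
    (hre : ∀ z ∈ ball (0:ℂ) 1, 0 ≤ (p z).re) (h0 : p 0 = T) (n : ℕ) (e0 : ℝ) (w : ℕ → ℂ)
    (hpos : ∀ κ : ℂ, ‖κ‖ = 1 → 0 ≤ e0 + (∑ k ∈ Finset.range n, w k * (2 * κ ^ (k+1))).re) :
    0 ≤ e0 * T + (∑ k ∈ Finset.range n, w k * cf (k+1) p).re := by
  have hc : Continuous (fun r : ℝ => e0 * T + (∑ k ∈ Finset.range n, w k * (cf (k+1) p * (r:ℂ) ^ (k+1))).re) := by
    fun_prop
  have ht : Filter.Tendsto (fun r : ℝ => e0 * T + (∑ k ∈ Finset.range n, w k * (cf (k+1) p * (r:ℂ) ^ (k+1))).re)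
      (nhdsWithin 1 (Set.Iio 1)) (nhds (e0 * T + (∑ k ∈ Finset.range n, w k * cf (k+1) p).re)) := by
    have := (hc.tendsto 1).mono_left (nhdsWithin_le_nhds (s := Set.Iio (1:ℝ)))
    simpa using this
  refine ge_of_tendsto ht ?_
  filter_upwards [Ioo_mem_nhdsLT (show (0:ℝ) < 1 by norm_num)] with r hr
  exact trig_pos_r hp hre h0 n e0 w hpos hr.1 hr.2

lemma carath {p : ℂ → ℂ} {T : ℝ} (hp : DifferentiableOn ℂ p (ball 0 1))
    (hre : ∀ z ∈ ball (0:ℂ) 1, 0 ≤ (p z).re) (h0 : p 0 = T) (k : ℕ) : ‖cf (k+1) p‖ ≤ 2 * T := by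
  set a := cf (k+1) p with ha
  have hT : 0 ≤ T := by have := hre 0 (by simp); rw [h0] at this; simpa using this
  by_cases h : a = 0
  · rw [h]; simp; linarith
  have hn : (0:ℝ) < ‖a‖ := norm_pos_iff.2 h
  set u : ℂ := starRingEnd ℂ a / ‖a‖ with hu
  have hun : ‖u‖ = 1 := by rw [hu, norm_div]; simp [hn.ne']
  have := trig_pos hp hre h0 (k+1) 2 (fun j => if j = k then -u else 0) ?_
  · rw [Finset.sum_eq_single k] at this
    · simp only [if_true] at this
      have e : -u * cf (k+1) p = ((-‖a‖ : ℝ) : ℂ) := by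
        rw [← ha, hu]
        have h1 := Complex.mul_conj a
        rw [Complex.normSq_eq_norm_sq] at h1
        have h2 : (‖a‖ : ℂ) ≠ 0 := by exact_mod_cast hn.ne'
        push_cast at h1 ⊢
        field_simp
        linear_combination -h1
      rw [e, Complex.ofReal_re] at this
      linarith
    · intro b _ hb; simp [hb]
    · simp
  · intro κ hκ
    rw [Finset.sum_eq_single k]
    · simp only [if_true]
      have h1 : ‖-u * (2 * κ ^(k+1))‖ = 2 := by simp [hun, hκ]
      have h2 := Complex.abs_re_le_norm (-u * (2 * κ ^(k+1)))
      rw [h1] at h2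
      linarith [(abs_le.1 h2).1]
    · intro b _ hb; simp [hb]
    · simp

end DB

namespace DB

/-- holomorphic on the unit disc with non-negative real part and value `T` at the origin -/
def Herg (q : ℂ → ℂ) (T : ℝ) : Prop :=
  DifferentiableOn ℂ q (ball 0 1) ∧ (∀ z ∈ ball (0:ℂ) 1, 0 ≤ (q z).re) ∧ q 0 = (T:ℂ)

/-- composition in logarithmic coordinates -/
def star (q s : ℂ → ℂ) : ℂ → ℂ := fun z => s z + q (z * Complex.exp (-s z))

def Phi (n : ℕ) (q : ℂ → ℂ) (t : ℝ) : ℝ :=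
  ∑ i ∈ Finset.range n, tau n (i+1) (Real.exp (-t)) * ((i+1) * ‖cf (i+1) q‖^2 - 4 / (i+1))

lemma Herg.nonneg {q : ℂ → ℂ} {T : ℝ} (h : Herg q T) : 0 ≤ T := by
  have := h.2.1 0 (by simp); rw [h.2.2] at this; simpa using this

lemma star_mem {s : ℂ → ℂ} {h : ℝ} (hs : Herg s h) {z : ℂ} (hz : z ∈ ball (0:ℂ) 1) :
    z * Complex.exp (-s z) ∈ ball (0:ℂ) 1 := by
  rw [mem_ball_zero_iff] at hz ⊢
  rw [norm_mul, Complex.norm_exp]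
  have h1 : Real.exp ((-s z).re) ≤ 1 := by
    rw [Real.exp_le_one_iff, Complex.neg_re]
    linarith [hs.2.1 z (mem_ball_zero_iff.2 hz)]
  calc ‖z‖ * Real.exp ((-s z).re) ≤ ‖z‖ * 1 := mul_le_mul_of_nonneg_left h1 (norm_nonneg _)
    _ < 1 := by linarith

lemma Herg.star {q s : ℂ → ℂ} {T h : ℝ} (hq : Herg q T) (hs : Herg s h) : Herg (star q s) (T + h) := by
  refine ⟨?_, ?_, ?_⟩
  · have h1 : DifferentiableOn ℂ (fun z => z * Complex.exp (-s z)) (ball 0 1) :=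
      differentiableOn_id.mul hs.1.neg.cexp
    exact hs.1.add (hq.1.comp h1 fun z hz => star_mem hs hz)
  · intro z hz
    have := hs.2.1 z hz
    have := hq.2.1 _ (star_mem hs hz)
    simp only [DB.star, Complex.add_re]; linarith
  · simp [DB.star, hs.2.2, hq.2.2, add_comm]

lemma alg_identity (n : ℕ) (y : ℝ) (x : ℕ → ℂ) (N : ℕ) :
    ∑ i ∈ Finset.range N, (lam n (i+1) y * (4 - ‖x i‖^2)
      + 2 * tau n (i+1) y * ((starRingEnd ℂ (x i)) * (2 + 2 * (∑ l ∈ Finset.range i, x l) + x i)).re)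
    = ∑ i ∈ Finset.range N, lam n (i+1) y * ‖2 + 2 * (∑ l ∈ Finset.range i, x l) + x i‖^2
      + 2 * (tau n (N+1) y + lam n (N+1) y) * (‖1 + ∑ l ∈ Finset.range N, x l‖^2 - 1) := by
  induction N with
  | zero => simp
  | succ N ih =>
    rw [Finset.sum_range_succ, Finset.sum_range_succ (fun i => lam n (i+1) y * _), ih]
    have ht := tau_sub n (N+1) (by omega) y
    rw [Finset.sum_range_succ x]
    set B := ∑ l ∈ Finset.range N, x l
    set X := x N
    have e1 : tau n (N+1+1) y + lam n (N+1+1) y = tau n (N+1) y - lam n (N+1) y := by linarith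
    rw [e1]
    simp only [← Complex.normSq_eq_norm_sq, Complex.normSq_apply]
    simp only [Complex.mul_re, Complex.conj_re, Complex.conj_im, Complex.add_re, Complex.add_im,
      Complex.mul_im, Complex.one_re, Complex.one_im, Complex.re_ofNat, Complex.im_ofNat]
    ring

lemma alg_pos (n : ℕ) {y : ℝ} (hy : 0 ≤ y) (hy1 : y ≤ 1) (x : ℕ → ℂ) (κ : ℂ) (hκ : ‖κ‖ = 1) :
    0 ≤ ∑ i ∈ Finset.range n, (lam n (i+1) y * (4 - ‖x i‖^2)
      + 2 * tau n (i+1) y * ((starRingEnd ℂ (x i)) * (2 * κ^(i+1)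
        + (∑ l ∈ Finset.range i, x (i-1-l) * (2 * κ^(l+1))) + x i)).re) := by
  have hκ2 : κ * starRingEnd ℂ κ = 1 := by
    rw [Complex.mul_conj, Complex.normSq_eq_norm_sq, hκ]; simp
  set κ' := starRingEnd ℂ κ with hk
  have h := alg_identity n y (fun i => x i * κ'^(i+1)) n
  have hz : tau n (n+1) y + lam n (n+1) y = 0 := by
    rw [tau_zero (by omega), lam_zero (by omega)]; simp
  rw [hz] at h
  have hpos : 0 ≤ ∑ i ∈ Finset.range n, lam n (i+1) y * ‖2 + 2 * (∑ l ∈ Finset.range i, x l * κ'^(l+1)) + x i * κ'^(i+1)‖^2 :=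
    Finset.sum_nonneg fun i _ => mul_nonneg (lam_nonneg n _ hy hy1) (by positivity)
  have hκ'n : ‖κ'‖ = 1 := by rw [hk, RCLike.norm_conj, hκ]
  calc 0 ≤ _ := hpos
    _ = _ := by
      rw [mul_zero, zero_mul, add_zero] at h
      rw [← h]
      refine Finset.sum_congr rfl fun i _ => ?_
      have e1 : ‖x i * κ'^(i+1)‖ = ‖x i‖ := by simp [hκ'n]
      rw [e1]
      congr 3
      have hpow : ∀ m, κ^m * κ'^m = 1 := fun m => by rw [← mul_pow, hκ2, one_pow]
      have e2 : ∑ l ∈ Finset.range i, x (i-1-l) * (2 * κ^(l+1)) = 2 * (κ^(i+1) * ∑ l ∈ Finset.range i, x l * κ'^(l+1)) := by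
        rw [← Finset.sum_range_reflect, Finset.mul_sum, Finset.mul_sum]
        refine Finset.sum_congr rfl fun l hl => ?_
        rw [Finset.mem_range] at hl
        rw [show i - 1 - (i-1-l) = l by omega]
        have : κ^(i+1) = κ^(i-1-l+1) * κ^(l+1) := by rw [← pow_add]; congr 1; omega
        rw [this]
        linear_combination (-(2 * x l * κ^(i-1-l+1))) * hpow (l+1)
      rw [e2, map_mul, map_pow, hk, Complex.conj_conj, ← hk]
      linear_combination (starRingEnd ℂ (x i) * x i) * hpow (i+1)

lemma sum_swap (n : ℕ) (α : ℕ → ℂ) (x P : ℕ → ℂ) :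
    ∑ l ∈ Finset.range n, (α l + ∑ i ∈ Finset.range n, if l < i then α i * x (i-1-l) else 0) * P l
      = ∑ i ∈ Finset.range n, α i * (P i + ∑ l ∈ Finset.range i, x (i-1-l) * P l) := by
  simp only [add_mul, mul_add, Finset.sum_add_distrib, Finset.sum_mul]
  congr 1
  rw [Finset.sum_comm]
  refine Finset.sum_congr rfl fun i hi => ?_
  rw [Finset.mem_range] at hi
  rw [Finset.mul_sum]
  have hsub : Finset.range i ⊆ Finset.range n := by intro a ha; simp at *; omega
  rw [← Finset.sum_subset hsub]
  · refine Finset.sum_congr rfl fun l hl => ?_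
    rw [Finset.mem_range] at hl
    rw [if_pos hl]; ring
  · intro l _ hl
    rw [Finset.mem_range] at hl
    rw [if_neg hl]; simp

lemma E_pos (n : ℕ) {y : ℝ} (hy : 0 ≤ y) (hy1 : y ≤ 1) (x : ℕ → ℂ) {s : ℂ → ℂ} {h : ℝ} (hs : Herg s h) :
    0 ≤ ∑ i ∈ Finset.range n, (h * (lam n (i+1) y * (4 - ‖x i‖^2))
      + 2 * tau n (i+1) y * ((starRingEnd ℂ (x i)) * (cf (i+1) s
        + (∑ l ∈ Finset.range i, x (i-1-l) * cf (l+1) s) + x i * h)).re) := by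
  set α : ℕ → ℂ := fun i => 2 * (tau n (i+1) y : ℝ) * starRingEnd ℂ (x i) with hα
  set e0 : ℝ := ∑ i ∈ Finset.range n, (lam n (i+1) y * (4 - ‖x i‖^2) + 2 * tau n (i+1) y * ‖x i‖^2) with he0
  have hxx : ∀ i, starRingEnd ℂ (x i) * x i = ((‖x i‖^2 : ℝ) : ℂ) := by
    intro i
    rw [mul_comm, Complex.mul_conj, Complex.normSq_eq_norm_sq]
  have hre : ∀ i (P : ℂ), (α i * P).re = 2 * tau n (i+1) y * (starRingEnd ℂ (x i) * P).re := by
    intro i P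
    rw [hα]
    have : (2 * (tau n (i+1) y : ℝ) * starRingEnd ℂ (x i)) * P = ((2 * tau n (i+1) y : ℝ) : ℂ) * (starRingEnd ℂ (x i) * P) := by
      push_cast; ring
    simp only [this, Complex.re_ofReal_mul]
  have key := trig_pos hs.1 hs.2.1 hs.2.2 n e0
    (fun l => α l + ∑ i ∈ Finset.range n, if l < i then α i * x (i-1-l) else 0) ?_
  · rw [sum_swap n α x (fun l => cf (l+1) s), Complex.re_sum, he0, Finset.sum_mul, ← Finset.sum_add_distrib] at key
    refine key.trans_eq (Finset.sum_congr rfl fun i _ => ?_)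
    rw [hre, mul_add (starRingEnd ℂ (x i)) _ (x i * h), Complex.add_re, ← mul_assoc _ (x i), hxx]
    rw [← Complex.ofReal_mul, Complex.ofReal_re]
    ring
  · intro κ hκ
    rw [sum_swap n α x (fun l => 2 * κ^(l+1)), Complex.re_sum, he0, ← Finset.sum_add_distrib]
    refine (alg_pos n hy hy1 x κ hκ).trans_eq (Finset.sum_congr rfl fun i _ => ?_)
    rw [hre, mul_add (starRingEnd ℂ (x i)) _ (x i), Complex.add_re, hxx, Complex.ofReal_re]
    ring

lemma herg_coeff {q : ℂ → ℂ} {T : ℝ} (hq : Herg q T) (k : ℕ) : ‖cf k q‖ ≤ 2 * T := by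
  rcases k with _ | k
  · rw [cf_zero_eq, hq.2.2, Complex.norm_real, Real.norm_of_nonneg hq.nonneg]; linarith [hq.nonneg]
  · exact carath hq.1 hq.2.1 hq.2.2 k

lemma herg_growth {q : ℂ → ℂ} {T : ℝ} (hq : Herg q T) {z : ℂ} (hz : ‖z‖ ≤ 1/2) : ‖q z‖ ≤ 4 * T := by
  have hs := cf_hasSum hq.1 (z := z) (by rw [mem_ball_zero_iff]; linarith)
  have hg : HasSum (fun k : ℕ => 2 * T * (1/2:ℝ)^k) (2 * T * 2) := by
    have := hasSum_geometric_two.mul_left (2*T)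
    simpa using this
  have := hs.norm_le_of_bounded hg ?_
  · linarith
  · intro k
    rw [norm_mul, norm_pow]
    have h1 := herg_coeff hq k
    have h2 : ‖z‖^k ≤ (1/2)^k := pow_le_pow_left₀ (norm_nonneg _) hz k
    have := hq.nonneg
    exact mul_le_mul h1 h2 (by positivity) (by linarith)

lemma herg_remainder {q : ℂ → ℂ} {T : ℝ} (hq : Herg q T) {z ζ : ℂ} (hz : ‖z‖ = 1/4) (hζ : ‖ζ‖ < 1/2) :
    ‖q (z * Complex.exp (-ζ)) - q z + z * deriv q z * ζ‖ ≤ 10 * T * (2 * ‖ζ‖)^2 := by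
  have hT := hq.nonneg
  have hzb : z ∈ ball (0:ℂ) 1 := by rw [mem_ball_zero_iff]; linarith
  have hqz : DifferentiableAt ℂ q z := hq.1.differentiableAt (isOpen_ball.mem_nhds hzb)
  have hexp : ∀ w : ℂ, ‖w‖ < 1/2 → ‖z * Complex.exp (-w)‖ ≤ 1/2 := by
    intro w hw
    rw [norm_mul, Complex.norm_exp, hz]
    have h1 : (-w).re ≤ 1/2 := by
      have := Complex.abs_re_le_norm (-w)
      rw [norm_neg] at this
      linarith [le_abs_self (-w).re]
    have h2 : Real.exp ((-w).re) ≤ Real.exp (1/2) := Real.exp_le_exp.2 h1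
    have h3 : Real.exp (1/2) ≤ 2 := by
      have h4 : Real.exp (1/2) ^ 2 = Real.exp 1 := by rw [← Real.exp_nat_mul]; norm_num
      have := Real.exp_one_lt_d9
      have := Real.exp_pos (1/2)
      nlinarith
    linarith
  have hder : ‖deriv q z‖ ≤ 16 * T := by
    have hd : DiffContOnCl ℂ q (ball z (1/4)) := by
      apply DifferentiableOn.diffContOnCl
      refine hq.1.mono (closure_ball_subset_closedBall.trans ?_)
      intro w hw
      rw [mem_closedBall, dist_eq_norm] at hw
      rw [mem_ball_zero_iff]
      have := norm_le_norm_add_norm_sub' w z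
      linarith
    have := Complex.norm_deriv_le_of_forall_mem_sphere_norm_le (C := 4 * T) (show (0:ℝ) < 1/4 by norm_num) hd ?_
    · calc _ ≤ _ := this
        _ = _ := by ring
    · intro w hw
      apply herg_growth hq
      rw [mem_sphere, dist_eq_norm] at hw
      have := norm_le_norm_add_norm_sub' w z
      linarith
  set f : ℂ → ℂ := fun w => q (z * Complex.exp (-w)) + z * deriv q z * w with hf
  have hmaps : ∀ w ∈ ball (0:ℂ) (1/2), z * Complex.exp (-w) ∈ ball (0:ℂ) 1 := by
    intro w hw
    rw [mem_ball_zero_iff] at hw ⊢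
    linarith [hexp w hw]
  have hin : DifferentiableOn ℂ (fun w : ℂ => z * Complex.exp (-w)) (ball 0 (1/2)) := by fun_prop
  have hfd : DifferentiableOn ℂ f (ball 0 (1/2)) := by
    have := hq.1.comp hin hmaps
    exact this.add (by fun_prop)
  have hf0 : f 0 = q z := by simp [hf]
  have hfder : HasDerivAt f 0 0 := by
    have h1 : HasDerivAt (fun w : ℂ => z * Complex.exp (-w)) (-z) 0 := by
      have := ((hasDerivAt_id (0:ℂ)).fun_neg.cexp).const_mul z
      simpa using this
    have h2 : HasDerivAt q (deriv q z) (z * Complex.exp (-0)) := by simpa using hqz.hasDerivAt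
    have h3 := (h2.comp (0:ℂ) h1).add ((hasDerivAt_id (0:ℂ)).const_mul (z * deriv q z))
    have h4 : HasDerivAt f (deriv q z * -z + z * deriv q z * 1) 0 := h3
    rwa [show deriv q z * -z + z * deriv q z * 1 = 0 by ring] at h4
  have hlo : (fun w => f w - f 0) =o[nhds 0] fun w => ‖w - 0‖ ^ 1 := by
    have := hfder.isLittleO
    simp only [smul_zero, sub_zero] at this
    simpa using this.norm_right
  have hmt : MapsTo f (ball 0 (1/2)) (closedBall (f 0) (10 * T)) := by
    intro w hw
    rw [mem_closedBall, dist_eq_norm, hf0]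
    have hw' : ‖w‖ < 1/2 := by simpa using hw
    have h1 := herg_growth hq (hexp w hw')
    have h2 := herg_growth hq (z := z) (by linarith)
    have h3 : ‖z * deriv q z * w‖ ≤ 2 * T := by
      rw [norm_mul, norm_mul, hz]
      nlinarith [norm_nonneg w, norm_nonneg (deriv q z)]
    calc ‖f w - q z‖ = ‖q (z * Complex.exp (-w)) + z * deriv q z * w - q z‖ := rfl
      _ ≤ ‖q (z * Complex.exp (-w)) + z * deriv q z * w‖ + ‖q z‖ := norm_sub_le _ _
      _ ≤ ‖q (z * Complex.exp (-w))‖ + ‖z * deriv q z * w‖ + ‖q z‖ := by gcongr; exact norm_add_le _ _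
      _ ≤ _ := by linarith
  have := Complex.dist_le_mul_div_pow_of_mapsTo_ball_of_isLittleO hfd hmt hlo (z := ζ) (by simpa using hζ)
  rw [dist_eq_norm, hf0, dist_zero_right] at this
  have e : f ζ - q z = q (z * Complex.exp (-ζ)) - q z + z * deriv q z * ζ := by simp [hf]; ring
  rw [e] at this
  calc _ ≤ _ := this
    _ = _ := by ring

lemma star_cf {q s : ℂ → ℂ} {T h : ℝ} (hq : Herg q T) (hs : Herg s h) (hh : h ≤ 1/16) (i : ℕ) :
    ‖cf (i+1) (DB.star q s) - (cf (i+1) q + (cf (i+1) s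
      + (∑ l ∈ Finset.range i, (-(((i-1-l : ℕ):ℂ)+1) * cf ((i-1-l)+1) q) * cf (l+1) s)
      + (-((i:ℂ)+1) * cf (i+1) q) * h))‖ ≤ 640 * T * 4^(i+1) * h^2 := by
  have hT := hq.nonneg
  have hh0 := hs.nonneg
  have aq : AnalyticAt ℂ q 0 := an_of_ball one_pos hq.1
  have as : AnalyticAt ℂ s 0 := an_of_ball one_pos hs.1
  have ast : AnalyticAt ℂ (DB.star q s) 0 := an_of_ball one_pos (hq.star hs).1
  have adq : AnalyticAt ℂ (fun z => z * deriv q z) 0 := analyticAt_id.mul aq.deriv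
  have aprod : AnalyticAt ℂ (fun z => (z * deriv q z) * s z) 0 := adq.mul as
  set D : ℂ → ℂ := fun z => ((DB.star q s z - s z) - q z) + (z * deriv q z) * s z with hD
  have hcD : cf (i+1) D = cf (i+1) (DB.star q s) - cf (i+1) s - cf (i+1) q
      + ∑ j ∈ Finset.range (i+2), ((j:ℂ) * cf j q) * cf (i+1-j) s := by
    rw [hD, cf_add ((ast.fun_sub as).fun_sub aq) aprod, cf_sub (ast.fun_sub as) aq, cf_sub ast as, cf_mul adq as]
    congr 1
    refine Finset.sum_congr rfl fun j _ => ?_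
    rw [cf_id_mul_deriv aq]
  have hsum : ∑ j ∈ Finset.range (i+2), ((j:ℂ) * cf j q) * cf (i+1-j) s
      = ∑ l ∈ Finset.range i, ((((i-1-l : ℕ):ℂ)+1) * cf ((i-1-l)+1) q) * cf (l+1) s + (((i:ℂ)+1) * cf (i+1) q) * h := by
    rw [Finset.sum_range_succ, Finset.sum_range_succ']
    simp only [Nat.cast_zero, zero_mul, add_zero]
    congr 1
    · rw [← Finset.sum_range_reflect]
      refine Finset.sum_congr rfl fun l hl => ?_
      rw [Finset.mem_range] at hl
      rw [show i + 1 - (i - 1 - l + 1) = l + 1 by omega]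
      push_cast; ring
    · rw [Nat.sub_self, cf_zero_eq, hs.2.2]; push_cast; ring
  have hDd : DifferentiableOn ℂ D (ball 0 1) := by
    have hdq : DifferentiableOn ℂ (deriv q) (ball 0 1) := hq.1.deriv isOpen_ball
    exact (((hq.star hs).1.sub hs.1).sub hq.1).add ((differentiableOn_id.mul hdq).mul hs.1)
  have hb := cf_bound (M := 640 * T * h^2) (show (0:ℝ) < 1/4 by norm_num) (diffcont hDd (by norm_num)) ?_ (i+1)
  · have e : cf (i+1) (DB.star q s) - (cf (i+1) q + (cf (i+1) s
      + (∑ l ∈ Finset.range i, (-(((i-1-l : ℕ):ℂ)+1) * cf ((i-1-l)+1) q) * cf (l+1) s)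
      + (-((i:ℂ)+1) * cf (i+1) q) * h)) = cf (i+1) D := by
      rw [hcD, hsum]
      simp only [neg_mul, Finset.sum_neg_distrib]
      ring
    rw [e]
    calc _ ≤ _ := hb
      _ = _ := by rw [one_div, inv_pow, div_inv_eq_mul]; ring
  · intro z hz
    have hz' : ‖z‖ = 1/4 := by simpa using hz
    have hsz : ‖s z‖ ≤ 4 * h := herg_growth hs (by linarith)
    have := herg_remainder hq hz' (show ‖s z‖ < 1/2 by linarith)
    have e : D z = q (z * Complex.exp (-s z)) - q z + z * deriv q z * s z := by
      simp only [hD, DB.star]; ring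
    rw [e]
    calc _ ≤ _ := this
      _ ≤ 10 * T * (2 * (4 * h))^2 := by gcongr
      _ = _ := by ring

lemma real_left {τ j A B D K1 W h : ℝ} {n : ℝ} (hτ : 0 ≤ τ) (hj : 0 < j) (hjn : j ≤ n) (hτW : τ ≤ W) (hK1 : 0 ≤ K1)
    (hb : B ≤ A + 2 * D + K1 * h^2) :
    τ * (j * B - 4 / j) ≤ τ * (j * A - 4 / j) + 2 * τ * (j * D) + W * (n * K1) * h^2 := by
  have h1 : τ * (j * B) ≤ τ * (j * (A + 2 * D + K1 * h^2)) := by gcongr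
  have h2 : τ * (j * (K1 * h^2)) ≤ W * (n * (K1 * h^2)) := by
    have : 0 ≤ W := hτ.trans hτW
    gcongr
  have e : τ * (j * (A + 2 * D + K1 * h^2)) = τ * (j * A) + 2 * τ * (j * D) + τ * (j * (K1 * h^2)) := by ring
  have e2 : W * (n * K1) * h^2 = W * (n * (K1 * h^2)) := by ring
  rw [e2, mul_sub, mul_sub]
  linarith

lemma real_fin {τ τ' L Q j D W M K h X2 l : ℝ} (hr : -((W * h^2) * M) ≤ (τ' - τ + h * (j * L)) * Q)
    (hlq : j * L * Q = L * (X2 - 4)) (hleft : l ≤ τ * Q + 2 * τ * (j * D) + K * h^2) :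
    l ≤ τ' * Q - (h * (L * (4 - X2)) + 2 * τ * (-j * D)) + (K + W * M) * h^2 := by
  have e : (τ' - τ + h * (j * L)) * Q = τ' * Q - τ * Q + h * (L * (X2 - 4)) := by rw [← hlq]; ring
  have e2 : (K + W * M) * h^2 = K * h^2 + (W * h^2) * M := by ring
  have e3 : h * (L * (4 - X2)) = - (h * (L * (X2 - 4))) := by ring
  have e4 : 2 * τ * (-j * D) = - (2 * τ * (j * D)) := by ring
  rw [e2, e3, e4]
  linarith

set_option maxHeartbeats 1000000 in
lemma Phi_step (n : ℕ) (Tm : ℝ) : ∃ K : ℝ, 0 ≤ K ∧ ∀ (q s : ℂ → ℂ) (T h t : ℝ), Herg q T → Herg s h → T ≤ Tm →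
    h ≤ 1/16 → 0 ≤ t → Phi n (DB.star q s) t ≤ Phi n q (t+h) + K * h^2 := by
  obtain ⟨W, hW0, hW1, hW2⟩ := weight_bound n
  by_cases hTm : 0 ≤ Tm
  swap
  · exact ⟨0, le_refl _, fun q s T h t hq _ hT => absurd (hq.nonneg.trans hT) hTm⟩
  set X0 : ℝ := 2 * n * Tm with hX0
  set D0 : ℝ := 2 + n * X0 * 2 + X0 with hD0
  set C1 : ℝ := 640 * Tm * 4^n with hC1
  set K1 : ℝ := (D0 + C1)^2 + 4 * Tm * C1 with hK1
  set K : ℝ := ∑ i ∈ Finset.range n, (W * ((n:ℝ) * K1) + W * (n * (2 * Tm)^2 + 4)) with hK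
  have hX00 : 0 ≤ X0 := by positivity
  have hD00 : 0 ≤ D0 := by positivity
  have hC10 : 0 ≤ C1 := by positivity
  have hK10 : 0 ≤ K1 := by positivity
  refine ⟨K, by positivity, ?_⟩
  intro q s T h t hq hs hT hh ht
  have hT0 := hq.nonneg
  have hh0 := hs.nonneg
  set y := Real.exp (-t) with hy
  have hy0 : 0 ≤ y := by positivity
  have hy1 : y ≤ 1 := Real.exp_le_one_iff.2 (by linarith)
  set x : ℕ → ℂ := fun i => -((i:ℂ)+1) * cf (i+1) q with hx
  have hE := E_pos n hy0 hy1 x hs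
  have main : ∀ i ∈ Finset.range n, tau n (i+1) y * ((i+1) * ‖cf (i+1) (DB.star q s)‖^2 - 4 / (i+1))
      ≤ tau n (i+1) (Real.exp (-(t+h))) * ((i+1) * ‖cf (i+1) q‖^2 - 4 / (i+1))
        - (h * (lam n (i+1) y * (4 - ‖x i‖^2))
      + 2 * tau n (i+1) y * ((starRingEnd ℂ (x i)) * (cf (i+1) s
        + (∑ l ∈ Finset.range i, x (i-1-l) * cf (l+1) s) + x i * h)).re)
        + (W * ((n:ℝ) * K1) + W * (n * (2 * Tm)^2 + 4)) * h^2 := by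
    intro i hi
    rw [Finset.mem_range] at hi
    have hin : ((i:ℝ)+1) ≤ n := by exact_mod_cast hi
    have hi0 : (0:ℝ) < (i:ℝ)+1 := by positivity
    have htau := hW1 (i+1) (by omega) y hy0 hy1
    have htn := tau_nonneg n (i+1) (by omega) hy0 hy1
    have hw2 := hW2 (i+1) (by omega) t h ht hh0
    set a := cf (i+1) q with ha
    set d := cf (i+1) s + (∑ l ∈ Finset.range i, x (i-1-l) * cf (l+1) s) + x i * h with hd
    set b := cf (i+1) (DB.star q s) with hb
    set δ := b - (a + d) with hδ
    have hδn : ‖δ‖ ≤ C1 * h := by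
      have := star_cf hq hs hh i
      have h1 : ‖δ‖ ≤ 640 * T * 4^(i+1) * h^2 := this
      have h2 : (4:ℝ)^(i+1) ≤ 4^n := pow_le_pow_right₀ (by norm_num) (by omega)
      calc ‖δ‖ ≤ 640 * T * 4^(i+1) * h^2 := h1
        _ ≤ 640 * Tm * 4^n * h^2 := by gcongr
        _ ≤ C1 * h := by rw [hC1]; nlinarith [mul_nonneg hC10 hh0]
    have hδn2 : ‖δ‖ ≤ C1 * h^2 := by
      have := star_cf hq hs hh i
      have h1 : ‖δ‖ ≤ 640 * T * 4^(i+1) * h^2 := this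
      have h2 : (4:ℝ)^(i+1) ≤ 4^n := pow_le_pow_right₀ (by norm_num) (by omega)
      calc ‖δ‖ ≤ 640 * T * 4^(i+1) * h^2 := h1
        _ ≤ 640 * Tm * 4^n * h^2 := by gcongr
    have han : ‖a‖ ≤ 2 * Tm := (herg_coeff hq _).trans (by linarith)
    have hxn : ∀ j < n, ‖x j‖ ≤ X0 := by
      intro j hj
      simp only [hx]
      rw [norm_mul, norm_neg]
      have h1 : ‖(j:ℂ)+1‖ ≤ n := by
        rw [show (j:ℂ)+1 = ((j+1:ℕ):ℂ) by push_cast; ring, Complex.norm_natCast]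
        exact_mod_cast hj
      have h2 := (herg_coeff hq (j+1)).trans (show 2 * T ≤ 2 * Tm by linarith)
      calc _ ≤ (n:ℝ) * (2*Tm) := mul_le_mul h1 h2 (norm_nonneg _) (by positivity)
        _ = _ := by rw [hX0]; ring
    have hdn : ‖d‖ ≤ D0 * h := by
      have h1 : ‖∑ l ∈ Finset.range i, x (i-1-l) * cf (l+1) s‖ ≤ n * X0 * 2 * h := by
        calc _ ≤ ∑ l ∈ Finset.range i, X0 * (2 * h) := by
              refine norm_sum_le_of_le _ fun l hl => ?_
              rw [Finset.mem_range] at hl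
              rw [norm_mul]
              exact mul_le_mul (hxn _ (by omega)) (herg_coeff hs _) (norm_nonneg _) hX00
          _ = i * (X0 * (2 * h)) := by simp
          _ ≤ n * (X0 * (2*h)) := by gcongr
          _ = _ := by ring
      have h2 : ‖x i * h‖ ≤ X0 * h := by
        rw [norm_mul, Complex.norm_real, Real.norm_of_nonneg hh0]
        exact mul_le_mul_of_nonneg_right (hxn i hi) hh0
      calc ‖d‖ ≤ ‖cf (i+1) s‖ + ‖∑ l ∈ Finset.range i, x (i-1-l) * cf (l+1) s‖ + ‖x i * h‖ := norm_add₃_le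
        _ ≤ 2 * h + n * X0 * 2 * h + X0 * h := by
          have := herg_coeff hs (i+1)
          linarith
        _ = _ := by rw [hD0]; ring
    have hbs : ‖b‖^2 ≤ ‖a‖^2 + 2 * (starRingEnd ℂ a * d).re + K1 * h^2 := by
      have e : b = a + (d + δ) := by rw [hδ]; ring
      have e2 : ‖b‖^2 = ‖a‖^2 + 2 * (starRingEnd ℂ a * d).re + 2 * (starRingEnd ℂ a * δ).re + ‖d+δ‖^2 := by
        rw [e]
        simp only [← Complex.normSq_eq_norm_sq, Complex.normSq_apply, Complex.mul_re, Complex.conj_re, Complex.conj_im,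
          Complex.add_re, Complex.add_im]
        ring
      have h1 : ‖d+δ‖ ≤ (D0 + C1) * h := (norm_add_le _ _).trans (by linarith)
      have h2 : ‖d+δ‖^2 ≤ ((D0 + C1) * h)^2 := pow_le_pow_left₀ (norm_nonneg _) h1 2
      have h3 : (starRingEnd ℂ a * δ).re ≤ 2 * Tm * (C1 * h^2) := by
        refine (Complex.re_le_norm _).trans ?_
        rw [norm_mul, RCLike.norm_conj]
        exact mul_le_mul han hδn2 (norm_nonneg _) (by positivity)
      rw [e2, hK1]
      nlinarith
    have hxa : (starRingEnd ℂ (x i) * d).re = -((i:ℝ)+1) * (starRingEnd ℂ a * d).re := by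
      have : starRingEnd ℂ (x i) * d = ((-((i:ℝ)+1) : ℝ) : ℂ) * (starRingEnd ℂ a * d) := by
        simp only [hx, map_mul, map_neg, map_add, map_natCast, map_one]
        push_cast; ring
      rw [this, Complex.re_ofReal_mul]
    have hxa2 : ‖x i‖^2 = ((i:ℝ)+1)^2 * ‖a‖^2 := by
      simp only [hx]
      rw [norm_mul, norm_neg, show (i:ℂ)+1 = ((i+1:ℕ):ℂ) by push_cast; ring, Complex.norm_natCast]
      push_cast; ring
    have hQ : |((i:ℝ)+1) * ‖a‖^2 - 4 / ((i:ℝ)+1)| ≤ n * (2*Tm)^2 + 4 := by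
      have h1 : ((i:ℝ)+1) * ‖a‖^2 ≤ n * (2*Tm)^2 := by gcongr
      have h2 : 4 / ((i:ℝ)+1) ≤ 4 := by
        rw [div_le_iff₀ hi0]; nlinarith [Nat.cast_nonneg (α := ℝ) i]
      have h3 : 0 ≤ 4 / ((i:ℝ)+1) := by positivity
      have h4 : 0 ≤ ((i:ℝ)+1) * ‖a‖^2 := by positivity
      rw [abs_le]; constructor <;> linarith
    -- combine
    set Q := ((i:ℝ)+1) * ‖a‖^2 - 4 / ((i:ℝ)+1) with hQd
    set τ := tau n (i+1) y with hτ
    set τ' := tau n (i+1) (Real.exp (-(t+h))) with hτ'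
    set L := lam n (i+1) y with hL
    have hr : |(τ' - τ + h * (((i:ℝ)+1) * L)) * Q| ≤ (W * h^2) * (n * (2*Tm)^2 + 4) := by
      rw [abs_mul]
      push_cast at hw2
      exact mul_le_mul hw2 hQ (abs_nonneg _) (by positivity)
    have hr1 := (abs_le.1 hr).1
    have hlq : ((i:ℝ)+1) * L * Q = L * (‖x i‖^2 - 4) := by
      rw [hxa2, hQd]; field_simp
    have hleft : τ * (((i:ℝ)+1) * ‖b‖^2 - 4 / ((i:ℝ)+1)) ≤ τ * Q + 2 * τ * (((i:ℝ)+1) * (starRingEnd ℂ a * d).re) + W * (n * K1) * h^2 :=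
      real_left htn hi0 hin ((le_abs_self _).trans htau.1) hK10 hbs
    rw [hxa]
    exact real_fin hr1 hlq hleft
  unfold Phi
  calc _ ≤ _ := Finset.sum_le_sum main
    _ ≤ _ := by
      rw [Finset.sum_add_distrib, Finset.sum_sub_distrib, ← Finset.sum_mul]
      linarith

/-- the good class -/
def Good (n : ℕ) (η : ℝ) (q : ℂ → ℂ) (T : ℝ) : Prop := ∀ t : ℝ, 0 ≤ t → Phi n q t ≤ η * T

lemma good_step (n : ℕ) (Tm : ℝ) {η : ℝ} (hη : 0 < η) : ∃ ε : ℝ, 0 < ε ∧ ∀ (q s : ℂ → ℂ) (T h : ℝ), Herg q T → Herg s h →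
    T ≤ Tm → h ≤ ε → Good n η q T → Good n η (DB.star q s) (T+h) := by
  obtain ⟨K, hK0, hK⟩ := Phi_step n Tm
  refine ⟨min (1/16) (η / (K+1)), by positivity, ?_⟩
  intro q s T h hq hs hT hh hg t ht
  have h1 : h ≤ 1/16 := hh.trans (min_le_left _ _)
  have h2 : h ≤ η / (K+1) := hh.trans (min_le_right _ _)
  have hh0 := hs.nonneg
  rw [le_div_iff₀ (by positivity)] at h2
  have h3 := hK q s T h t hq hs hT h1 ht
  have h4 := hg (t+h) (by linarith)
  nlinarith

lemma good_zero (n : ℕ) (η : ℝ) : Good n η (fun _ => 0) 0 := by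
  intro t ht
  unfold Phi
  rw [mul_zero]
  refine Finset.sum_nonpos fun i _ => ?_
  have h1 := tau_nonneg n (i+1) (by omega) (Real.exp_pos (-t)).le (Real.exp_le_one_iff.2 (by linarith))
  rw [cf_const]
  simp only [Nat.add_eq_zero_iff, one_ne_zero, and_false, if_false, norm_zero]
  have : (0:ℝ) ≤ 4 / ((i:ℝ)+1) := by positivity
  nlinarith

end DB
namespace DB

lemma const_ball {f : ℂ → ℂ} (hf : DifferentiableOn ℂ f (ball 0 1)) (h : ∀ z ∈ ball (0:ℂ) 1, deriv f z = 0)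
    {z : ℂ} (hz : z ∈ ball (0:ℂ) 1) : f z = f 0 :=
  isOpen_ball.is_const_of_deriv_eq_zero (convex_ball _ _).isPreconnected hf h hz (by simp)

lemma log_exists {p : ℂ → ℂ} (hp : DifferentiableOn ℂ p (ball 0 1)) (hne : ∀ z ∈ ball (0:ℂ) 1, p z ≠ 0)
    {c : ℂ} (hc : p 0 = Complex.exp c) :
    ∃ l : ℂ → ℂ, DifferentiableOn ℂ l (ball 0 1) ∧ l 0 = c ∧ ∀ z ∈ ball (0:ℂ) 1, p z = Complex.exp (l z) := by
  have h1 : DifferentiableOn ℂ (fun z => deriv p z / p z) (ball 0 1) := (hp.deriv isOpen_ball).div hp hne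
  obtain ⟨L, hL⟩ := h1.isExactOn_ball
  set l : ℂ → ℂ := fun z => L z - L 0 + c with hl
  have hld : ∀ z ∈ ball (0:ℂ) 1, HasDerivAt l (deriv p z / p z) z := fun z hz => ((hL z hz).sub_const _).add_const _
  have hld' : DifferentiableOn ℂ l (ball 0 1) := fun z hz => (hld z hz).differentiableAt.differentiableWithinAt
  refine ⟨l, hld', by simp [hl], fun z hz => ?_⟩
  have hc2 := const_ball (f := fun z => p z * Complex.exp (-l z)) (hp.mul hld'.neg.cexp) (fun w hw => ?_) hz
  · have : p z * Complex.exp (-l z) = 1 := by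
      rw [show p z * Complex.exp (-l z) = _ from hc2]
      simp only [hl, sub_self, zero_add]
      rw [hc, ← Complex.exp_add]; simp
    calc p z = p z * Complex.exp (-l z) * Complex.exp (l z) := by
          rw [mul_assoc, ← Complex.exp_add]; simp
      _ = _ := by rw [this, one_mul]
  · have hpw : HasDerivAt p (deriv p w) w := (hp.differentiableAt (isOpen_ball.mem_nhds hw)).hasDerivAt
    have := hpw.mul ((hld w hw).neg.cexp)
    have e : deriv (fun z => p z * Complex.exp (-l z)) w
      = deriv p w * Complex.exp (-l w) + p w * (Complex.exp (-l w) * -(deriv p w / p w)) := this.deriv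
    rw [e]
    have := hne w hw
    field_simp; ring

lemma log_unique {l1 l2 : ℂ → ℂ} (h1 : DifferentiableOn ℂ l1 (ball 0 1)) (h2 : DifferentiableOn ℂ l2 (ball 0 1))
    (h0 : l1 0 = l2 0) (h : ∀ z ∈ ball (0:ℂ) 1, Complex.exp (l1 z) = Complex.exp (l2 z)) {z : ℂ} (hz : z ∈ ball (0:ℂ) 1) :
    l1 z = l2 z := by
  have hd : DifferentiableOn ℂ (fun z => l1 z - l2 z) (ball 0 1) := h1.sub h2
  have := const_ball hd (fun w hw => ?_) hz
  · simp only [h0, sub_self] at this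
    exact sub_eq_zero.1 this
  · have e1 : (fun z => Complex.exp (l1 z - l2 z)) =ᶠ[nhds w] fun _ => 1 := by
      filter_upwards [isOpen_ball.mem_nhds hw] with x hx
      rw [Complex.exp_sub, h x hx, div_self (Complex.exp_ne_zero _)]
    have e2 := (hd.differentiableAt (isOpen_ball.mem_nhds hw)).hasDerivAt.cexp
    have e3 := e2.deriv.symm.trans (e1.deriv_eq.trans (deriv_const _ _))
    exact (mul_eq_zero.1 e3).resolve_left (Complex.exp_ne_zero _)

lemma quot_exists {φ : ℂ → ℂ} (hφ : DifferentiableOn ℂ φ (ball 0 1)) (h0 : φ 0 = 0) :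
    ∃ p : ℂ → ℂ, DifferentiableOn ℂ p (ball 0 1) ∧ p 0 = deriv φ 0 ∧ ∀ z, φ z = z * p z := by
  refine ⟨dslope φ 0, ?_, dslope_same _ _, fun z => ?_⟩
  · exact (Complex.differentiableOn_dslope (isOpen_ball.mem_nhds (by simp))).2 hφ
  · have := sub_smul_dslope φ 0 z
    rw [h0] at this
    simpa using this.symm

/-- univalent function with holomorphic inverse on the disc, fixing the origin -/
def BiD (φ : ℂ → ℂ) : Prop := DifferentiableOn ℂ φ (ball 0 1) ∧ φ 0 = 0 ∧
  ∃ v : ℂ → ℂ, DifferentiableOn ℂ v (φ '' ball 0 1) ∧ ∀ z ∈ ball (0:ℂ) 1, v (φ z) = z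

lemma BiD.inj {φ : ℂ → ℂ} (h : BiD φ) {z w : ℂ} (hz : z ∈ ball (0:ℂ) 1) (hw : w ∈ ball (0:ℂ) 1) (e : φ z = φ w) : z = w := by
  obtain ⟨_, _, v, _, hv⟩ := h
  rw [← hv z hz, ← hv w hw, e]

lemma BiD.isOpen {φ : ℂ → ℂ} (h : BiD φ) : IsOpen (φ '' ball 0 1) := by
  rcases (h.1.analyticOnNhd isOpen_ball).is_constant_or_isOpen (convex_ball _ _).isPreconnected with ⟨w, hw⟩ | h'
  · have h1 : (1/2:ℂ) ∈ ball (0:ℂ) 1 := by rw [mem_ball_zero_iff]; norm_num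
    have := h.inj (z := 0) (w := 1/2) (by simp) h1 ((hw 0 (by simp)).trans (hw _ h1).symm)
    norm_num at this
  · exact h' _ subset_rfl isOpen_ball

lemma BiD.deriv_ne {φ : ℂ → ℂ} (h : BiD φ) : ∃ v : ℂ → ℂ, DifferentiableOn ℂ v (φ '' ball 0 1) ∧
    (∀ z ∈ ball (0:ℂ) 1, v (φ z) = z) ∧ deriv v 0 * deriv φ 0 = 1 := by
  have ho := h.isOpen
  obtain ⟨hd, h0, v, hv1, hv⟩ := h
  refine ⟨v, hv1, hv, ?_⟩
  have hb : (0:ℂ) ∈ ball (0:ℂ) 1 := by simp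
  have h1 : HasDerivAt φ (deriv φ 0) 0 := (hd.differentiableAt (isOpen_ball.mem_nhds hb)).hasDerivAt
  have h2 : HasDerivAt v (deriv v 0) (φ 0) := by
    rw [h0]
    exact (hv1.differentiableAt (ho.mem_nhds ⟨0, hb, h0⟩)).hasDerivAt
  have h3 := h2.comp (0:ℂ) h1
  have h4 : (v ∘ φ) =ᶠ[nhds 0] id := by
    filter_upwards [isOpen_ball.mem_nhds hb] with x hx using hv x hx
  exact h3.unique ((hasDerivAt_id _).congr_of_eventuallyEq h4)

lemma BiD.quot {φ : ℂ → ℂ} (h : BiD φ) : ∃ p : ℂ → ℂ, DifferentiableOn ℂ p (ball 0 1) ∧ p 0 = deriv φ 0 ∧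
    (∀ z, φ z = z * p z) ∧ ∀ z ∈ ball (0:ℂ) 1, p z ≠ 0 := by
  obtain ⟨p, hp, hp0, hpz⟩ := quot_exists h.1 h.2.1
  refine ⟨p, hp, hp0, hpz, fun z hz hne => ?_⟩
  obtain ⟨v, _, _, hv⟩ := h.deriv_ne
  by_cases hz0 : z = 0
  · rw [hz0, hp0] at hne
    rw [hne] at hv
    simp at hv
  · apply hz0
    refine h.inj hz (by simp) ?_
    rw [hpz z, hne, mul_zero, h.2.1]

/-- logarithmic representation of a bounded univalent map -/
lemma BiD.rep {w : ℂ → ℂ} (h : BiD w) (hm : MapsTo w (ball 0 1) (ball 0 1)) {T : ℝ}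
    (hT : deriv w 0 = Complex.exp (-T)) : ∃ q, Herg q T ∧ ∀ z ∈ ball (0:ℂ) 1, w z = z * Complex.exp (-q z) := by
  obtain ⟨p, hp, hp0, hpz, hne⟩ := h.quot
  obtain ⟨l, hl, hl0, hlz⟩ := log_exists hp hne (hp0.trans hT)
  have key : ∀ z ∈ ball (0:ℂ) 1, ‖p z‖ ≤ 1 := by
    intro z hz
    by_cases hz0 : z = 0
    · rw [hz0, hp0]
      have := Complex.norm_deriv_le_div_of_mapsTo_ball h.1 (R₂ := 1) ?_ one_pos
      · simpa using this
      · intro x hx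
        rw [h.2.1]; exact ball_subset_closedBall (hm hx)
    · have := Complex.norm_le_norm_of_mapsTo_ball h.1 (fun x hx => ball_subset_closedBall (hm hx)) h.2.1 (z := z) (by simpa using hz)
      rw [hpz, norm_mul] at this
      have hpos : 0 < ‖z‖ := norm_pos_iff.2 hz0
      by_contra hc
      push Not at hc
      nlinarith
  refine ⟨fun z => -l z, ⟨hl.neg, fun z hz => ?_, by simp [hl0]⟩, fun z hz => by rw [neg_neg, ← hlz z hz, hpz]⟩
  have := key z hz
  rw [hlz z hz, Complex.norm_exp, Real.exp_le_one_iff] at this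
  simpa using this

/-- if the derivative is small, some point on the circle of radius `α` is omitted -/
lemma BiD.missed {w : ℂ → ℂ} (h : BiD w) {α : ℝ} (hα : 0 < α) (hd : ‖deriv w 0‖ < α) :
    ∃ a : ℂ, ‖a‖ = α ∧ ∀ z ∈ ball (0:ℂ) 1, w z ≠ a := by
  by_contra hcon
  push Not at hcon
  obtain ⟨v, hv1, hv, hvd⟩ := h.deriv_ne
  have hsub : ball (0:ℂ) α ⊆ w '' ball 0 1 := by
    intro a ha
    by_contra hna
    have hne : ∀ z ∈ ball (0:ℂ) 1, w z - a ≠ 0 := fun z hz e => hna ⟨z, hz, sub_eq_zero.1 e⟩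
    obtain ⟨l, hl, -, hlz⟩ := log_exists (h.1.sub_const a) hne (Complex.exp_log (hne 0 (by simp))).symm
    have hz := circleIntegral.integral_eq_zero_of_hasDerivWithinAt (f := l ∘ v) (f' := fun z => (z - a)⁻¹) (c := 0) hα.le ?_
    · rw [circleIntegral.integral_sub_inv_of_mem_ball ha] at hz
      simp [Real.pi_ne_zero] at hz
    · intro z hz
      refine HasDerivAt.hasDerivWithinAt ?_
      obtain ⟨y, hy, hyz⟩ := hcon z (by simpa using hz)
      have hzU : w '' ball 0 1 ∈ nhds z := h.isOpen.mem_nhds ⟨y, hy, hyz⟩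
      have hmt : MapsTo v (w '' ball 0 1) (ball 0 1) := by
        rintro _ ⟨x, hx, rfl⟩; rw [hv x hx]; exact hx
      have hdif : DifferentiableAt ℂ (l ∘ v) z := (hl.comp hv1 hmt).differentiableAt hzU
      have e1 : (fun x => Complex.exp ((l ∘ v) x)) =ᶠ[nhds z] fun x => x - a := by
        filter_upwards [hzU] with x hx
        obtain ⟨y, hy, rfl⟩ := hx
        simp only [Function.comp]
        rw [hv y hy, ← hlz y hy]
      have e2 := hdif.hasDerivAt.cexp
      have e3 := e2.unique (((hasDerivAt_id z).sub_const a).congr_of_eventuallyEq e1)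
      rw [e1.eq_of_nhds] at e3
      have : deriv (l ∘ v) z = (z - a)⁻¹ := eq_inv_of_mul_eq_one_right e3
      rw [← this]
      exact hdif.hasDerivAt
  have := Complex.norm_deriv_le_div_of_mapsTo_ball (hv1.mono hsub) (R₂ := 1) ?_ hα
  · have h2 : ‖deriv v 0‖ * ‖deriv w 0‖ = 1 := by rw [← norm_mul, hvd, norm_one]
    rw [le_div_iff₀ hα] at this
    nlinarith [norm_nonneg (deriv v 0), norm_nonneg (deriv w 0)]
  · intro x hx
    obtain ⟨y, hy, rfl⟩ := hsub hx
    have : v 0 = 0 := by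
      have := hv 0 (by simp)
      rwa [h.2.1] at this
    rw [this, hv y hy]
    exact ball_subset_closedBall hy

end DB
namespace DB

lemma one_sub_ne {b : ℝ} (hb0 : 0 ≤ b) (hb : b < 1) {h : ℂ} (hh : ‖h‖ ≤ 1) : (1:ℂ) - b * h ≠ 0 := by
  intro e
  have h1 : (1:ℂ) = b * h := sub_eq_zero.1 e
  have h2 : (1:ℝ) = b * ‖h‖ := by
    have := congrArg norm h1
    rwa [norm_one, norm_mul, Complex.norm_real, Real.norm_of_nonneg hb0] at this
  nlinarith [norm_nonneg h]

lemma mob_lt {b : ℝ} (hb0 : 0 ≤ b) (hb : b < 1) {h : ℂ} (hh : ‖h‖ < 1) : ‖((b:ℂ) - h) / (1 - b * h)‖ < 1 := by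
  rw [norm_div, div_lt_one (norm_pos_iff.2 (one_sub_ne hb0 hb hh.le))]
  refine lt_of_pow_lt_pow_left₀ 2 (norm_nonneg _) ?_
  have h2 : ‖h‖^2 < 1 := by nlinarith [norm_nonneg h]
  rw [← Complex.normSq_eq_norm_sq] at h2 ⊢
  rw [← Complex.normSq_eq_norm_sq]
  rw [Complex.normSq_apply] at h2 ⊢
  rw [Complex.normSq_apply]
  simp
  have hb2 : b^2 < 1 := by nlinarith
  nlinarith [mul_pos (sub_pos.2 hb2) (sub_pos.2 h2)]

def sK (ρ : ℝ) (κ z : ℂ) : ℂ := z * ((ρ - κ * z) / (1 - ρ * (κ * z)))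

lemma sK_diff {ρ : ℝ} (h0 : 0 ≤ ρ) (h1 : ρ < 1) {κ : ℂ} (hκ : ‖κ‖ = 1) : DifferentiableOn ℂ (sK ρ κ) (ball 0 1) := by
  unfold sK
  refine differentiableOn_id.mul (DifferentiableOn.div (by fun_prop) (by fun_prop) fun z hz => ?_)
  refine one_sub_ne h0 h1 ?_
  rw [norm_mul, hκ, one_mul]
  exact (mem_ball_zero_iff.1 hz).le

lemma sK_deriv (ρ : ℝ) (κ : ℂ) : HasDerivAt (sK ρ κ) ρ 0 := by
  have h1 : HasDerivAt (fun z : ℂ => (ρ:ℂ) - κ * z) (-(κ * 1)) 0 := ((hasDerivAt_id (0:ℂ)).const_mul κ).const_sub _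
  have h2 : HasDerivAt (fun z : ℂ => (1:ℂ) - ρ * (κ * z)) (-(ρ * (κ * 1))) 0 :=
    (((hasDerivAt_id (0:ℂ)).const_mul κ).const_mul (ρ:ℂ)).const_sub _
  have h3 := (hasDerivAt_id (0:ℂ)).mul (h1.div h2 (by simp))
  have h4 : HasDerivAt (sK ρ κ) _ 0 := h3
  simpa using h4

lemma sK_rep {ρ : ℝ} (h0 : 0 < ρ) (h1 : ρ < 1) {κ : ℂ} (hκ : ‖κ‖ = 1) :
    ∃ s, Herg s (-Real.log ρ) ∧ ∀ z ∈ ball (0:ℂ) 1, sK ρ κ (ρ * z) = ρ * z * Complex.exp (-s z) := by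
  have hn : ∀ z ∈ ball (0:ℂ) 1, ‖κ * (ρ * z)‖ < 1 := by
    intro z hz
    rw [mem_ball_zero_iff] at hz
    rw [norm_mul, hκ, one_mul, norm_mul, Complex.norm_real, Real.norm_of_nonneg h0.le]
    nlinarith [norm_nonneg z]
  have hden : ∀ z ∈ ball (0:ℂ) 1, (1:ℂ) - ρ * (κ * (ρ * z)) ≠ 0 := fun z hz => one_sub_ne h0.le h1 (hn z hz).le
  have hp : DifferentiableOn ℂ (fun z : ℂ => ((ρ:ℂ) - κ * (ρ * z)) / (1 - ρ * (κ * (ρ * z)))) (ball 0 1) :=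
    DifferentiableOn.div (by fun_prop) (by fun_prop) hden
  have hne : ∀ z ∈ ball (0:ℂ) 1, ((ρ:ℂ) - κ * (ρ * z)) / (1 - ρ * (κ * (ρ * z))) ≠ 0 := by
    intro z hz
    refine div_ne_zero (fun e => ?_) (hden z hz)
    have h2 : (ρ:ℂ) * (1 - κ * z) = 0 := by rw [← e]; ring
    rcases mul_eq_zero.1 h2 with h3 | h3
    · exact h0.ne' (by exact_mod_cast h3)
    · have h4 : ‖κ * z‖ = 1 := by rw [← sub_eq_zero.1 h3, norm_one]
      rw [norm_mul, hκ, one_mul] at h4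
      rw [mem_ball_zero_iff] at hz
      linarith
  obtain ⟨l, hl, hl0, hlz⟩ := log_exists hp hne (c := (Real.log ρ : ℂ)) (by
    rw [← Complex.ofReal_exp, Real.exp_log h0]; simp)
  refine ⟨fun z => -l z, ⟨hl.neg, fun z hz => ?_, by simp [hl0]⟩, fun z hz => by rw [neg_neg, ← hlz z hz, sK]⟩
  have := (mob_lt h0.le h1 (hn z hz)).le
  rw [show ((ρ:ℂ) - κ * (ρ * z)) / (1 - ρ * (κ * (ρ * z))) = _ from hlz z hz, Complex.norm_exp, Real.exp_le_one_iff] at this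
  simpa using this

lemma sqrt_step {w : ℂ → ℂ} (h : BiD w) (hm : MapsTo w (ball 0 1) (ball 0 1)) {T b ρ : ℝ}
    (hT : deriv w 0 = Complex.exp (-T)) (hb0 : 0 < b) (hb1 : b < 1) (hρ : ρ = 2 * b / (1 + b^2))
    {a : ℂ} (ha : ‖a‖ = b^2) (hom : ∀ z ∈ ball (0:ℂ) 1, w z ≠ a) :
    ∃ (κ : ℂ) (u : ℂ → ℂ), ‖κ‖ = 1 ∧ BiD u ∧ MapsTo u (ball 0 1) (ball 0 1) ∧
      (∀ z ∈ ball (0:ℂ) 1, w z = sK ρ κ (u z)) ∧ deriv u 0 = Complex.exp (-((T + Real.log ρ : ℝ) : ℂ)) := by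
  have hρ0 : 0 < ρ := by rw [hρ]; positivity
  have hρ1 : ρ < 1 := by rw [hρ, div_lt_one (by positivity)]; nlinarith [sq_pos_of_pos (sub_pos.2 hb1)]
  have hα1 : b^2 < 1 := by nlinarith
  have ha0 : a ≠ 0 := by intro e; rw [e, norm_zero] at ha; nlinarith
  set κ : ℂ := ((b^2 : ℝ) : ℂ) / a with hκd
  have hκ : ‖κ‖ = 1 := by
    rw [hκd, norm_div, ha, Complex.norm_real, Real.norm_of_nonneg (by positivity)]
    exact div_self (by positivity)
  have hκ0 : κ ≠ 0 := by intro e; rw [e, norm_zero] at hκ; norm_num at hκ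
  have hκa : κ * a = ((b^2:ℝ):ℂ) := div_mul_cancel₀ _ ha0
  have hkw : ∀ z ∈ ball (0:ℂ) 1, ‖κ * w z‖ < 1 := by
    intro z hz
    rw [norm_mul, hκ, one_mul]
    exact mem_ball_zero_iff.1 (hm hz)
  have hden : ∀ z ∈ ball (0:ℂ) 1, (1:ℂ) - (b^2:ℝ) * (κ * w z) ≠ 0 :=
    fun z hz => one_sub_ne (by positivity) hα1 (hkw z hz).le
  have hkd : DifferentiableOn ℂ (fun z => κ * w z) (ball 0 1) := h.1.const_mul κ
  have hp : DifferentiableOn ℂ (fun z => (((b^2:ℝ):ℂ) - κ * w z) / (1 - (b^2:ℝ) * (κ * w z))) (ball 0 1) :=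
    (hkd.const_sub _).div ((hkd.const_mul _).const_sub _) hden
  have hne : ∀ z ∈ ball (0:ℂ) 1, (((b^2:ℝ):ℂ) - κ * w z) / (1 - (b^2:ℝ) * (κ * w z)) ≠ 0 := by
    intro z hz
    refine div_ne_zero (fun e => ?_) (hden z hz)
    rw [← hκa, ← mul_sub] at e
    exact hom z hz (sub_eq_zero.1 ((mul_eq_zero.1 e).resolve_left hκ0)).symm
  obtain ⟨l, hl, hl0, hlz⟩ := log_exists hp hne (c := ((2 * Real.log b : ℝ) : ℂ)) (by
    rw [← Complex.ofReal_exp, two_mul, Real.exp_add, Real.exp_log hb0, h.2.1]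
    simp; ring)
  set g : ℂ → ℂ := fun z => Complex.exp (l z / 2) with hg
  have hg2 : ∀ z ∈ ball (0:ℂ) 1, g z ^ 2 = (((b^2:ℝ):ℂ) - κ * w z) / (1 - (b^2:ℝ) * (κ * w z)) := by
    intro z hz
    rw [hlz z hz, hg, ← Complex.exp_nat_mul]
    congr 1; push_cast; ring
  have hg0 : g 0 = b := by
    simp only [hg, hl0]
    rw [show ((2 * Real.log b : ℝ) : ℂ) / 2 = (Real.log b : ℂ) by push_cast; ring, ← Complex.ofReal_exp, Real.exp_log hb0]
  have hgd : DifferentiableOn ℂ g (ball 0 1) := (hl.div_const 2).cexp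
  have hgn : ∀ z ∈ ball (0:ℂ) 1, ‖g z‖ < 1 := by
    intro z hz
    have := mob_lt (by positivity) hα1 (hkw z hz)
    rw [← hg2 z hz, norm_pow] at this
    nlinarith [norm_nonneg (g z)]
  set u : ℂ → ℂ := fun z => κ⁻¹ * (((b:ℂ) - g z) / (1 - b * g z)) with hu
  have hden2 : ∀ z ∈ ball (0:ℂ) 1, (1:ℂ) - b * g z ≠ 0 := fun z hz => one_sub_ne hb0.le hb1 (hgn z hz).le
  have hud : DifferentiableOn ℂ u (ball 0 1) :=
    ((hgd.const_sub _).div ((hgd.const_mul _).const_sub _) hden2).const_mul _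
  have hum : MapsTo u (ball 0 1) (ball 0 1) := by
    intro z hz
    rw [mem_ball_zero_iff, hu, norm_mul, norm_inv, hκ, inv_one, one_mul]
    exact mob_lt hb0.le hb1 (hgn z hz)
  have hu0 : u 0 = 0 := by simp [hu, hg0]
  have hws : ∀ z ∈ ball (0:ℂ) 1, w z = sK ρ κ (u z) := by
    intro z hz
    have h1 := hg2 z hz
    have hd1 := hden z hz
    have hd2 := hden2 z hz
    have hd3 : (1:ℂ) + b * g z ≠ 0 := by
      have := one_sub_ne hb0.le hb1 (h := -g z) (by rw [norm_neg]; exact (hgn z hz).le)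
      rwa [mul_neg, sub_neg_eq_add] at this
    have hb2 : (1:ℂ) - b^2 ≠ 0 := by
      have : ((1 - b^2 : ℝ) : ℂ) ≠ 0 := by exact_mod_cast (by linarith : (1 - b^2 : ℝ) ≠ 0)
      simpa using this
    have hb3 : (1:ℂ) + b^2 ≠ 0 := by
      have : ((1 + b^2 : ℝ) : ℂ) ≠ 0 := by exact_mod_cast (by positivity : (1 + b^2 : ℝ) ≠ 0)
      simpa using this
    have hku : κ * u z = ((b:ℂ) - g z) / (1 - b * g z) := by
      simp only [hu]; rw [mul_inv_cancel_left₀ hκ0]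
    have hρc : (ρ:ℂ) = 2 * b / (1 + b^2) := by rw [hρ]; push_cast; ring
    have e1 : (ρ:ℂ) - κ * u z = (1 - b^2) * (b + g z) / ((1 + b^2) * (1 - b * g z)) := by
      rw [hku, hρc]; field_simp; ring
    have e2 : (1:ℂ) - ρ * (κ * u z) = (1 - b^2) * (1 + b * g z) / ((1 + b^2) * (1 - b * g z)) := by
      rw [hku, hρc]; field_simp; ring
    have e3 : ((ρ:ℂ) - κ * u z) / (1 - ρ * (κ * u z)) = (b + g z) / (1 + b * g z) := by
      rw [e1, e2]; field_simp
    have e4 : κ * sK ρ κ (u z) = (b^2 - g z ^2) / (1 - b^2 * g z^2) := by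
      rw [sK, e3, ← mul_assoc, hku]
      have : (1:ℂ) - b^2 * g z^2 = (1 - b * g z) * (1 + b * g z) := by ring
      rw [this]; field_simp; ring
    have hd5 : (1:ℂ) - b^2 * g z^2 ≠ 0 := by
      rw [show (1:ℂ) - b^2 * g z^2 = (1 - b * g z) * (1 + b * g z) by ring]
      exact mul_ne_zero hd2 hd3
    have e5 : κ * w z = (b^2 - g z ^2) / (1 - b^2 * g z^2) := by
      rw [eq_div_iff hd5]
      rw [eq_div_iff hd1] at h1
      push_cast at h1
      linear_combination h1
    exact mul_left_cancel₀ hκ0 (e5.trans e4.symm)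
  refine ⟨κ, u, hκ, ⟨hud, hu0, ?_⟩, hum, hws, ?_⟩
  · obtain ⟨_, _, v, hv1, hv⟩ := h
    refine ⟨v ∘ sK ρ κ, ?_, ?_⟩
    · refine hv1.comp ((sK_diff hρ0.le hρ1 hκ).mono ?_) ?_
      · rintro _ ⟨z, hz, rfl⟩; exact hum hz
      · rintro _ ⟨z, hz, rfl⟩; exact ⟨z, hz, hws z hz⟩
    · intro z hz
      simp only [Function.comp]
      rw [← hws z hz, hv z hz]
  · have hb : ball (0:ℂ) 1 ∈ nhds 0 := isOpen_ball.mem_nhds (by simp)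
    have d1 := (hud.differentiableAt hb).hasDerivAt
    have d2 : HasDerivAt (sK ρ κ) ρ (u 0) := by rw [hu0]; exact sK_deriv ρ κ
    have d3 := d2.comp (0:ℂ) d1
    have d4 : w =ᶠ[nhds 0] (sK ρ κ ∘ u) := by filter_upwards [hb] with z hz using hws z hz
    have d5 := (d3.congr_of_eventuallyEq d4).deriv
    rw [hT] at d5
    have hρc : (ρ:ℂ) ≠ 0 := by exact_mod_cast hρ0.ne'
    have : deriv u 0 = Complex.exp (-T) / ρ := by rw [d5]; field_simp
    rw [this]
    push_cast
    rw [neg_add, Complex.exp_add, Complex.exp_neg (Real.log ρ : ℂ), ← Complex.ofReal_exp (Real.log ρ), Real.exp_log hρ0]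
    rfl

/-- the chain -/
lemma chain (n : ℕ) (Tm : ℝ) {η : ℝ} (hη : 0 < η) : ∃ ε : ℝ, 0 < ε ∧ ∀ b ρ : ℝ, 0 < b → b < 1 →
    -Real.log (b^2) ≤ ε → ρ = 2 * b / (1+b^2) → ∀ N : ℕ, ∀ (w : ℂ → ℂ) (T : ℝ), BiD w → MapsTo w (ball 0 1) (ball 0 1) →
    deriv w 0 = Complex.exp (-T) → T ≤ N * (-Real.log ρ) → ∀ (Q0 : ℂ → ℂ) (T0 : ℝ), Herg Q0 T0 → Good n η Q0 T0 →
    T0 + T ≤ Tm → ∃ Q, Herg Q T ∧ (∀ z ∈ ball (0:ℂ) 1, w (ρ * z) = ρ * z * Complex.exp (-Q z)) ∧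
      Good n η (DB.star Q0 Q) (T0 + T) := by
  obtain ⟨ε, hε, hstep⟩ := good_step n Tm hη
  refine ⟨ε, hε, ?_⟩
  intro b ρ hb0 hb1 hbε hρ N
  have hρ0 : 0 < ρ := by rw [hρ]; positivity
  have hρ1 : ρ < 1 := by rw [hρ, div_lt_one (by positivity)]; nlinarith [sq_pos_of_pos (sub_pos.2 hb1)]
  have hρb : b^2 ≤ ρ := by
    rw [hρ, le_div_iff₀ (by positivity)]
    have h1 : b^2 ≤ b := by nlinarith
    nlinarith [mul_nonneg (sq_nonneg b) (sub_nonneg.2 h1), sq_nonneg b, mul_pos hb0 hb0]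
  have hτε : -Real.log ρ ≤ ε := by
    have := Real.log_le_log (by positivity) hρb
    linarith
  have hτ0 : 0 < -Real.log ρ := by have := Real.log_neg hρ0 hρ1; linarith
  have hsc : ∀ z ∈ ball (0:ℂ) 1, (ρ:ℂ) * z ∈ ball (0:ℂ) 1 := by
    intro z hz
    rw [mem_ball_zero_iff] at hz ⊢
    rw [norm_mul, Complex.norm_real, Real.norm_of_nonneg hρ0.le]
    nlinarith [norm_nonneg z]
  -- the easy case
  have easy : ∀ (w : ℂ → ℂ) (T : ℝ), BiD w → MapsTo w (ball 0 1) (ball 0 1) →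
    deriv w 0 = Complex.exp (-T) → T ≤ ε → ∀ (Q0 : ℂ → ℂ) (T0 : ℝ), Herg Q0 T0 → Good n η Q0 T0 →
    T0 + T ≤ Tm → ∃ Q, Herg Q T ∧ (∀ z ∈ ball (0:ℂ) 1, w (ρ * z) = ρ * z * Complex.exp (-Q z)) ∧
      Good n η (DB.star Q0 Q) (T0 + T) := by
    intro w T hw hm hd hT Q0 T0 hQ0 hg hTm
    obtain ⟨q, hq, hqz⟩ := hw.rep hm hd
    have hQ : Herg (fun z => q (ρ * z)) T :=
      ⟨hq.1.comp (by fun_prop) hsc, fun z hz => hq.2.1 _ (hsc z hz), by simp [hq.2.2]⟩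
    refine ⟨fun z => q (ρ * z), hQ, fun z hz => hqz _ (hsc z hz), ?_⟩
    exact hstep _ _ _ _ hQ0 hQ (by linarith [hQ.nonneg]) hT hg
  induction N with
  | zero =>
    intro w T hw hm hd hT
    refine easy w T hw hm hd ?_
    simp at hT; linarith
  | succ N ih =>
    intro w T hw hm hd hT Q0 T0 hQ0 hg hTm
    by_cases hTε : T ≤ ε
    · exact easy w T hw hm hd hTε Q0 T0 hQ0 hg hTm
    push Not at hTε
    have hsmall : ‖deriv w 0‖ < b^2 := by
      rw [hd, Complex.norm_exp]
      simp only [Complex.neg_re, Complex.ofReal_re]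
      rw [← Real.lt_log_iff_exp_lt (by positivity)]
      linarith
    obtain ⟨a, ha, hom⟩ := hw.missed (by positivity) hsmall
    obtain ⟨κ, u, hκ, hu, hum, hws, hud⟩ := sqrt_step hw hm hd hb0 hb1 hρ ha hom
    obtain ⟨s, hs, hsz⟩ := sK_rep hρ0 hρ1 hκ
    have hg1 := hstep Q0 s T0 _ hQ0 hs (by linarith) hτε hg
    have hT' : T + Real.log ρ ≤ N * (-Real.log ρ) := by push_cast at hT; linarith
    obtain ⟨Q, hQ, hQz, hQg⟩ := ih u (T + Real.log ρ) hu hum hud hT' (DB.star Q0 s) (T0 + -Real.log ρ) (hQ0.star hs) hg1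
      (by linarith)
    have hss := hs.star hQ
    rw [show -Real.log ρ + (T + Real.log ρ) = T by ring] at hss
    refine ⟨DB.star s Q, hss, ?_, ?_⟩
    · intro z hz
      rw [hws _ (hsc z hz), hQz z hz, mul_assoc, hsz _ (star_mem hQ hz), DB.star, neg_add, Complex.exp_add]
      ring
    · have e : DB.star Q0 (DB.star s Q) = DB.star (DB.star Q0 s) Q := by
        funext z
        simp only [DB.star]
        rw [neg_add, Complex.exp_add, ← mul_assoc]
        ring
      rw [e]
      rwa [show T0 + -Real.log ρ + (T + Real.log ρ) = T0 + T by ring] at hQg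

/-- Milin type inequality for bounded univalent functions -/
lemma milin_bdd (n : ℕ) {w q : ℂ → ℂ} {T : ℝ} (hw : BiD w) (hm : MapsTo w (ball 0 1) (ball 0 1))
    (hq : Herg q T) (hqz : ∀ z ∈ ball (0:ℂ) 1, w z = z * Complex.exp (-q z)) : Phi n q 0 ≤ 0 := by
  have hT0 := hq.nonneg
  have hd : deriv w 0 = Complex.exp (-T) := by
    have hb : ball (0:ℂ) 1 ∈ nhds 0 := isOpen_ball.mem_nhds (by simp)
    have h1 : HasDerivAt q (deriv q 0) 0 := (hq.1.differentiableAt hb).hasDerivAt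
    have h2 := (hasDerivAt_id (0:ℂ)).mul h1.fun_neg.cexp
    have h3 : w =ᶠ[nhds 0] (id * fun z => Complex.exp (-q z)) := by
      filter_upwards [hb] with z hz using hqz z hz
    rw [(h2.congr_of_eventuallyEq h3).deriv]
    simp [hq.2.2]
  have key : ∀ η : ℝ, 0 < η → Phi n q 0 ≤ η * T := by
    intro η hη
    obtain ⟨ε, hε, hch⟩ := chain n T hη
    have hlim : Filter.Tendsto (fun b : ℝ => Phi n (fun z => q (((2 * b / (1+b^2) : ℝ) : ℂ) * z)) 0) (nhdsWithin 1 (Iio 1))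
        (nhds (Phi n q 0)) := by
      have : Continuous (fun b : ℝ => Phi n (fun z => q (((2 * b / (1+b^2) : ℝ) : ℂ) * z)) 0) := by
        unfold Phi
        simp only [cf_comp_mul]
        refine continuous_finsetSum _ fun i _ => ?_
        have : Continuous fun b : ℝ => (2 * b / (1+b^2) : ℝ) :=
          Continuous.div (by fun_prop) (by fun_prop) (fun b => by positivity)
        fun_prop
      have h2 := this.tendsto 1
      have e : Phi n (fun z => q (((2 * 1 / (1+1^2) : ℝ) : ℂ) * z)) 0 = Phi n q 0 := by norm_num
      simp only [e] at h2
      exact h2.mono_left nhdsWithin_le_nhds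
    refine le_of_tendsto hlim ?_
    have hε2 : Real.exp (-ε) < 1 := by rw [Real.exp_lt_one_iff]; linarith
    have hev : ∀ᶠ b : ℝ in nhdsWithin 1 (Iio 1), Real.exp (-ε) < b^2 :=
      (((continuous_pow 2).tendsto (1:ℝ)).mono_left nhdsWithin_le_nhds).eventually (lt_mem_nhds (by simpa using hε2))
    have hev2 : ∀ᶠ b : ℝ in nhdsWithin 1 (Iio 1), 0 < b :=
      (Filter.tendsto_id.mono_left nhdsWithin_le_nhds).eventually (lt_mem_nhds one_pos)
    filter_upwards [hev, hev2, self_mem_nhdsWithin] with b hb hb0 hb1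
    have hb1' : b < 1 := hb1
    set ρ : ℝ := 2 * b / (1+b^2) with hρ
    have hρ0 : 0 < ρ := by rw [hρ]; positivity
    have hρ1 : ρ < 1 := by rw [hρ, div_lt_one (by positivity)]; nlinarith [sq_pos_of_pos (sub_pos.2 hb1')]
    have hτ0 : 0 < -Real.log ρ := by have := Real.log_neg hρ0 hρ1; linarith
    obtain ⟨N, hN⟩ := exists_nat_ge (T / (-Real.log ρ))
    rw [div_le_iff₀ hτ0] at hN
    have hlog : -Real.log (b^2) ≤ ε := by
      have := (Real.lt_log_iff_exp_lt (by positivity)).2 hb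
      linarith
    obtain ⟨Q, hQ, hQz, hQg⟩ := hch b ρ hb0 hb1' hlog hρ N w T hw hm hd hN (fun _ => 0) 0
      ⟨by fun_prop, by simp, by simp⟩ (good_zero n η) (by linarith)
    have hsc : ∀ z ∈ ball (0:ℂ) 1, (ρ:ℂ) * z ∈ ball (0:ℂ) 1 := by
      intro z hz
      rw [mem_ball_zero_iff] at hz ⊢
      rw [norm_mul, Complex.norm_real, Real.norm_of_nonneg hρ0.le]
      nlinarith [norm_nonneg z]
    have hρc : (ρ:ℂ) ≠ 0 := by exact_mod_cast hρ0.ne'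
    have hqρ : DifferentiableOn ℂ (fun z => q (ρ * z)) (ball 0 1) := hq.1.comp (by fun_prop) hsc
    -- uniqueness of the logarithm away from zero then by continuity
    have hexp : ∀ z ∈ ball (0:ℂ) 1, Complex.exp (-Q z) = Complex.exp (-q (ρ * z)) := by
      intro z hz
      by_cases hz0 : z = 0
      · rw [hz0, mul_zero, hQ.2.2, hq.2.2]
      · have := (hQz z hz).symm.trans (hqz _ (hsc z hz))
        exact mul_left_cancel₀ (mul_ne_zero hρc hz0) this
    have huniq : ∀ z ∈ ball (0:ℂ) 1, Q z = q (ρ * z) := by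
      intro z hz
      have := log_unique hQ.1.neg hqρ.neg (by simp [hQ.2.2, hq.2.2]) hexp hz
      simpa using this
    have hP := hQg 0 le_rfl
    have e : DB.star (fun _ => 0) Q = Q := by funext z; simp [DB.star]
    rw [e, zero_add] at hP
    have e2 : Phi n Q 0 = Phi n (fun z => q (ρ * z)) 0 := by
      unfold Phi
      simp only [cf_congr_ball one_pos huniq]
    rw [← e2]; exact hP
  by_contra hc
  push Not at hc
  have h1 := key (Phi n q 0 / (2 * (T + 1))) (by positivity)
  have h2 : Phi n q 0 / (2 * (T + 1)) * T ≤ Phi n q 0 / 2 := by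
    rw [div_mul_eq_mul_div, div_le_div_iff₀ (by positivity) (by positivity)]
    nlinarith
  linarith

end DB
namespace DB

/-- Milin inequality for univalent functions -/
lemma milin (n : ℕ) {φ l : ℂ → ℂ} (hφ : BiD φ) (hl : DifferentiableOn ℂ l (ball 0 1)) (hl0 : l 0 = 0)
    (hlz : ∀ z ∈ ball (0:ℂ) 1, φ z = z * (deriv φ 0 * Complex.exp (l z))) :
    ∑ i ∈ Finset.range n, ((n:ℝ) - i) * ((i+1) * ‖cf (i+1) l‖^2 - 4 / (i+1)) ≤ 0 := by
  obtain ⟨v0, _, _, hv0⟩ := hφ.deriv_ne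
  set c := deriv φ 0 with hc
  have hc0 : c ≠ 0 := by intro e; rw [e, mul_zero] at hv0; norm_num at hv0
  have hcn : 0 < ‖c‖ := norm_pos_iff.2 hc0
  have key : ∀ ρ : ℝ, 0 < ρ → ρ < 1 →
      ∑ i ∈ Finset.range n, ((n:ℝ) - i) * ((i+1) * ‖(ρ:ℂ)^(i+1) * cf (i+1) l‖^2 - 4 / (i+1)) ≤ 0 := by
    intro ρ hρ0 hρ1
    have hρc : (ρ:ℂ) ≠ 0 := by exact_mod_cast hρ0.ne'
    have hsc : ∀ z ∈ ball (0:ℂ) 1, (ρ:ℂ) * z ∈ ball (0:ℂ) 1 := by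
      intro z hz
      rw [mem_ball_zero_iff] at hz ⊢
      rw [norm_mul, Complex.norm_real, Real.norm_of_nonneg hρ0.le]
      nlinarith [norm_nonneg z]
    obtain ⟨M0, hM0⟩ := (isCompact_closedBall (0:ℂ) ρ).exists_bound_of_continuousOn
      (hφ.1.continuousOn.mono (closedBall_subset_ball hρ1))
    set M := |M0| + 1 with hM
    have hMpos : 0 < M := by positivity
    have hMc : (M:ℂ) ≠ 0 := by exact_mod_cast hMpos.ne'
    set μ : ℂ := (‖c‖ : ℂ) / c / M with hμ
    have hcc : (‖c‖:ℂ) ≠ 0 := by exact_mod_cast hcn.ne'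
    have hμ0 : μ ≠ 0 := div_ne_zero (div_ne_zero hcc hc0) hMc
    have hμn : ‖μ‖ = 1 / M := by
      rw [hμ, norm_div, norm_div, Complex.norm_real, Complex.norm_real, norm_norm, div_self hcn.ne',
        Real.norm_of_nonneg hMpos.le]
    set w : ℂ → ℂ := fun z => μ * φ (ρ * z) with hw
    have hwd : DifferentiableOn ℂ w (ball 0 1) := (hφ.1.comp (by fun_prop) hsc).const_mul μ
    have hwm : MapsTo w (ball 0 1) (ball 0 1) := by
      intro z hz
      have h1 : ‖φ (ρ * z)‖ ≤ M0 := by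
        apply hM0
        rw [mem_closedBall_zero_iff, norm_mul, Complex.norm_real, Real.norm_of_nonneg hρ0.le]
        rw [mem_ball_zero_iff] at hz
        nlinarith
      rw [mem_ball_zero_iff, hw, norm_mul, hμn, div_mul_eq_mul_div, one_mul, div_lt_one hMpos]
      linarith [le_abs_self M0]
    have hwB : BiD w := by
      refine ⟨hwd, by simp [hw, hφ.2.1], ?_⟩
      obtain ⟨_, _, v, hv1, hv⟩ := hφ
      refine ⟨fun y => v (μ⁻¹ * y) / ρ, ?_, ?_⟩
      · refine DifferentiableOn.div_const (hv1.comp (by fun_prop) ?_) _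
        rintro _ ⟨z, hz, rfl⟩
        simp only [hw]
        rw [inv_mul_cancel_left₀ hμ0]
        exact ⟨_, hsc z hz, rfl⟩
      · intro z hz
        simp only [hw]
        rw [inv_mul_cancel_left₀ hμ0, hv _ (hsc z hz)]
        field_simp
    set T : ℝ := -Real.log (ρ * ‖c‖ / M) with hT
    have hpos : 0 < ρ * ‖c‖ / M := by positivity
    have hexpT : Complex.exp (-T) = μ * (ρ * c) := by
      rw [hT, Complex.ofReal_neg, neg_neg, ← Complex.ofReal_exp, Real.exp_log hpos, hμ]
      push_cast
      field_simp
    have hb : ball (0:ℂ) 1 ∈ nhds 0 := isOpen_ball.mem_nhds (by simp)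
    have hder : deriv w 0 = Complex.exp (-T) := by
      rw [hexpT]
      have h1 : HasDerivAt φ c (ρ * 0) := by
        rw [mul_zero]; exact (hφ.1.differentiableAt hb).hasDerivAt
      have h2 : HasDerivAt (fun z : ℂ => (ρ:ℂ) * z) (ρ * 1) 0 := (hasDerivAt_id (0:ℂ)).const_mul _
      have h3 := (h1.comp (0:ℂ) h2).const_mul μ
      have h4 : HasDerivAt w (μ * (c * (ρ * 1))) 0 := h3
      rw [h4.deriv]; ring
    obtain ⟨q, hq, hqz⟩ := hwB.rep hwm hder
    have hP := milin_bdd n hwB hwm hq hqz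
    have hlρ : DifferentiableOn ℂ (fun z => l (ρ * z) + (-(T:ℂ))) (ball 0 1) := (hl.comp (by fun_prop) hsc).add_const _
    have huniq : ∀ z ∈ ball (0:ℂ) 1, -q z = l (ρ * z) + (-(T:ℂ)) := by
      intro z hz
      refine log_unique hq.1.neg hlρ (by simp [hq.2.2, hl0]) (fun z hz => ?_) hz
      by_cases hz0 : z = 0
      · simp [hz0, hq.2.2, hl0]
      · have e := hqz z hz
        simp only [hw] at e
        rw [hlz _ (hsc z hz)] at e
        have e2 : z * Complex.exp (-q z) = z * Complex.exp (l (ρ * z) + (-(T:ℂ))) := by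
          rw [← e, Complex.exp_add, hexpT]; ring
        exact mul_left_cancel₀ hz0 e2
    have hcf : ∀ i : ℕ, ‖cf (i+1) q‖ = ‖(ρ:ℂ)^(i+1) * cf (i+1) l‖ := by
      intro i
      have h1 : ∀ z ∈ ball (0:ℂ) 1, q z = T - l (ρ * z) := by
        intro z hz
        have := huniq z hz
        linear_combination -this
      rw [cf_congr_ball one_pos h1, cf_sub (f := fun _ => (T:ℂ)) (g := fun z => l (ρ * z)) analyticAt_const
        (an_of_ball one_pos (hl.comp (by fun_prop) hsc)), cf_const]
      have : cf (i+1) (fun z => l (ρ * z)) = (ρ:ℂ)^(i+1) * cf (i+1) l := cf_comp_mul _ _ _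
      rw [if_neg (by omega), zero_sub, norm_neg, this]
    unfold Phi at hP
    simp only [neg_zero, Real.exp_zero, hcf] at hP
    refine le_trans (le_of_eq (Finset.sum_congr rfl fun i hi => ?_)) hP
    rw [Finset.mem_range] at hi
    rw [tau_one n (i+1) (by omega) (by omega)]
    push_cast; ring
  have hcont : Continuous fun ρ : ℝ =>
      ∑ i ∈ Finset.range n, ((n:ℝ) - i) * ((i+1) * ‖(ρ:ℂ)^(i+1) * cf (i+1) l‖^2 - 4 / (i+1)) := by
    fun_prop
  have hlim := (hcont.tendsto 1).mono_left (nhdsWithin_le_nhds (s := Iio 1))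
  have hev2 : ∀ᶠ b : ℝ in nhdsWithin 1 (Iio 1), 0 < b :=
      (Filter.tendsto_id.mono_left nhdsWithin_le_nhds).eventually (lt_mem_nhds one_pos)
  have := le_of_tendsto hlim (by filter_upwards [hev2, self_mem_nhdsWithin] with ρ h0 h1 using key ρ h0 h1)
  simpa using this

lemma lebedev_milin (A β : ℕ → ℂ) (h0 : β 0 = 1)
    (hrec : ∀ k : ℕ, ((k:ℂ)+1) * β (k+1) = ∑ j ∈ Finset.range (k+1), (((j:ℂ)+1) * A (j+1)) * β (k-j)) (n : ℕ) :
    ∑ k ∈ Finset.range (n+1), ‖β k‖^2 ≤ (n+1) * Real.exp (∑ j ∈ Finset.range n,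
      (1 - ((j:ℝ)+1) / (n+1)) * ((j+1) * ‖A (j+1)‖^2 - 1 / (j+1))) := by
  induction n with
  | zero => simp [h0]
  | succ n ih =>
    set x : ℕ → ℝ := fun j => (j+1) * ‖A (j+1)‖^2 - 1 / (j+1) with hx
    set S := ∑ k ∈ Finset.range (n+1), ‖β k‖^2 with hS
    have hS0 : 0 ≤ S := Finset.sum_nonneg fun _ _ => by positivity
    set a : ℝ := ∑ j ∈ Finset.range (n+1), ((j:ℝ)+1)^2 * ‖A (j+1)‖^2 with ha
    have hn : (0:ℝ) < n + 1 := by positivity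
    have hn2 : (0:ℝ) < n + 1 + 1 := by positivity
    have hcs : ((n:ℝ)+1)^2 * ‖β (n+1)‖^2 ≤ a * S := by
      have h1 : ((n:ℝ)+1) * ‖β (n+1)‖ ≤ ∑ j ∈ Finset.range (n+1), (((j:ℝ)+1) * ‖A (j+1)‖) * ‖β (n-j)‖ := by
        have := congrArg norm (hrec n)
        rw [norm_mul, show ((n:ℂ)+1) = ((n+1:ℕ):ℂ) by push_cast; ring, Complex.norm_natCast] at this
        push_cast at this
        rw [this]
        refine norm_sum_le_of_le _ fun j _ => ?_
        rw [norm_mul, norm_mul, show ((j:ℂ)+1) = ((j+1:ℕ):ℂ) by push_cast; ring, Complex.norm_natCast]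
        push_cast; rfl
      have h2 := Finset.sum_mul_sq_le_sq_mul_sq (Finset.range (n+1)) (fun j => ((j:ℝ)+1) * ‖A (j+1)‖) (fun j => ‖β (n-j)‖)
      have h3 : ∑ j ∈ Finset.range (n+1), ‖β (n-j)‖^2 = S := by
        rw [hS, ← Finset.sum_range_reflect (fun k => ‖β k‖^2)]
        refine Finset.sum_congr rfl fun j _ => ?_
        simp
      rw [h3] at h2
      simp only [mul_pow] at h2
      rw [← mul_pow]
      exact (pow_le_pow_left₀ (by positivity) h1 2).trans h2
    have hE : ∑ j ∈ Finset.range (n+1), (1 - ((j:ℝ)+1) / ((n+1:ℕ)+1)) * x j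
        = ∑ j ∈ Finset.range n, (1 - ((j:ℝ)+1) / (n+1)) * x j + (a - (n+1)) / ((n+1) * (n+1+1)) := by
      have e1 : ∑ j ∈ Finset.range n, (1 - ((j:ℝ)+1) / (n+1)) * x j = ∑ j ∈ Finset.range (n+1), (1 - ((j:ℝ)+1) / (n+1)) * x j := by
        rw [Finset.sum_range_succ, div_self hn.ne']; simp
      have e2 : a - (n+1) = ∑ j ∈ Finset.range (n+1), ((j:ℝ)+1) * x j := by
        have : ((n:ℝ)+1) = ∑ j ∈ Finset.range (n+1), (1:ℝ) := by simp
        rw [this, ha, ← Finset.sum_sub_distrib]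
        refine Finset.sum_congr rfl fun j _ => ?_
        simp only [hx]; field_simp
      rw [e1, e2, Finset.sum_div, ← Finset.sum_add_distrib]
      refine Finset.sum_congr rfl fun j _ => ?_
      push_cast; field_simp; ring
    rw [Finset.sum_range_succ, hE, Real.exp_add]
    set E := Real.exp (∑ j ∈ Finset.range n, (1 - ((j:ℝ)+1) / (n+1)) * x j) with hEd
    have hE0 : 0 < E := Real.exp_pos _
    have hexp := Real.add_one_le_exp ((a - (n+1)) / (((n:ℝ)+1) * (n+1+1)))
    set F := Real.exp ((a - (n+1)) / (((n:ℝ)+1) * (n+1+1))) with hF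
    have ha0 : 0 ≤ a := Finset.sum_nonneg fun _ _ => by positivity
    have h5 : ‖β (n+1)‖^2 ≤ a * S / ((n:ℝ)+1)^2 := by rw [le_div_iff₀ (by positivity)]; linarith
    have h6 : S + a * S / ((n:ℝ)+1)^2 = ((n+1+1) / (n+1)) * ((a - (n+1)) / (((n:ℝ)+1) * (n+1+1)) + 1) * S := by
      field_simp; ring
    calc S + ‖β (n+1)‖^2 ≤ ((n+1+1) / (n+1)) * ((a - (n+1)) / (((n:ℝ)+1) * (n+1+1)) + 1) * S := by rw [← h6]; linarith
      _ ≤ ((n+1+1) / (n+1)) * F * S := by gcongr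
      _ ≤ ((n+1+1) / (n+1)) * F * ((n+1) * E) := by gcongr
      _ = _ := by push_cast; field_simp

lemma robertson (n : ℕ) {φ l : ℂ → ℂ} (hφ : BiD φ) (hl : DifferentiableOn ℂ l (ball 0 1)) (hl0 : l 0 = 0)
    (hlz : ∀ z ∈ ball (0:ℂ) 1, φ z = z * (deriv φ 0 * Complex.exp (l z))) :
    ∑ k ∈ Finset.range (n+1), ‖cf k (fun z => Complex.exp (l z / 2))‖^2 ≤ n + 1 := by
  have hm := milin n hφ hl hl0 hlz
  set B : ℂ → ℂ := fun z => Complex.exp (l z / 2) with hB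
  have hBd : DifferentiableOn ℂ B (ball 0 1) := (hl.div_const 2).cexp
  have aB := an_of_ball one_pos hBd
  have al := an_of_ball one_pos hl
  have hLM := lebedev_milin (fun k => cf k l / 2) (fun k => cf k B) (by rw [cf_zero_eq]; simp [hB, hl0]) ?_ n
  · refine hLM.trans ?_
    have : ∑ j ∈ Finset.range n, (1 - ((j:ℝ)+1) / (n+1)) * ((j+1) * ‖cf (j+1) l / 2‖^2 - 1 / (j+1))
       = (1 / (4 * ((n:ℝ)+1))) * ∑ i ∈ Finset.range n, ((n:ℝ) - i) * ((i+1) * ‖cf (i+1) l‖^2 - 4 / (i+1)) := by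
      rw [Finset.mul_sum]
      refine Finset.sum_congr rfl fun j _ => ?_
      rw [norm_div, Complex.norm_ofNat]
      field_simp; ring
    have hle : ∑ j ∈ Finset.range n, (1 - ((j:ℝ)+1) / (n+1)) * ((j+1) * ‖cf (j+1) l / 2‖^2 - 1 / (j+1)) ≤ 0 := by
      rw [this]
      exact mul_nonpos_of_nonneg_of_nonpos (by positivity) hm
    have := Real.exp_le_one_iff.2 hle
    have hn : (0:ℝ) ≤ n + 1 := by positivity
    calc _ ≤ ((n:ℝ)+1) * 1 := mul_le_mul_of_nonneg_left this hn
      _ = _ := mul_one _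
  · intro k
    have hder : ∀ z ∈ ball (0:ℂ) 1, deriv B z = (1/2) * (deriv l z * B z) := by
      intro z hz
      have h1 := (hl.differentiableAt (isOpen_ball.mem_nhds hz)).hasDerivAt
      have h2 := (h1.div_const 2).cexp
      have h3 : HasDerivAt B (Complex.exp (l z / 2) * (deriv l z / 2)) z := h2
      rw [h3.deriv, hB]; ring
    have h1 := cf_deriv B k
    rw [cf_congr_ball one_pos hder, cf_const_mul, cf_mul al.deriv aB] at h1
    rw [← h1, Finset.mul_sum]
    refine Finset.sum_congr rfl fun j _ => ?_
    rw [cf_deriv]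
    ring

end DB
namespace DB

lemma cf_pow (j k : ℕ) : cf k (fun z => z^j) = if k = j then 1 else 0 := by
  induction j generalizing k with
  | zero =>
    simp only [pow_zero]; rw [cf_const]
  | succ j ih =>
    have e : (fun z : ℂ => z^(j+1)) = fun z => z * z^j := by funext z; ring
    rw [e]
    cases k with
    | zero => rw [cf_zero_eq]; simp
    | succ k =>
      rw [cf_succ_id_mul (f := fun z => z^j) (by fun_prop), ih]; simp

lemma cf_poly (N : ℕ) (c : ℕ → ℂ) (k : ℕ) : cf k (fun z => ∑ j ∈ Finset.range N, c j * z^j) = if k < N then c k else 0 := by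
  induction N with
  | zero => simp only [Finset.range_zero, Finset.sum_empty]; rw [cf_const]; simp
  | succ N ih =>
    simp only [Finset.sum_range_succ]
    rw [cf_add (f := fun z => ∑ j ∈ Finset.range N, c j * z^j) (g := fun z => c N * z^N) ?_ (by fun_prop), ih, cf_const_mul, cf_pow]
    · rcases lt_trichotomy k N with h | h | h
      · simp [h, h.ne, Nat.lt_succ_of_lt h]
      · simp [h]
      · rw [if_neg (by omega), if_neg (by omega), if_neg (by omega)]; simp
    · exact an_of_ball one_pos (by fun_prop)

lemma avg_poly {h : ℂ → ℂ} (hh : DifferentiableOn ℂ h (ball 0 1)) {r : ℝ} (hr0 : 0 < r) (hr : r < 1) (N : ℕ) (c : ℕ → ℂ) :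
    Real.circleAverage (fun z => h z * starRingEnd ℂ (∑ j ∈ Finset.range N, c j * z^j)) 0 r
      = ∑ j ∈ Finset.range N, (starRingEnd ℂ (c j) * ((r:ℂ)^2)^j) * cf j h := by
  have hne : ∀ z ∈ sphere (0:ℂ) r, z ≠ 0 := by
    intro z hz h; simp [h] at hz; linarith
  have hcp : ContinuousOn h (sphere 0 r) := hh.continuousOn.mono (by intro z hz; simp at hz ⊢; linarith)
  have hinv : ContinuousOn (fun z : ℂ => z⁻¹) (sphere 0 r) := continuousOn_inv₀.mono fun z hz => hne z hz
  have c1 : ∀ k, ContinuousOn (fun z => h z * (z⁻¹)^k) (sphere 0 r) := fun k => hcp.mul (hinv.pow k)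
  have e : ∀ z ∈ sphere (0:ℂ) |r|, h z * starRingEnd ℂ (∑ j ∈ Finset.range N, c j * z^j)
      = ∑ j ∈ Finset.range N, (starRingEnd ℂ (c j) * ((r:ℂ)^2)^j) * (h z * (z⁻¹)^j) := by
    intro z hz
    rw [abs_of_pos hr0] at hz
    have hz0 := hne z hz
    have hzn : ‖z‖ = r := by simpa using hz
    have hc : starRingEnd ℂ z = (r:ℂ)^2 * z⁻¹ := by
      rw [eq_mul_inv_iff_mul_eq₀ hz0, mul_comm, Complex.mul_conj, Complex.normSq_eq_norm_sq, hzn]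
      push_cast; rfl
    rw [map_sum, Finset.mul_sum]
    refine Finset.sum_congr rfl fun j _ => ?_
    rw [map_mul, map_pow, hc, mul_pow]; ring
  rw [Real.circleAverage_congr_sphere e, Real.circleAverage_fun_sum]
  · refine Finset.sum_congr rfl fun j _ => ?_
    have := Real.circleAverage_fun_smul (a := starRingEnd ℂ (c j) * ((r:ℂ)^2)^j) (f := fun z => h z * (z⁻¹)^j) (c := 0) (R := r)
    simp only [smul_eq_mul] at this
    rw [this, cf_circleAverage hh hr0 hr]
  · intro j _
    exact (continuousOn_const.mul (c1 j)).circleIntegrable hr0.le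

lemma contract_poly {w : ℂ → ℂ} (hw : DifferentiableOn ℂ w (ball 0 1)) (hw1 : ∀ z ∈ ball (0:ℂ) 1, ‖w z‖ ≤ 1) (N : ℕ) (c : ℕ → ℂ) :
    ∑ k ∈ Finset.range N, ‖cf k (fun z => w z * ∑ j ∈ Finset.range N, c j * z^j)‖^2 ≤ ∑ k ∈ Finset.range N, ‖c k‖^2 := by
  set P : ℂ → ℂ := fun z => ∑ j ∈ Finset.range N, c j * z^j with hP
  set h : ℂ → ℂ := fun z => w z * P z with hh
  set p : ℕ → ℂ := fun k => cf k h with hp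
  set Q : ℂ → ℂ := fun z => ∑ j ∈ Finset.range N, p j * z^j with hQ
  have hPd : DifferentiableOn ℂ P (ball 0 1) := by fun_prop
  have hQd : DifferentiableOn ℂ Q (ball 0 1) := by fun_prop
  have hhd : DifferentiableOn ℂ h (ball 0 1) := hw.mul hPd
  have key : ∀ r : ℝ, 0 < r → r < 1 → ∑ k ∈ Finset.range N, (r^2)^k * ‖p k‖^2 ≤ ∑ k ∈ Finset.range N, (r^2)^k * ‖c k‖^2 := by
    intro r hr0 hr1
    have hsub : sphere (0:ℂ) r ⊆ ball 0 1 := by intro z hz; simp at hz ⊢; linarith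
    have a1 : Real.circleAverage (fun z => P z * starRingEnd ℂ (P z)) 0 r = _ := avg_poly hPd hr0 hr1 N c
    have a2 : Real.circleAverage (fun z => h z * starRingEnd ℂ (Q z)) 0 r = _ := avg_poly hhd hr0 hr1 N p
    have a3 : Real.circleAverage (fun z => Q z * starRingEnd ℂ (Q z)) 0 r = _ := avg_poly hQd hr0 hr1 N p
    have cont : ∀ (u : ℂ → ℂ) (d : ℕ → ℂ), DifferentiableOn ℂ u (ball 0 1) →
        CircleIntegrable (fun z => u z * starRingEnd ℂ (∑ j ∈ Finset.range N, d j * z^j)) 0 r := by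
      intro u d hu
      refine ContinuousOn.circleIntegrable hr0.le ((hu.continuousOn.mono hsub).mul ?_)
      exact (Complex.continuous_conj.comp (by fun_prop)).continuousOn
    have i1 : CircleIntegrable (fun z => P z * starRingEnd ℂ (P z)) 0 r := cont P c hPd
    have i2 : CircleIntegrable (fun z => h z * starRingEnd ℂ (Q z)) 0 r := cont h p hhd
    have i3 : CircleIntegrable (fun z => Q z * starRingEnd ℂ (Q z)) 0 r := cont Q p hQd
    have j12 : CircleIntegrable (fun z => P z * starRingEnd ℂ (P z) - h z * starRingEnd ℂ (Q z)) 0 r := i1.sub i2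
    have j23 : CircleIntegrable (fun z => h z * starRingEnd ℂ (Q z) - Q z * starRingEnd ℂ (Q z)) 0 r := i2.sub i3
    set G : ℂ → ℂ := fun z => (P z * starRingEnd ℂ (P z) - h z * starRingEnd ℂ (Q z)) - (h z * starRingEnd ℂ (Q z) - Q z * starRingEnd ℂ (Q z)) with hG
    have hav : Real.circleAverage G 0 r = ((∑ k ∈ Finset.range N, (r^2)^k * ‖c k‖^2 - ∑ k ∈ Finset.range N, (r^2)^k * ‖p k‖^2 : ℝ) : ℂ) := by
      rw [hG, Real.circleAverage_fun_sub j12 j23, Real.circleAverage_fun_sub i1 i2, Real.circleAverage_fun_sub i2 i3,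
        a1, a2, a3]
      have e1 : ∀ d : ℕ → ℂ, ∑ j ∈ Finset.range N, (starRingEnd ℂ (d j) * ((r:ℂ)^2)^j) * d j = ((∑ k ∈ Finset.range N, (r^2)^k * ‖d k‖^2 : ℝ) : ℂ) := by
        intro d
        push_cast
        refine Finset.sum_congr rfl fun j _ => ?_
        have := Complex.mul_conj (d j)
        rw [Complex.normSq_eq_norm_sq] at this
        push_cast at this
        rw [← this]; ring
      have e2 : ∑ j ∈ Finset.range N, (starRingEnd ℂ (c j) * ((r:ℂ)^2)^j) * cf j P = ∑ j ∈ Finset.range N, (starRingEnd ℂ (c j) * ((r:ℂ)^2)^j) * c j := by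
        refine Finset.sum_congr rfl fun j hj => ?_
        rw [hP, cf_poly, if_pos (Finset.mem_range.1 hj)]
      have e3 : ∑ j ∈ Finset.range N, (starRingEnd ℂ (p j) * ((r:ℂ)^2)^j) * cf j Q = ∑ j ∈ Finset.range N, (starRingEnd ℂ (p j) * ((r:ℂ)^2)^j) * p j := by
        refine Finset.sum_congr rfl fun j hj => ?_
        rw [hQ, cf_poly, if_pos (Finset.mem_range.1 hj)]
      have e4 : ∑ j ∈ Finset.range N, (starRingEnd ℂ (p j) * ((r:ℂ)^2)^j) * cf j h = ∑ j ∈ Finset.range N, (starRingEnd ℂ (p j) * ((r:ℂ)^2)^j) * p j := rfl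
      rw [e2, e3, e4, e1, e1]
      push_cast; ring
    have hGi : CircleIntegrable G 0 r := (i1.sub i2).sub (i2.sub i3)
    have hre2 : Real.circleAverage (Complex.reCLM ∘ G) 0 r = (Real.circleAverage G 0 r).re :=
      Complex.reCLM.circleAverage_comp_comm hGi
    have hnn : 0 ≤ Real.circleAverage (Complex.reCLM ∘ G) 0 r := by
      apply Real.circleAverage_nonneg_of_nonneg
      intro z hz
      rw [abs_of_pos hr0] at hz
      have h1 : Complex.normSq (h z) ≤ Complex.normSq (P z) := by
        simp only [hh]
        rw [map_mul, Complex.normSq_eq_norm_sq (w z)]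
        have := hw1 z (hsub hz)
        have h2 : ‖w z‖^2 ≤ 1 := by nlinarith [norm_nonneg (w z)]
        nlinarith [Complex.normSq_nonneg (P z)]
      have h3 := Complex.normSq_nonneg (h z - Q z)
      simp only [Complex.normSq_apply, Complex.sub_re, Complex.sub_im] at h1 h3
      simp only [Function.comp, Complex.reCLM_apply, hG, Complex.sub_re, Complex.mul_re, Complex.conj_re, Complex.conj_im]
      linarith
    rw [hre2, hav, Complex.ofReal_re] at hnn
    linarith
  have hcont : Continuous fun r : ℝ => ∑ k ∈ Finset.range N, (r^2)^k * ‖c k‖^2 - ∑ k ∈ Finset.range N, (r^2)^k * ‖p k‖^2 := by fun_prop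
  have hlim := (hcont.tendsto 1).mono_left (nhdsWithin_le_nhds (s := Iio 1))
  have hev2 : ∀ᶠ b : ℝ in nhdsWithin 1 (Iio 1), 0 < b :=
      (Filter.tendsto_id.mono_left nhdsWithin_le_nhds).eventually (lt_mem_nhds one_pos)
  have := ge_of_tendsto hlim (b := 0) (by filter_upwards [hev2, self_mem_nhdsWithin] with ρ h0 h1 using sub_nonneg.2 (key ρ h0 h1))
  simp only [one_pow, one_mul] at this
  linarith

lemma contract {w g : ℂ → ℂ} (hw : DifferentiableOn ℂ w (ball 0 1)) (hw1 : ∀ z ∈ ball (0:ℂ) 1, ‖w z‖ ≤ 1)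
    (hg : DifferentiableOn ℂ g (ball 0 1)) (N : ℕ) :
    ∑ k ∈ Finset.range N, ‖cf k (fun z => w z * g z)‖^2 ≤ ∑ k ∈ Finset.range N, ‖cf k g‖^2 := by
  refine le_trans (le_of_eq (Finset.sum_congr rfl fun k hk => ?_)) (contract_poly hw hw1 N (fun k => cf k g))
  rw [Finset.mem_range] at hk
  have aw := an_of_ball one_pos hw
  rw [cf_mul aw (an_of_ball one_pos hg), cf_mul aw (an_of_ball one_pos (by fun_prop))]
  congr 2
  refine Finset.sum_congr rfl fun i _ => ?_
  rw [cf_poly, if_pos (by omega)]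

lemma schwarz_quot {w : ℂ → ℂ} (hd : DifferentiableOn ℂ w (ball 0 1)) (hm : MapsTo w (ball 0 1) (ball 0 1)) (h0 : w 0 = 0) :
    ∃ p : ℂ → ℂ, DifferentiableOn ℂ p (ball 0 1) ∧ (∀ z, w z = z * p z) ∧ ∀ z ∈ ball (0:ℂ) 1, ‖p z‖ ≤ 1 := by
  obtain ⟨p, hp, hp0, hpz⟩ := quot_exists hd h0
  refine ⟨p, hp, hpz, fun z hz => ?_⟩
  by_cases hz0 : z = 0
  · rw [hz0, hp0]
    have := Complex.norm_deriv_le_div_of_mapsTo_ball hd (R₂ := 1) ?_ one_pos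
    · simpa using this
    · intro x hx
      rw [h0]; exact ball_subset_closedBall (hm hx)
  · have := Complex.norm_le_norm_of_mapsTo_ball hd (fun x hx => ball_subset_closedBall (hm hx)) h0 (z := z) (by simpa using hz)
    rw [hpz, norm_mul] at this
    have hpos : 0 < ‖z‖ := norm_pos_iff.2 hz0
    by_contra hc
    push Not at hc
    nlinarith

lemma subord_l2 {w : ℂ → ℂ} (hd : DifferentiableOn ℂ w (ball 0 1)) (hm : MapsTo w (ball 0 1) (ball 0 1)) (h0 : w 0 = 0) (N : ℕ) :
    ∀ B : ℂ → ℂ, DifferentiableOn ℂ B (ball 0 1) →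
    ∑ k ∈ Finset.range N, ‖cf k (fun z => B (w z))‖^2 ≤ ∑ k ∈ Finset.range N, ‖cf k B‖^2 := by
  obtain ⟨p, hp, hpz, hp1⟩ := schwarz_quot hd hm h0
  induction N with
  | zero => intro B _; simp
  | succ N ih =>
    intro B hB
    obtain ⟨Q, hQ, -, hQz⟩ := quot_exists (φ := fun z => B z - B 0) (hB.sub_const _) (by simp)
    have hQw : DifferentiableOn ℂ (fun z => Q (w z)) (ball 0 1) := hQ.comp hd hm
    have hpQ : DifferentiableOn ℂ (fun z => p z * Q (w z)) (ball 0 1) := hp.mul hQw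
    rw [Finset.sum_range_succ', Finset.sum_range_succ']
    have e1 : ∀ k, cf (k+1) (fun z => B (w z)) = cf k (fun z => p z * Q (w z)) := by
      intro k
      have : (fun z => B (w z)) = fun z => B 0 + z * (p z * Q (w z)) := by
        funext z
        have := hQz (w z)
        rw [← mul_assoc, ← hpz z, ← this]; ring
      rw [this, cf_add (f := fun _ => B 0) (g := fun z => z * (p z * Q (w z))) analyticAt_const
        (an_of_ball one_pos (differentiableOn_id.mul hpQ)), cf_const, cf_succ_id_mul (an_of_ball one_pos hpQ)]
      simp
    have e2 : ∀ k, cf (k+1) B = cf k Q := by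
      intro k
      have : B = fun z => B 0 + z * Q z := by
        funext z
        have := hQz z
        rw [← this]; ring
      conv_lhs => rw [this]
      rw [cf_add (f := fun _ => B 0) (g := fun z => z * Q z) analyticAt_const
        (an_of_ball one_pos (differentiableOn_id.mul hQ)), cf_const, cf_succ_id_mul (an_of_ball one_pos hQ)]
      simp
    simp only [e1, e2, cf_zero_eq, h0]
    have := (contract hp hp1 hQw N).trans (ih Q hQ)
    linarith

/-- generalized Bieberbach conjecture for subordinate functions -/
theorem rogosinski {φ w : ℂ → ℂ} (hφ : BiD φ) (hd : DifferentiableOn ℂ w (ball 0 1)) (hm : MapsTo w (ball 0 1) (ball 0 1))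
    (h0 : w 0 = 0) (s : ℕ) : ‖cf s (fun z => φ (w z))‖ ≤ s * ‖deriv φ 0‖ := by
  cases s with
  | zero => rw [cf_zero_eq, h0, hφ.2.1]; simp
  | succ s =>
  obtain ⟨P, hP, hP0, hPz, hPne⟩ := hφ.quot
  have hc0 : deriv φ 0 ≠ 0 := by rw [← hP0]; exact hPne 0 (by simp)
  obtain ⟨l, hl, hl0, hlz⟩ := log_exists (p := fun z => P z / deriv φ 0) (c := 0) (hP.div_const _)
    (fun z hz => div_ne_zero (hPne z hz) hc0) (by rw [hP0, div_self hc0]; simp)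
  have hrep : ∀ z ∈ ball (0:ℂ) 1, φ z = z * (deriv φ 0 * Complex.exp (l z)) := by
    intro z hz
    rw [← hlz z hz, hPz z]
    field_simp
  have hR := robertson s hφ hl hl0 hrep
  set B : ℂ → ℂ := fun z => Complex.exp (l z / 2) with hB
  have hBd : DifferentiableOn ℂ B (ball 0 1) := (hl.div_const 2).cexp
  obtain ⟨p, hp, hpz, hp1⟩ := schwarz_quot hd hm h0
  have hBw : DifferentiableOn ℂ (fun z => B (w z)) (ball 0 1) := hBd.comp hd hm
  have hpB : DifferentiableOn ℂ (fun z => p z * B (w z)) (ball 0 1) := hp.mul hBw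
  have hprod : DifferentiableOn ℂ (fun z => (p z * B (w z)) * B (w z)) (ball 0 1) := hpB.mul hBw
  have e : ∀ z ∈ ball (0:ℂ) 1, φ (w z) = deriv φ 0 * (z * ((p z * B (w z)) * B (w z))) := by
    intro z hz
    rw [hrep _ (hm hz)]
    have : Complex.exp (l (w z)) = B (w z) * B (w z) := by
      simp only [hB]; rw [← Complex.exp_add]; congr 1; ring
    rw [this]
    linear_combination (deriv φ 0 * (B (w z) * B (w z))) * hpz z
  rw [cf_congr_ball one_pos e, cf_const_mul, cf_succ_id_mul (an_of_ball one_pos hprod),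
    cf_mul (an_of_ball one_pos hpB) (an_of_ball one_pos hBw), norm_mul]
  have b1 : ∑ k ∈ Finset.range (s+1), ‖cf k (fun z => B (w z))‖^2 ≤ s + 1 := (subord_l2 hd hm h0 (s+1) B hBd).trans hR
  have b2 : ∑ k ∈ Finset.range (s+1), ‖cf k (fun z => p z * B (w z))‖^2 ≤ s + 1 := (contract hp hp1 hBw (s+1)).trans b1
  have b3 : ∑ i ∈ Finset.range (s+1), ‖cf (s-i) (fun z => B (w z))‖^2 ≤ s + 1 := by
    refine le_trans (le_of_eq ?_) b1
    rw [← Finset.sum_range_reflect (fun k => ‖cf k (fun z => B (w z))‖^2)]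
    refine Finset.sum_congr rfl fun j _ => ?_
    simp
  have hsum : ‖∑ i ∈ Finset.range (s+1), cf i (fun z => p z * B (w z)) * cf (s-i) (fun z => B (w z))‖ ≤ s + 1 := by
    calc _ ≤ ∑ i ∈ Finset.range (s+1), (‖cf i (fun z => p z * B (w z))‖^2 + ‖cf (s-i) (fun z => B (w z))‖^2) / 2 := by
          refine norm_sum_le_of_le _ fun i _ => ?_
          rw [norm_mul]
          nlinarith [sq_nonneg (‖cf i (fun z => p z * B (w z))‖ - ‖cf (s-i) (fun z => B (w z))‖)]
      _ ≤ _ := by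
          rw [← Finset.sum_div, Finset.sum_add_distrib]; linarith
  calc _ ≤ ‖deriv φ 0‖ * (s+1) := mul_le_mul_of_nonneg_left hsum (norm_nonneg _)
    _ = _ := by push_cast; ring

end DB
namespace DB

lemma BiD.coef {φ : ℂ → ℂ} (h : BiD φ) (s : ℕ) : ‖cf s φ‖ ≤ s * ‖deriv φ 0‖ :=
  rogosinski (w := fun z => z) h differentiableOn_id (mapsTo_id _) rfl s

lemma BiD.growth {φ : ℂ → ℂ} (h : BiD φ) {z : ℂ} (hz : z ∈ ball (0:ℂ) 1) :
    ‖φ z‖ ≤ ‖deriv φ 0‖ * (‖z‖ / (1 - ‖z‖)^2) := by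
  have hz1 : ‖z‖ < 1 := mem_ball_zero_iff.1 hz
  have h1 := cf_hasSum h.1 hz
  have h2 := (hasSum_coe_mul_geometric_of_norm_lt_one (𝕜 := ℝ) (r := ‖z‖) (by simpa using hz1)).mul_left ‖deriv φ 0‖
  refine h1.norm_le_of_bounded h2 fun s => ?_
  rw [norm_mul, norm_pow]
  calc ‖cf s φ‖ * ‖z‖^s ≤ (s * ‖deriv φ 0‖) * ‖z‖^s := by gcongr; exact h.coef s
    _ = _ := by ring

lemma BiD.koebe {φ : ℂ → ℂ} (h : BiD φ) : ball (0:ℂ) (‖deriv φ 0‖ / 4) ⊆ φ '' ball 0 1 := by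
  intro η hη
  by_contra hno
  have hz0 : (0:ℂ) ∈ ball (0:ℂ) 1 := by simp
  have hη0 : η ≠ 0 := by
    rintro rfl
    exact hno ⟨0, hz0, h.2.1⟩
  have hne : ∀ z ∈ ball (0:ℂ) 1, η - φ z ≠ 0 := fun z hz e => hno ⟨z, hz, (sub_eq_zero.1 e).symm⟩
  set ψ : ℂ → ℂ := fun z => η * φ z / (η - φ z) with hψ
  have hψd : DifferentiableOn ℂ ψ (ball 0 1) := (h.1.const_mul η).div (h.1.const_sub η) hne
  obtain ⟨v, hv, hvz⟩ := h.2.2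
  have hpl : ∀ z ∈ ball (0:ℂ) 1, η + ψ z ≠ 0 := by
    intro z hz
    have : η + ψ z = η^2 / (η - φ z) := by
      simp only [hψ]; field_simp [hne z hz]; ring
    rw [this]
    exact div_ne_zero (pow_ne_zero _ hη0) (hne z hz)
  have hback : ∀ z ∈ ball (0:ℂ) 1, η * ψ z / (η + ψ z) = φ z := by
    intro z hz
    rw [div_eq_iff (hpl z hz)]
    have := hne z hz
    simp only [hψ]; field_simp; ring
  have hB : BiD ψ := by
    refine ⟨hψd, by simp [hψ, h.2.1], fun w => v (η * w / (η + w)), ?_, ?_⟩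
    · refine hv.comp ((differentiableOn_id.const_mul η).div (differentiableOn_id.const_add η) ?_) ?_
      · rintro _ ⟨z, hz, rfl⟩; exact hpl z hz
      · rintro _ ⟨z, hz, rfl⟩; exact ⟨z, hz, (hback z hz).symm⟩
    · intro z hz
      simp only
      rw [hback z hz, hvz z hz]
  have e : ∀ z ∈ ball (0:ℂ) 1, η * ψ z = η * φ z + ψ z * φ z := by
    intro z hz
    have := hne z hz
    simp only [hψ]; field_simp; ring
  have aφ := an_of_ball one_pos h.1
  have aψ := an_of_ball one_pos hψd
  have ck : ∀ k, η * cf k ψ = η * cf k φ + cf k (fun z => ψ z * φ z) := by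
    intro k
    rw [← cf_const_mul, cf_congr_ball one_pos e, cf_add (f := fun z => η * φ z) (g := fun z => ψ z * φ z) (analyticAt_const.mul aφ) (aψ.mul aφ), cf_const_mul]
  have z1 : cf 0 φ = 0 := by rw [cf_zero_eq, h.2.1]
  have z2 : cf 0 ψ = 0 := by rw [cf_zero_eq, hB.2.1]
  have c1 := ck 1
  have c2 := ck 2
  rw [cf_mul aψ aφ] at c1 c2
  simp [Finset.sum_range_succ, z1, z2, hη0] at c1 c2
  have d1 : deriv ψ 0 = deriv φ 0 := by rw [← cf_one_eq, ← cf_one_eq, c1]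
  have b1 := h.coef 2
  have b2 := hB.coef 2
  rw [d1] at b2
  rw [c1, cf_one_eq] at c2
  have e2 : deriv φ 0 * deriv φ 0 = η * (cf 2 ψ - cf 2 φ) := by rw [mul_sub, c2]; ring
  have hd0 : deriv φ 0 ≠ 0 := by
    obtain ⟨v, -, -, hv⟩ := h.deriv_ne
    intro e; rw [e, mul_zero] at hv; exact zero_ne_one hv
  have hpos : 0 < ‖deriv φ 0‖ := norm_pos_iff.2 hd0
  have n1 : ‖deriv φ 0‖ * ‖deriv φ 0‖ = ‖η‖ * ‖cf 2 ψ - cf 2 φ‖ := by rw [← norm_mul, e2, norm_mul]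
  have n2 : ‖cf 2 ψ - cf 2 φ‖ ≤ 4 * ‖deriv φ 0‖ := by
    refine (norm_sub_le _ _).trans ?_
    push_cast at b1 b2; linarith
  have hη' : ‖η‖ < ‖deriv φ 0‖ / 4 := mem_ball_zero_iff.1 hη
  nlinarith [norm_nonneg η, norm_nonneg (cf 2 ψ - cf 2 φ), norm_pos_iff.2 hη0]

lemma BiD.ne_univ {φ : ℂ → ℂ} (h : BiD φ) : φ '' ball 0 1 ≠ univ := by
  intro hu
  obtain ⟨v, hv, hvz⟩ := h.2.2
  rw [hu, differentiableOn_univ] at hv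
  have hb : ∀ w, v w ∈ ball (0:ℂ) 1 := by
    intro w
    obtain ⟨z, hz, rfl⟩ : w ∈ φ '' ball 0 1 := hu ▸ mem_univ w
    rw [hvz z hz]; exact hz
  have hbd : Bornology.IsBounded (range v) :=
    isBounded_ball.subset (by rintro _ ⟨w, rfl⟩; exact hb w)
  have hc := hv.apply_eq_apply_of_bounded hbd (φ 0) (φ (1/2))
  rw [hvz 0 (by simp), hvz (1/2) (by simp; norm_num)] at hc
  norm_num at hc

/-- tail sum -/
lemma hasSum_tail {r : ℝ} (h0 : 0 < r) (h1 : r < 1) (N : ℕ) :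
    HasSum (fun s : ℕ => ((N + s : ℕ) : ℝ) * r^(N+s)) (r^N * (N * (1 - r) + r) / (1 - r)^2) := by
  have hn : ‖r‖ < 1 := by rw [Real.norm_of_nonneg h0.le]; exact h1
  have a := (hasSum_coe_mul_geometric_of_norm_lt_one hn).mul_left (r^N)
  have b := (hasSum_geometric_of_norm_lt_one hn).mul_left (N * r^N)
  have c := a.add b
  have hr : (1 - r) ≠ 0 := by linarith
  have e1 : (fun s : ℕ => ((N + s : ℕ) : ℝ) * r^(N+s)) = fun b : ℕ => r ^ N * (↑b * r ^ b) + ↑N * r ^ N * r ^ b := by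
    funext s; push_cast; ring
  have e2 : r^N * (N * (1 - r) + r) / (1 - r)^2 = r ^ N * (r / (1 - r) ^ 2) + ↑N * r ^ N * (1 - r)⁻¹ := by
    field_simp; ring
  rw [e1, e2]; exact c

end DB
namespace DB

section holo
variable {E : Type*} [NormedAddCommGroup E] [NormedSpace ℂ E] {F : Type*} [NormedAddCommGroup F] [NormedSpace ℂ F]

lemma quad_fd {f : E → F} {A : E →L[ℂ] F} {c : E} {R C : ℝ} (hR : 0 < R)
    (h : ∀ k : E, ‖k‖ < R → ‖f (c + k) - f c - A k‖ ≤ C * ‖k‖^2) : HasFDerivAt f A c := by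
  rw [hasFDerivAt_iff_isLittleO_nhds_zero, Asymptotics.isLittleO_iff]
  intro ε hε
  have hρ : 0 < min R (ε / (|C| + 1)) := by positivity
  filter_upwards [ball_mem_nhds (0:E) hρ] with k hk
  have hk' : ‖k‖ < min R (ε / (|C| + 1)) := mem_ball_zero_iff.1 hk
  have h1 := h k (hk'.trans_le (min_le_left _ _))
  have h2 : ‖k‖ * (|C| + 1) < ε := (lt_div_iff₀ (by positivity)).1 (hk'.trans_le (min_le_right _ _))
  have h3 := le_abs_self C
  calc _ ≤ C * ‖k‖^2 := h1
    _ ≤ (‖k‖ * (|C| + 1)) * ‖k‖ := by nlinarith [norm_nonneg k, sq_nonneg ‖k‖]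
    _ ≤ ε * ‖k‖ := by gcongr

lemma fd_le {f : E → F} {c : E} {R M : ℝ} (hR : 0 < R) (hd : DifferentiableOn ℂ f (ball c R))
    (hM : ∀ y ∈ ball c R, ‖f y‖ ≤ M) : ‖fderiv ℂ f c‖ ≤ 2 * M / R := by
  refine Complex.norm_fderiv_le_div_of_mapsTo_ball hd ?_ hR
  intro y hy
  rw [mem_closedBall, dist_eq_norm]
  have := norm_sub_le (f y) (f c)
  have := hM y hy
  have := hM c (mem_ball_self hR)
  linarith

lemma second {f : E → F} {c : E} {R M : ℝ} (hR : 0 < R) (hd : DifferentiableOn ℂ f (ball c R))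
    (hM : ∀ y ∈ ball c R, ‖f y‖ ≤ M) {k : E} (hk : ‖k‖ < R) :
    ‖f (c + k) - f c - fderiv ℂ f c k‖ ≤ 4 * M / R^2 * ‖k‖^2 := by
  have hfd := fd_le hR hd hM
  have hc := mem_ball_self (x := c) hR
  have hM0 : 0 ≤ M := (norm_nonneg _).trans (hM c hc)
  set f' := fderiv ℂ f c with hf'
  have hda : HasFDerivAt f f' c := (hd.differentiableAt (ball_mem_nhds c hR)).hasFDerivAt
  have := Complex.dist_le_mul_div_pow_of_mapsTo_ball_of_isLittleO (f := fun w => f w - f' (w - c)) (c := c) (z := c + k)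
    (R₁ := R) (R₂ := 4 * M) (n := 1) (hd.sub (by fun_prop)) ?_ ?_ (by simpa using hk)
  · simp only [dist_eq_norm, add_sub_cancel_left, sub_self, map_zero, sub_zero] at this
    calc _ = ‖f (c + k) - f' k - f c‖ := by congr 1; abel
      _ ≤ _ := this
      _ = _ := by rw [div_pow]; ring
  · intro w hw
    rw [mem_closedBall, dist_eq_norm, sub_self, map_zero, sub_zero]
    have h1 := norm_sub_le (f w - f' (w - c)) (f c)
    have h2 := norm_sub_le (f w) (f' (w - c))
    have h3 := f'.le_opNorm (w - c)
    have h4 : ‖w - c‖ < R := by rwa [mem_ball, dist_eq_norm] at hw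
    have h5 : ‖f'‖ * ‖w - c‖ ≤ 2 * M / R * R := by gcongr
    rw [div_mul_cancel₀ _ hR.ne'] at h5
    linarith [hM w hw, hM c hc]
  · simp only [pow_one, sub_self, map_zero, sub_zero]
    refine Asymptotics.IsLittleO.norm_right ?_
    refine hda.isLittleO.congr_left fun w => ?_
    abel

lemma ball_sub {E : Type*} [NormedAddCommGroup E] {c y : E} {R S : ℝ} (hy : y ∈ ball c R) : ball y S ⊆ ball c (R + S) := by
  intro z hz
  rw [mem_ball] at *
  linarith [dist_triangle z y c]

lemma dir_diff [CompleteSpace F] {f : E → F} {c h : E} {R M : ℝ} (hR : 0 < R) (hd : DifferentiableOn ℂ f (ball c (2*R+R)))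
    (hM : ∀ y ∈ ball c (2*R+R), ‖f y‖ ≤ M) (hh : ‖h‖ < R) : DifferentiableAt ℂ (fun y => fderiv ℂ f y h) c := by
  have hc : c ∈ ball c (2*R+R) := mem_ball_self (by linarith)
  have hM0 : 0 ≤ M := (norm_nonneg _).trans (hM c hc)
  have hsub : ∀ y ∈ ball c (2*R), ball y R ⊆ ball c (2*R+R) := fun y hy => ball_sub hy
  have hsub1 : ball c R ⊆ ball c (2*R) := ball_subset_ball (by linarith)
  set t : ℕ → ℝ := fun n => 1 / ((n:ℝ) + 1) with ht
  have ht0 : ∀ n, 0 < t n := fun n => by simp only [ht]; positivity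
  have ht1 : ∀ n, t n ≤ 1 := fun n => by
    simp only [ht]; rw [div_le_one (by positivity)]; linarith [Nat.cast_nonneg (α := ℝ) n]
  have htl : Filter.Tendsto t Filter.atTop (nhds 0) := tendsto_one_div_add_atTop_nhds_zero_nat
  set q : ℕ → E → F := fun n y => ((t n)⁻¹ : ℂ) • (f (y + (t n : ℂ) • h) - f y) with hq
  have hth : ∀ n, ‖(t n : ℂ) • h‖ = t n * ‖h‖ := fun n => by
    rw [norm_smul, Complex.norm_real, Real.norm_of_nonneg (ht0 n).le]
  have hthR : ∀ n, ‖(t n : ℂ) • h‖ < R := fun n => by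
    rw [hth]; nlinarith [ht0 n, ht1 n, norm_nonneg h]
  have hqd : ∀ n, DifferentiableOn ℂ (q n) (ball c (2*R)) := by
    intro n
    refine ((hd.comp (t := ball c (2*R+R)) (by fun_prop) ?_).sub (hd.mono (ball_subset_ball (by linarith)))).const_smul _
    intro y hy
    refine hsub y hy ?_
    rw [mem_ball, dist_eq_norm, add_sub_cancel_left]; exact hthR n
  have herr : ∀ n, ∀ y ∈ ball c (2*R), ‖q n y - fderiv ℂ f y h‖ ≤ 4 * M * t n := by
    intro n y hy
    have h1 := second hR (hd.mono (hsub y hy)) (fun z hz => hM z (hsub y hy hz)) (hthR n)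
    have htc : (t n : ℂ) ≠ 0 := by exact_mod_cast (ht0 n).ne'
    have e : q n y - fderiv ℂ f y h = ((t n)⁻¹ : ℂ) • (f (y + (t n : ℂ) • h) - f y - fderiv ℂ f y ((t n : ℂ) • h)) := by
      rw [map_smul, smul_sub _ _ ((t n : ℂ) • _), smul_smul, inv_mul_cancel₀ htc, one_smul]
    rw [e, norm_smul, norm_inv, Complex.norm_real, Real.norm_of_nonneg (ht0 n).le]
    rw [hth] at h1
    have h2 : ‖h‖^2 / R^2 ≤ 1 := by
      rw [div_le_one (by positivity)]
      exact pow_le_pow_left₀ (norm_nonneg _) hh.le 2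
    calc (t n)⁻¹ * _ ≤ (t n)⁻¹ * (4 * M / R^2 * (t n * ‖h‖)^2) := by
          have := (ht0 n).le
          gcongr
      _ = 4 * M * t n * (‖h‖^2 / R^2) := by field_simp [(ht0 n).ne']
      _ ≤ 4 * M * t n * 1 := by have := (ht0 n).le; gcongr
      _ = _ := mul_one _
  have hqb : ∀ n, ∀ y ∈ ball c R, ‖q n y‖ ≤ 6 * M := by
    intro n y hy
    have h1 := herr n y (hsub1 hy)
    have h2 := fd_le hR (hd.mono (hsub y (hsub1 hy))) (fun z hz => hM z (hsub y (hsub1 hy) hz))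
    have h3 := (fderiv ℂ f y).le_opNorm h
    have h4 : ‖fderiv ℂ f y‖ * ‖h‖ ≤ 2 * M / R * R := by gcongr
    rw [div_mul_cancel₀ _ hR.ne'] at h4
    have h5 : 4 * M * t n ≤ 4 * M * 1 := by gcongr; exact ht1 n
    have h6 : ‖q n y‖ ≤ ‖q n y - fderiv ℂ f y h‖ + ‖fderiv ℂ f y h‖ := by
      simpa using norm_add_le (q n y - fderiv ℂ f y h) (fderiv ℂ f y h)
    linarith
  have hqdc : ∀ n, DifferentiableAt ℂ (q n) c := fun n => (hqd n).differentiableAt (ball_mem_nhds _ (by linarith))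
  have hcau : CauchySeq fun n => fderiv ℂ (q n) c := by
    have key : ∀ n p, dist (fderiv ℂ (q n) c) (fderiv ℂ (q p) c) ≤ 8 * M / R * (t n + t p) := by
      intro n p
      rw [dist_eq_norm, ← fderiv_sub (hqdc n) (hqdc p)]
      refine (fd_le (M := 4 * M * t n + 4 * M * t p) hR (((hqd n).sub (hqd p)).mono hsub1) ?_).trans (le_of_eq (by ring))
      intro y hy
      have h1 := herr n y (hsub1 hy)
      have h2 := herr p y (hsub1 hy)
      calc ‖(q n - q p) y‖ = ‖(q n y - fderiv ℂ f y h) - (q p y - fderiv ℂ f y h)‖ := by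
            rw [Pi.sub_apply]; congr 1; abel
        _ ≤ _ := norm_sub_le _ _
        _ ≤ _ := add_le_add h1 h2
    refine cauchySeq_of_le_tendsto_0 (fun n => 8 * M / R * (t n + t n)) ?_ ?_
    · intro n p N hn hp
      refine (key n p).trans ?_
      have anti : ∀ a b : ℕ, a ≤ b → t b ≤ t a := fun a b hab => by
        simp only [ht]; gcongr
      have := anti N n hn
      have := anti N p hp
      gcongr
    · have := (htl.add htl).const_mul (8 * M / R)
      simpa using this
  obtain ⟨A, hA⟩ := cauchySeq_tendsto_of_complete hcau
  have hlim : ∀ y ∈ ball c (2*R), Filter.Tendsto (fun n => q n y) Filter.atTop (nhds (fderiv ℂ f y h)) := by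
    intro y hy
    rw [tendsto_iff_norm_sub_tendsto_zero]
    refine squeeze_zero (fun _ => norm_nonneg _) (fun n => herr n y hy) ?_
    simpa using htl.const_mul (4 * M)
  refine (quad_fd (A := A) (C := 4 * (6 * M) / R^2) hR fun k hk => ?_).differentiableAt
  have hck : c + k ∈ ball c (2*R) := hsub1 (by rw [mem_ball, dist_eq_norm, add_sub_cancel_left]; exact hk)
  have hcc : c ∈ ball c (2*R) := mem_ball_self (by linarith)
  have hl := (((hlim _ hck).sub (hlim _ hcc)).sub (((ContinuousLinearMap.apply ℂ F k).continuous.tendsto A).comp hA)).norm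
  refine le_of_tendsto hl (Filter.Eventually.of_forall fun n => ?_)
  exact second hR ((hqd n).mono hsub1) (hqb n) hk

lemma fderiv_diff [CompleteSpace F] {f : E → F} {U : Set E} (hU : IsOpen U) (hd : DifferentiableOn ℂ f U) :
    DifferentiableOn ℂ (fderiv ℂ f) U := by
  -- directional derivatives are holomorphic
  have hdir : ∀ h : E, ∀ y ∈ U, DifferentiableAt ℂ (fun y => fderiv ℂ f y h) y := by
    intro h c hc
    have hcont := (hd.differentiableAt (hU.mem_nhds hc)).continuousAt
    have h1 : ∀ᶠ y in nhds c, y ∈ U ∧ ‖f y‖ < ‖f c‖ + 1 :=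
      Filter.Eventually.and (hU.mem_nhds hc) (hcont.norm.eventually_lt_const (by linarith))
    obtain ⟨ρ, hρ, hb⟩ := Metric.eventually_nhds_iff_ball.1 h1
    set R := ρ / 3 with hR
    have hR0 : 0 < R := by positivity
    have e : 2 * R + R = ρ := by rw [hR]; ring
    have hs : ∃ s : ℝ, 0 < s ∧ s * ‖h‖ < R := ⟨R / (‖h‖ + 1), by positivity, by
      rw [div_mul_eq_mul_div, div_lt_iff₀ (by positivity)]; nlinarith [norm_nonneg h]⟩
    obtain ⟨s, hs0, hs⟩ := hs
    have h2 := dir_diff (h := (s : ℂ) • h) (M := ‖f c‖ + 1) hR0 (hd.mono (fun y hy => (hb y (e ▸ hy)).1))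
      (fun y hy => (hb y (e ▸ hy)).2.le) (by rwa [norm_smul, Complex.norm_real, Real.norm_of_nonneg hs0.le])
    have h3 := h2.const_smul ((s : ℂ)⁻¹)
    have hsc : (s : ℂ) ≠ 0 := by exact_mod_cast hs0.ne'
    refine h3.congr_of_eventuallyEq (Filter.Eventually.of_forall fun y => ?_)
    rw [Pi.smul_apply, map_smul, smul_smul, inv_mul_cancel₀ hsc, one_smul]
  intro c hc
  refine DifferentiableAt.differentiableWithinAt ?_
  have hcont := (hd.differentiableAt (hU.mem_nhds hc)).continuousAt
  have h1 : ∀ᶠ y in nhds c, y ∈ U ∧ ‖f y‖ < ‖f c‖ + 1 :=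
    Filter.Eventually.and (hU.mem_nhds hc) (hcont.norm.eventually_lt_const (by linarith))
  obtain ⟨ρ, hρ, hb⟩ := Metric.eventually_nhds_iff_ball.1 h1
  set R := ρ / 2 with hR
  have hR0 : 0 < R := by positivity
  have e : R + R = ρ := by rw [hR]; ring
  set K := 2 * (‖f c‖ + 1) / R with hK
  have hK0 : 0 ≤ K := by positivity
  have hsub : ∀ y ∈ ball c R, ball y R ⊆ ball c ρ := fun y hy => e ▸ ball_sub hy
  have hU' : ∀ y ∈ ball c R, y ∈ U := fun y hy => (hb y (hsub y hy (mem_ball_self hR0))).1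
  have hbd : ∀ h : E, ∀ y ∈ ball c R, ‖fderiv ℂ f y h‖ ≤ K * ‖h‖ := by
    intro h y hy
    refine ((fderiv ℂ f y).le_opNorm h).trans ?_
    gcongr
    exact fd_le hR0 (hd.mono fun z hz => (hb z (hsub y hy hz)).1) (fun z hz => (hb z (hsub y hy hz)).2.le)
  have hdd : ∀ h : E, DifferentiableOn ℂ (fun y => fderiv ℂ f y h) (ball c R) :=
    fun h y hy => (hdir h y (hU' y hy)).differentiableWithinAt
  let T0 : E →ₗ[ℂ] (E →L[ℂ] F) :=
    { toFun := fun h => fderiv ℂ (fun y => fderiv ℂ f y h) c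
      map_add' := by
        intro a b
        rw [← fderiv_fun_add (hdir a c hc) (hdir b c hc)]
        simp only [map_add]
      map_smul' := by
        intro s a
        simp only [map_smul, RingHom.id_apply]
        rw [fderiv_fun_const_smul (hdir a c hc)] }
  let T : E →L[ℂ] (E →L[ℂ] F) := T0.mkContinuous (2 * K / R) (by
    intro h
    refine (fd_le hR0 (hdd h) (hbd h)).trans (le_of_eq (by ring)))
  refine (quad_fd (A := T.flip) (C := 4 * K / R^2) hR0 fun k hk => ?_).differentiableAt
  refine ContinuousLinearMap.opNorm_le_bound _ (by positivity) fun h => ?_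
  refine (second hR0 (hdd h) (hbd h) hk).trans (le_of_eq (by ring))

end holo

lemma holo_contDiffOn.{u} {E : Type u} [NormedAddCommGroup E] [NormedSpace ℂ E] {U : Set E} (hU : IsOpen U) (n : ℕ) :
    ∀ {F : Type u} [NormedAddCommGroup F] [NormedSpace ℂ F] [CompleteSpace F] (f : E → F),
      DifferentiableOn ℂ f U → ContDiffOn ℂ n f U := by
  induction n with
  | zero =>
    intro F _ _ _ f hd
    exact contDiffOn_zero.2 hd.continuousOn
  | succ n ih =>
    intro F _ _ _ f hd
    rw [Nat.cast_succ, contDiffOn_succ_iff_fderiv_of_isOpen hU]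
    exact ⟨hd, fun h => absurd h (by simp), ih _ (fderiv_diff hU hd)⟩

lemma iter_line.{u} {E F : Type u} [NormedAddCommGroup E] [NormedSpace ℂ E] [NormedAddCommGroup F] [NormedSpace ℂ F]
    [CompleteSpace F] {f : E → F} (hd : DifferentiableOn ℂ f (ball 0 1)) (n : ℕ) (x : E) :
    iteratedFDeriv ℂ n f 0 (fun _ => x) = iteratedDeriv n (fun ζ : ℂ => f (ζ • x)) 0 := by
  have h0 : (0:E) ∈ ball (0:E) 1 := by simp
  let g : ℂ →L[ℂ] E := (ContinuousLinearMap.id ℂ ℂ).smulRight x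
  have hg : ∀ ζ : ℂ, g ζ = ζ • x := fun ζ => by simp [g]
  have hg0 : g 0 ∈ ball (0:E) 1 := by rw [map_zero]; exact h0
  have hop : IsOpen (g ⁻¹' ball (0:E) 1) := isOpen_ball.preimage g.continuous
  have h1 := g.iteratedFDerivWithin_comp_right (holo_contDiffOn isOpen_ball n f hd) isOpen_ball.uniqueDiffOn
    hop.uniqueDiffOn hg0 (i := n) le_rfl
  rw [iteratedFDerivWithin_of_isOpen n hop hg0, iteratedFDerivWithin_of_isOpen n isOpen_ball hg0, map_zero] at h1
  have h2 := congrArg (fun T => T (fun _ : Fin n => (1:ℂ))) h1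
  simp only [ContinuousMultilinearMap.compContinuousLinearMap_apply] at h2
  rw [iteratedDeriv_eq_iteratedFDeriv]
  have e : f ∘ g = fun ζ : ℂ => f (ζ • x) := by funext ζ; simp [hg]
  rw [e] at h2
  rw [h2]
  congr 1
  funext i
  rw [hg, one_smul]

lemma line_diff {E F : Type*} [NormedAddCommGroup E] [NormedSpace ℂ E] [NormedAddCommGroup F] [NormedSpace ℂ F]
    {f : E → F} (hd : DifferentiableOn ℂ f (ball 0 1)) {x : E} {R : ℝ} (hx : ‖x‖ * R ≤ 1) (hx0 : x ≠ 0) :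
    DifferentiableOn ℂ (fun ζ : ℂ => f (ζ • x)) (ball 0 R) := by
  refine hd.comp (t := ball 0 1) (by fun_prop) ?_
  intro ζ hζ
  have h1 : ‖ζ‖ < R := mem_ball_zero_iff.1 hζ
  rw [mem_ball_zero_iff, norm_smul]
  have := norm_pos_iff.2 hx0
  nlinarith

lemma vbound.{u} {X : Type u} [NormedAddCommGroup X] [NormedSpace ℂ X] [CompleteSpace X] {V : X → X} {m : ℕ} (hm : 1 ≤ m)
    (hV : DifferentiableOn ℂ V (ball (0 : X) 1)) (hVmaps : Set.MapsTo V (ball (0 : X) 1) (ball (0 : X) 1))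
    (hVzero : ∀ j < m, iteratedFDeriv ℂ j V 0 = 0) {x : X} (hx0 : x ≠ 0) (hx : ‖x‖ < 1) : ‖V x‖ ≤ ‖x‖^m := by
  have hpos := norm_pos_iff.2 hx0
  have hV0 : V 0 = 0 := by
    have := hVzero 0 (by omega)
    have h2 := congrArg (fun T => T (fun _ : Fin 0 => (0:X))) this
    simpa using h2
  set R := 1 / ‖x‖ with hR
  have hR0 : 0 < R := by positivity
  have hxR : ‖x‖ * R = 1 := by rw [hR]; field_simp
  have hld : DifferentiableOn ℂ (fun ζ : ℂ => V (ζ • x)) (ball 0 R) := line_diff hV hxR.le hx0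
  have han : AnalyticAt ℂ (fun ζ : ℂ => V (ζ • x)) 0 := hld.analyticAt (ball_mem_nhds _ hR0)
  have hord := (natCast_le_analyticOrderAt_iff_iteratedDeriv_eq_zero (n := m) han).2 (by
    intro i hi
    rw [← iter_line hV, hVzero i hi]; rfl)
  obtain ⟨g, hg, hge⟩ := (natCast_le_analyticOrderAt han).1 hord
  obtain ⟨k, rfl⟩ : ∃ k, m = k + 1 := ⟨m - 1, by omega⟩
  have := Complex.dist_le_mul_div_pow_of_mapsTo_ball_of_isLittleO (f := fun ζ : ℂ => V (ζ • x)) (c := 0) (z := 1)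
    (R₁ := R) (R₂ := 1) (n := k) hld ?_ ?_ ?_
  · simp only [one_smul, zero_smul, hV0, dist_zero_right, norm_one, one_mul] at this
    rwa [hR, one_div_one_div] at this
  · intro ζ hζ
    simp only [zero_smul, hV0]
    refine ball_subset_closedBall (hVmaps ?_)
    have h1 : ‖ζ‖ < R := mem_ball_zero_iff.1 hζ
    rw [mem_ball_zero_iff, norm_smul]
    nlinarith
  · simp only [zero_smul, hV0, sub_zero] at hge ⊢
    have hz : Filter.Tendsto (fun z : ℂ => z • g z) (nhds 0) (nhds 0) := by
      have h3 : Filter.Tendsto (fun z : ℂ => z • g z) (nhds 0) (nhds ((0:ℂ) • g 0)) :=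
        Filter.Tendsto.smul Filter.tendsto_id hg.continuousAt.tendsto
      rwa [zero_smul] at h3
    rw [Asymptotics.isLittleO_iff]
    intro c hc
    filter_upwards [hge, hz.norm.eventually_lt_const (show ‖(0:X)‖ < c by simpa using hc)] with z h1 h2
    rw [h1, pow_succ, mul_smul, norm_smul, norm_pow, norm_pow, norm_norm, mul_comm]
    gcongr
  · rw [mem_ball_zero_iff, norm_one, hR, lt_div_iff₀ hpos]; linarith

end DB
namespace DB

lemma slice {X : Type*} [NormedAddCommGroup X] [NormedSpace ℂ X]
    {a : X} {f : X → ℂ} (hf : DifferentiableOn ℂ f (ball (0 : X) 1)) {F : X → X}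
    (hF : ∀ x ∈ ball (0 : X) 1, F x = a + f x • x) (hbi : IsBiholoOn F (ball (0 : X) 1))
    {u : X} (hu : ‖u‖ = 1) :
    BiD (fun ζ : ℂ => f (ζ • u) * ζ) ∧ deriv (fun ζ : ℂ => f (ζ • u) * ζ) 0 = f 0 := by
  have hu0 : u ≠ 0 := norm_pos_iff.1 (by rw [hu]; norm_num)
  have hmem : ∀ ζ ∈ ball (0:ℂ) 1, ζ • u ∈ ball (0:X) 1 := by
    intro ζ hζ
    rw [mem_ball_zero_iff, norm_smul, hu, mul_one]
    exact mem_ball_zero_iff.1 hζ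
  have hl : DifferentiableOn ℂ (fun ζ : ℂ => f (ζ • u)) (ball 0 1) := line_diff hf (by rw [hu]; norm_num) hu0
  have hd : DifferentiableOn ℂ (fun ζ : ℂ => f (ζ • u) * ζ) (ball 0 1) := hl.mul differentiableOn_id
  obtain ⟨ℓ, -, hℓ⟩ := exists_dual_vector ℂ u (by rw [hu]; norm_num)
  rw [hu] at hℓ
  obtain ⟨-, hinj, k, hk, hkF⟩ := hbi
  have hFl : ∀ ζ ∈ ball (0:ℂ) 1, a + (f (ζ • u) * ζ) • u = F (ζ • u) := by
    intro ζ hζ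
    rw [hF _ (hmem ζ hζ), smul_smul]
  refine ⟨⟨hd, by simp, fun η => ℓ (k (a + η • u)), ?_, ?_⟩, ?_⟩
  · refine ℓ.differentiable.comp_differentiableOn (hk.comp (by fun_prop) ?_)
    rintro _ ⟨ζ, hζ, rfl⟩
    simp only
    rw [hFl ζ hζ]
    exact mem_image_of_mem F (hmem ζ hζ)
  · intro ζ hζ
    simp only
    rw [hFl ζ hζ, hkF _ (hmem ζ hζ), map_smul, hℓ]
    simp
  · have h0 : HasDerivAt (fun ζ : ℂ => f (ζ • u)) (deriv (fun ζ : ℂ => f (ζ • u)) 0) 0 :=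
      (hl.differentiableAt (ball_mem_nhds _ one_pos)).hasDerivAt
    have := (h0.fun_mul (hasDerivAt_id' (0:ℂ))).deriv
    rw [this]; simp

lemma unit_vec {X : Type*} [NormedAddCommGroup X] [NormedSpace ℂ X] {x : X} (hx : x ≠ 0) :
    ∃ u : X, ‖u‖ = 1 ∧ x = ((‖x‖ : ℝ) : ℂ) • u := by
  have h := norm_pos_iff.2 hx
  have hc : ((‖x‖ : ℝ) : ℂ) ≠ 0 := by exact_mod_cast h.ne'
  refine ⟨((‖x‖ : ℝ) : ℂ)⁻¹ • x, ?_, ?_⟩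
  · rw [norm_smul, norm_inv, Complex.norm_real, norm_norm, inv_mul_cancel₀ h.ne']
  · rw [smul_smul, mul_inv_cancel₀ hc, one_smul]

lemma Fgrowth {X : Type*} [NormedAddCommGroup X] [NormedSpace ℂ X]
    {a : X} {f : X → ℂ} (hf : DifferentiableOn ℂ f (ball (0 : X) 1)) {F : X → X}
    (hF : ∀ x ∈ ball (0 : X) 1, F x = a + f x • x) (hbi : IsBiholoOn F (ball (0 : X) 1))
    {y : X} {t : ℝ} (hy : ‖y‖ ≤ t) (ht : t < 1) : ‖F y‖ ≤ ‖a‖ + ‖f 0‖ * (t / (1 - t)^2) := by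
  have hyb : y ∈ ball (0:X) 1 := mem_ball_zero_iff.2 (hy.trans_lt ht)
  have ht0 : 0 ≤ t := (norm_nonneg y).trans hy
  rw [hF y hyb]
  refine (norm_add_le _ _).trans ?_
  gcongr
  rcases eq_or_ne y 0 with rfl | h0
  · simp; positivity
  obtain ⟨u, hu, e⟩ := unit_vec h0
  obtain ⟨hB, hd⟩ := slice hf hF hbi hu
  have hz : ((‖y‖ : ℝ) : ℂ) ∈ ball (0:ℂ) 1 := by
    rw [mem_ball_zero_iff, Complex.norm_real, norm_norm]; exact hy.trans_lt ht
  have := hB.growth hz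
  rw [hd, ← e, norm_mul, Complex.norm_real, norm_norm] at this
  rw [norm_smul]
  refine this.trans ?_
  gcongr

lemma f_ne {X : Type*} [NormedAddCommGroup X] [NormedSpace ℂ X]
    {a : X} {f : X → ℂ} {F : X → X}
    (hF : ∀ x ∈ ball (0 : X) 1, F x = a + f x • x) (hbi : IsBiholoOn F (ball (0 : X) 1))
    {y : X} (hy : y ∈ ball (0:X) 1) (h0 : y ≠ 0) : f y ≠ 0 := by
  intro e
  refine h0 (hbi.2.1 hy (mem_ball_self one_pos) ?_)
  rw [hF y hy, hF 0 (mem_ball_self one_pos), e]; simp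

lemma infDist_ge {X : Type*} [NormedAddCommGroup X] [NormedSpace ℂ X]
    {a : X} {f : X → ℂ} (hf : DifferentiableOn ℂ f (ball (0 : X) 1)) {F : X → X}
    (hF : ∀ x ∈ ball (0 : X) 1, F x = a + f x • x) (hbi : IsBiholoOn F (ball (0 : X) 1))
    {u : X} (hu : ‖u‖ = 1) : ‖f 0‖ / 4 ≤ infDist (F 0) (frontier (F '' ball (0:X) 1)) := by
  have hz0 := mem_ball_self (x := (0:X)) one_pos
  have hF0 : F 0 = a := by rw [hF 0 hz0]; simp
  have hu0 : u ≠ 0 := norm_pos_iff.1 (by rw [hu]; norm_num)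
  have : Nontrivial X := ⟨u, 0, hu0⟩
  have hne : (frontier (F '' ball (0:X) 1)).Nonempty := by
    have hconn : PreconnectedSpace X := by
      letI : NormedSpace ℝ X := NormedSpace.restrictScalars ℝ ℂ X
      infer_instance
    rw [nonempty_frontier_iff]
    refine ⟨⟨F 0, mem_image_of_mem F hz0⟩, fun huniv => ?_⟩
    obtain ⟨hB, -⟩ := slice hf hF hbi hu
    refine hB.ne_univ (eq_univ_of_forall fun η => ?_)
    obtain ⟨y, hy, e⟩ : a + η • u ∈ F '' ball (0:X) 1 := huniv ▸ mem_univ _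
    rw [hF y hy, add_right_inj] at e
    obtain ⟨c, hc⟩ : ∃ c : ℂ, y = c • u := by
      rcases eq_or_ne y 0 with rfl | h0
      · exact ⟨0, by simp⟩
      · refine ⟨(f y)⁻¹ * η, ?_⟩
        rw [mul_smul, ← e, smul_smul, inv_mul_cancel₀ (f_ne hF hbi hy h0), one_smul]
    refine ⟨c, ?_, ?_⟩
    · rw [hc, mem_ball_zero_iff, norm_smul, hu, mul_one] at hy
      exact mem_ball_zero_iff.2 hy
    · rw [hc, smul_smul] at e
      exact smul_left_injective ℂ hu0 e
  rw [le_infDist hne]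
  intro y hy
  by_contra hlt
  push Not at hlt
  rw [hF0] at hlt
  have hsub : ball a (‖f 0‖ / 4) ⊆ F '' ball (0:X) 1 := by
    intro y hy
    rcases eq_or_ne (y - a) 0 with h0 | h0
    · exact ⟨0, hz0, by rw [hF0]; exact (sub_eq_zero.1 h0).symm⟩
    obtain ⟨v, hv, e⟩ := unit_vec h0
    obtain ⟨hB, hd⟩ := slice hf hF hbi hv
    obtain ⟨ζ, hζ, hζe⟩ := hB.koebe (show ((‖y - a‖ : ℝ) : ℂ) ∈ _ by
      rw [mem_ball_zero_iff, hd, Complex.norm_real, norm_norm, ← dist_eq_norm]; exact hy)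
    have hζ' : ζ • v ∈ ball (0:X) 1 := by
      rw [mem_ball_zero_iff, norm_smul, hv, mul_one]; exact mem_ball_zero_iff.1 hζ
    refine ⟨ζ • v, hζ', ?_⟩
    simp only at hζe
    rw [hF _ hζ', smul_smul, hζe, ← e]; abel
  have hyint : y ∈ interior (F '' ball (0:X) 1) :=
    interior_maximal hsub isOpen_ball (by rw [mem_ball, dist_comm]; exact hlt)
  exact hy.2 hyint

lemma iter_smul {X : Type*} [NormedAddCommGroup X] [NormedSpace ℂ X] (a u : X) {h : ℂ → ℂ}
    (hh : AnalyticAt ℂ h 0) {s : ℕ} (hs : 1 ≤ s) :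
    iteratedDeriv s (fun ζ : ℂ => a + h ζ • u) 0 = iteratedDeriv s h 0 • u := by
  obtain ⟨k, rfl⟩ : ∃ k, s = k + 1 := ⟨s - 1, by omega⟩
  have e1 : deriv (fun ζ : ℂ => a + h ζ • u) = deriv (fun ζ : ℂ => h ζ • u) := by
    funext z; rw [deriv_const_add]
  rw [iteratedDeriv_succ', e1, ← iteratedDeriv_succ']
  let L : ℂ →L[ℂ] X := (ContinuousLinearMap.id ℂ ℂ).smulRight u
  have e2 : (fun ζ : ℂ => h ζ • u) = L ∘ h := by funext z; simp [L]
  rw [e2, iteratedDeriv_eq_iteratedFDeriv, L.iteratedFDeriv_comp_left (hh.contDiffAt (n := ((k+1 : ℕ) : WithTop ℕ∞))) le_rfl,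
    iteratedDeriv_eq_iteratedFDeriv]
  simp [L]

lemma coef_bound.{v} {X : Type v} [NormedAddCommGroup X] [NormedSpace ℂ X] [CompleteSpace X]
    {a : X} {f g : X → ℂ} (hf : DifferentiableOn ℂ f (ball (0 : X) 1)) (hg : DifferentiableOn ℂ g (ball (0 : X) 1))
    {F G : X → X}
    (hF : ∀ x ∈ ball (0 : X) 1, F x = a + f x • x) (hG : ∀ x ∈ ball (0 : X) 1, G x = a + g x • x)
    (hbi : IsBiholoOn F (ball (0 : X) 1)) (hsub : Subordinate G F) {x : X} (hx0 : x ≠ 0) {s : ℕ} (hs : 1 ≤ s) :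
    ‖((s.factorial : ℂ))⁻¹ • iteratedFDeriv ℂ s G 0 (fun _ => x)‖ ≤ ‖f 0‖ * (s * ‖x‖^s) := by
  obtain ⟨W, hW, hWm, hW0, hGW⟩ := hsub
  obtain ⟨u, hu, e⟩ := unit_vec hx0
  obtain ⟨hB, hd⟩ := slice hf hF hbi hu
  have hu0 : u ≠ 0 := norm_pos_iff.1 (by rw [hu]; norm_num)
  obtain ⟨ℓ, -, hℓ⟩ := exists_dual_vector ℂ u (by rw [hu]; norm_num)
  rw [hu] at hℓ
  have hmem : ∀ ζ ∈ ball (0:ℂ) 1, ζ • u ∈ ball (0:X) 1 := by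
    intro ζ hζ
    rw [mem_ball_zero_iff, norm_smul, hu, mul_one]
    exact mem_ball_zero_iff.1 hζ
  have hGd : DifferentiableOn ℂ G (ball (0:X) 1) :=
    ((hg.smul differentiableOn_id).const_add a).congr fun y hy => hG y hy
  set w : ℂ → ℂ := fun ζ => ℓ (W (ζ • u)) with hw
  have hWu : ∀ ζ ∈ ball (0:ℂ) 1, W (ζ • u) = w ζ • u := by
    intro ζ hζ
    obtain ⟨c, hc⟩ : ∃ c : ℂ, W (ζ • u) = c • u := by
      rcases eq_or_ne (W (ζ • u)) 0 with h0 | h0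
      · exact ⟨0, by rw [h0, zero_smul]⟩
      · have h1 := hGW _ (hmem ζ hζ)
        rw [hG _ (hmem ζ hζ), hF _ (hWm (hmem ζ hζ)), add_right_inj, smul_smul] at h1
        refine ⟨(f (W (ζ • u)))⁻¹ * (g (ζ • u) * ζ), ?_⟩
        rw [mul_smul, h1, smul_smul, inv_mul_cancel₀ (f_ne hF hbi (hWm (hmem ζ hζ)) h0), one_smul]
    have : w ζ = c := by simp only [hw]; rw [hc, map_smul, hℓ]; simp
    rw [this, hc]
  have hwd : DifferentiableOn ℂ w (ball 0 1) :=
    ℓ.differentiable.comp_differentiableOn (line_diff hW (by rw [hu]; norm_num) hu0)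
  have hwm : MapsTo w (ball 0 1) (ball 0 1) := by
    intro ζ hζ
    have := hWm (hmem ζ hζ)
    rw [hWu ζ hζ, mem_ball_zero_iff, norm_smul, hu, mul_one] at this
    exact mem_ball_zero_iff.2 this
  have hw0 : w 0 = 0 := by simp [hw, hW0]
  have hR := rogosinski hB hwd hwm hw0 s
  rw [hd] at hR
  set h : ℂ → ℂ := fun z => f (w z • u) * w z with hh
  have hhd : DifferentiableOn ℂ h (ball 0 1) := hB.1.comp hwd hwm
  have hGl : (fun ζ : ℂ => G (ζ • u)) =ᶠ[nhds 0] fun ζ => a + h ζ • u := by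
    filter_upwards [ball_mem_nhds (0:ℂ) one_pos] with ζ hζ
    rw [hGW _ (hmem ζ hζ), hF _ (hWm (hmem ζ hζ)), hWu ζ hζ, smul_smul]
  have e1 : iteratedFDeriv ℂ s G 0 (fun _ => u) = iteratedDeriv s h 0 • u := by
    rw [iter_line hGd, hGl.iteratedDeriv_eq, iter_smul a u (an_of_ball one_pos hhd) hs]
  have e2 : iteratedFDeriv ℂ s G 0 (fun _ => x) = ((‖x‖ : ℝ) : ℂ)^s • iteratedFDeriv ℂ s G 0 (fun _ => u) := by
    have := (iteratedFDeriv ℂ s G 0).map_smul_univ (fun _ => ((‖x‖ : ℝ) : ℂ)) (fun _ => u)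
    rw [← e] at this
    rw [this]; simp
  have hcf : ‖cf s h‖ = ‖((s.factorial : ℂ))⁻¹‖ * ‖iteratedDeriv s h 0‖ := by
    rw [cf, div_eq_inv_mul, norm_mul]
  rw [e2, e1, norm_smul, norm_smul, norm_smul, hu, mul_one, norm_pow, Complex.norm_real, norm_norm]
  calc _ = ‖cf s h‖ * ‖x‖^s := by rw [hcf]; ring
    _ ≤ (s * ‖f 0‖) * ‖x‖^s := by gcongr
    _ = _ := by ring

end DB

theorem stmt11 {X : Type*} [NormedAddCommGroup X] [NormedSpace ℂ X] [CompleteSpace X]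
    (a : X) (f g : X → ℂ)
    (hf : DifferentiableOn ℂ f (ball (0 : X) 1))
    (hg : DifferentiableOn ℂ g (ball (0 : X) 1))
    (F G : X → X)
    (hF : ∀ x ∈ ball (0 : X) 1, F x = a + f x • x)
    (hG : ∀ x ∈ ball (0 : X) 1, G x = a + g x • x)
    (hbi : IsBiholoOn F (ball (0 : X) 1))
    (hsub : Subordinate G F)
    (m N : ℕ) (hm : 1 ≤ m) (hN : 1 ≤ N)
    (V : X → X) (hV : DifferentiableOn ℂ V (ball (0 : X) 1))
    (hVmaps : Set.MapsTo V (ball (0 : X) 1) (ball (0 : X) 1))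
    (hVzero : ∀ j < m, iteratedFDeriv ℂ j V 0 = 0)
    (r : ℝ) (hr : r ∈ Set.Ioo (0 : ℝ) 1)
    (hineq : 4 * r ^ m / (1 - r ^ m) ^ 2
        + 4 * r ^ N * ((N : ℝ) * (1 - r) + r) / (1 - r) ^ 2 ≤ 1)
    (x : X) (hx : ‖x‖ = r) :
    Summable (fun s : ℕ =>
        ‖(((N + s).factorial : ℂ))⁻¹ • iteratedFDeriv ℂ (N + s) G 0 (fun _ => x)‖) ∧
    ‖G (V x)‖ +
        ∑' s : ℕ, ‖(((N + s).factorial : ℂ))⁻¹ • iteratedFDeriv ℂ (N + s) G 0 (fun _ => x)‖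
      ≤ ‖F 0‖ + infDist (F 0) (frontier (F '' ball (0 : X) 1)) := by
  obtain ⟨hr0, hr1⟩ := hr
  have hx0 : x ≠ 0 := norm_pos_iff.1 (by rw [hx]; exact hr0)
  have hF0 : F 0 = a := by rw [hF 0 (mem_ball_self one_pos)]; simp
  have hcoef : ∀ s : ℕ, ‖(((N + s).factorial : ℂ))⁻¹ • iteratedFDeriv ℂ (N + s) G 0 (fun _ => x)‖
      ≤ ‖f 0‖ * (((N + s : ℕ) : ℝ) * r^(N+s)) := by
    intro s
    have := DB.coef_bound hf hg hF hG hbi hsub hx0 (s := N + s) (by omega)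
    rwa [hx] at this
  have hS := (DB.hasSum_tail hr0 hr1 N).mul_left ‖f 0‖
  have hsum := Summable.of_nonneg_of_le (fun _ => norm_nonneg _) hcoef hS.summable
  refine ⟨hsum, ?_⟩
  have h1 := (hsum.tsum_le_tsum hcoef hS.summable).trans_eq hS.tsum_eq
  obtain ⟨u, hu, -⟩ := DB.unit_vec hx0
  have h2 := DB.infDist_ge hf hF hbi hu
  have hVx := DB.vbound hm hV hVmaps hVzero hx0 (by rw [hx]; exact hr1)
  rw [hx] at hVx
  have hrm : r^m < 1 := pow_lt_one₀ hr0.le hr1 (by omega)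
  obtain ⟨W, hW, hWm, hW0, hGW⟩ := hsub
  have hVb : V x ∈ ball (0:X) 1 := mem_ball_zero_iff.2 (hVx.trans_lt hrm)
  have hWV : ‖W (V x)‖ ≤ r^m :=
    (Complex.norm_le_norm_of_mapsTo_ball hW (hWm.mono_right ball_subset_closedBall) hW0 (mem_ball_zero_iff.1 hVb)).trans hVx
  have h3 := DB.Fgrowth hf hF hbi hWV hrm
  rw [← hGW _ hVb] at h3
  rw [hF0] at h2 ⊢
  have h4 : ‖f 0‖ * (r^m / (1 - r^m)^2) + ‖f 0‖ * (r^N * (N * (1 - r) + r) / (1 - r)^2) ≤ ‖f 0‖ / 4 := by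
    have := mul_le_mul_of_nonneg_left hineq (by positivity : 0 ≤ ‖f 0‖ / 4)
    calc _ = ‖f 0‖ / 4 * (4 * r ^ m / (1 - r ^ m) ^ 2
        + 4 * r ^ N * ((N : ℝ) * (1 - r) + r) / (1 - r) ^ 2) := by ring
      _ ≤ _ := this
      _ = _ := by ring
  linarith
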